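/- arXiv:1909.07762 — 2 statements merged into one kernel-verified Lean document; each statement's English description precedes it below -/
import Mathlib

section
/- For every ε > 0 there exists L₀ such that for all integers k ≥ 0 and ℓ ≥ L₀, one has | M(k, k+ℓ) / [ (π/(12√2)) · (1 + e^{−πk/√(6ℓ)})^{−2} · e^{2π√(ℓ/6)}/ℓ^{3/2} ] − 1 | < ε. In other words, uniformly for integers ℓ, k ≥ 0, M(k, k+ℓ) ~ (π/(12√2)) · (1 + e^{−πk/√(6ℓ)})^{−2} · e^{2π√(ℓ/6)}/ℓ^{3/2} as ℓ → ∞. -/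
open Finset

/-- A pair of sequences of parts is *steadily decreasing* if
`min (a i) (b i) ≥ max (a (i+1)) (b (i+1))` for all `i`. -/
noncomputable def SteadilyDecreasing (a b : ℕ → ℕ) : Prop :=
  ∀ i, max (a (i + 1)) (b (i + 1)) ≤ min (a i) (b i)

/-- `bipartitePi m n` is the number of pairs of partitions (given as non-increasing,
finitely supported sequences) of the bipartite number `(m, n)` with steadily
decreasing parts. -/
noncomputable def bipartitePi (m n : ℕ) : ℕ :=
  Nat.card {p : (ℕ →₀ ℕ) × (ℕ →₀ ℕ) //
    (∀ i, p.1 (i + 1) ≤ p.1 i) ∧ (∀ i, p.2 (i + 1) ≤ p.2 i) ∧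
    SteadilyDecreasing p.1 p.2 ∧
    (p.1.sum fun _ x => x) = m ∧ (p.2.sum fun _ x => x) = n}

/-- The partition function `p n`. -/
noncomputable def partitionCount (n : ℕ) : ℕ := Nat.card (Nat.Partition n)

/-- The partition function extended to the integers, with `p r = 0` for `r < 0`. -/
noncomputable def partitionCountInt (r : ℤ) : ℕ := if 0 ≤ r then partitionCount r.toNat else 0

/-- The cubic partition function `c n`, counting partitions of `n` in which even
parts come in two colors (equivalently, pairs of a partition together with a
partition into even parts, of total size `n`). -/
noncomputable def cubicPartition (n : ℕ) : ℕ :=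
  Nat.card {p : Multiset ℕ × Multiset ℕ //
    (∀ i ∈ p.1, 0 < i) ∧ (∀ i ∈ p.2, 0 < i ∧ Even i) ∧ p.1.sum + p.2.sum = n}

/-- The Andrews–Garvan crank of a partition: the largest part if there are no ones,
and otherwise the number of parts larger than the number of ones minus the number of
ones. -/
noncomputable def crank {n : ℕ} (l : n.Partition) : ℤ :=
  if l.parts.count 1 = 0 then (l.parts.sup : ℤ)
  else ((l.parts.filter fun p => l.parts.count 1 < p).card : ℤ) - l.parts.count 1

/-- `crankM m n` is the crank counting function `M(m, n)`: the number of partitions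
of `n` with crank `m`, with the standard convention at `n = 1`
(`M(0,1) = -1`, `M(±1,1) = 1`, `M(m,1) = 0` otherwise). -/
noncomputable def crankM (m : ℤ) (n : ℕ) : ℤ :=
  if n = 1 then (if m = 0 then -1 else if m.natAbs = 1 then 1 else 0)
  else (Nat.card {l : n.Partition // crank l = m} : ℤ)

/-- `alphaBip s k = Σ_{ℓ ≥ 0} (-1)^ℓ p(k - ℓ(ℓ+1)/2 - ℓ s)`. -/
noncomputable def alphaBip (s k : ℕ) : ℤ :=
  ∑' ℓ : ℕ, (-1 : ℤ) ^ ℓ *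
    (partitionCountInt ((k : ℤ) - ℓ * (ℓ + 1) / 2 - ℓ * s) : ℤ)

/-- `Dbip m n = π(m,n) - π(m-1,n)`, with `π(-1,n) := 0`. -/
noncomputable def Dbip (m n : ℕ) : ℤ :=
  (bipartitePi m n : ℤ) - if m = 0 then 0 else (bipartitePi (m - 1) n : ℤ)

/-!
By Cauchy's formula `2π M(k, k + ℓ)` is the integral of `q^(-k-ℓ) ∑ M(k, n) qⁿ`, `q = e^(-τ)`,
over the segment `Re τ = t`, `|Im τ| ≤ π`. Sorting partitions by their number `w` of ones gives
`∑ M(k, n) qⁿ = (1 - q) q^k ∑ w, q^(w² + (k + 2) w) / ((q)_w (q)_(w + k))`. After multiplication by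
`(q)_∞` these sums satisfy recurrences in `k` that are solved approximately, uniformly in `k`, by
`(1 + q^k)⁻²`, and the transformation law of the Dedekind eta function turns the remaining factor
`1 / (q)_∞` into `√(τ / 2π) exp (π² / 6τ)`. For `t = π / √(6ℓ)` the integrand has a saddle point at
`τ = t`; the arc `|Im τ| ≤ t` contributes a Gaussian integral and the rest is exponentially smaller.
-/

namespace CrankAsymptotic

open Filter Topology MeasureTheory
open Complex (I)
open scoped Real

/-! ### The Durfee sums -/

section DurfeeSums

/-- The finite `q`-Pochhammer symbol `(q; q)_n = (1 - q) (1 - q²) ⋯ (1 - qⁿ)`. -/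
noncomputable def qPochhammer (q : ℂ) (n : ℕ) : ℂ := ∏ i ∈ range n, (1 - q ^ (i + 1))

/-- Euler's function `(q; q)_∞`, the reciprocal of the generating function of all partitions. -/
noncomputable def eulerPhi (q : ℂ) : ℂ := ∏' n : ℕ, (1 - q ^ (n + 1))

/-- The terms `q^(w² + (k + j) w) / ((q)_w (q)_{w+k})` of the sum `durfeeSum j k q`. For `j = 0`
they count partitions by their Durfee rectangle of size `w × (w + k)`. -/
noncomputable def durfeeTerm (j k : ℕ) (q : ℂ) (w : ℕ) : ℂ :=
  q ^ (w * w + (k + j) * w) / (qPochhammer q w * qPochhammer q (w + k))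

/-- The sum `A_{j,k}(q) = ∑_w q^(w² + (k + j) w) / ((q)_w (q)_{w+k})`. It interpolates between the
partition generating function at `j = 0` and the one of `M(k, ·)`, essentially `A_{2,k}`. -/
noncomputable def durfeeSum (j k : ℕ) (q : ℂ) : ℂ := ∑' w, durfeeTerm j k q w

/-- The product `A_{j,k}(q) (q; q)_∞`, normalised so that it is `1` for `j = 0`. -/
noncomputable def normDurfeeSum (j k : ℕ) (q : ℂ) : ℂ := durfeeSum j k q * eulerPhi q

variable {q : ℂ}

lemma qPochhammer_zero (q : ℂ) : qPochhammer q 0 = 1 := prod_range_zero _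

lemma qPochhammer_succ (q : ℂ) (n : ℕ) :
    qPochhammer q (n + 1) = qPochhammer q n * (1 - q ^ (n + 1)) :=
  prod_range_succ _ _

lemma one_sub_pow_succ_ne_zero (hq : ‖q‖ < 1) (n : ℕ) : 1 - q ^ (n + 1) ≠ 0 := by
  refine sub_ne_zero.mpr fun h => ?_
  have hlt : ‖q ^ (n + 1)‖ < 1 := by
    rw [norm_pow]
    exact pow_lt_one₀ (norm_nonneg q) hq n.succ_ne_zero
  simp [← h] at hlt

lemma qPochhammer_ne_zero (hq : ‖q‖ < 1) (n : ℕ) : qPochhammer q n ≠ 0 :=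
  prod_ne_zero_iff.mpr fun i _ => one_sub_pow_succ_ne_zero hq i

lemma eulerPhi_ne_zero (hq : ‖q‖ < 1) : eulerPhi q ≠ 0 := by
  have := tprod_one_add_ne_zero_of_summable (f := fun n : ℕ => -q ^ (n + 1))
    (fun i => by simpa [sub_eq_add_neg] using one_sub_pow_succ_ne_zero hq i)
    (by simpa using (summable_nat_add_iff 1).mpr (summable_geometric_of_lt_one (norm_nonneg _) hq))
  simpa [eulerPhi, sub_eq_add_neg] using this

lemma tendsto_qPochhammer (hq : ‖q‖ < 1) : Tendsto (qPochhammer q) atTop (𝓝 (eulerPhi q)) :=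
  (ModularForm.multipliable_one_sub_pow hq).hasProd.tendsto_prod_nat

lemma tendsto_inv_qPochhammer (hq : ‖q‖ < 1) :
    Tendsto (fun n => (qPochhammer q n)⁻¹) atTop (𝓝 (eulerPhi q)⁻¹) :=
  (tendsto_qPochhammer hq).inv₀ (eulerPhi_ne_zero hq)

lemma exists_norm_durfeeTerm_le (hq : ‖q‖ < 1) :
    ∃ C : ℝ, ∀ j k w, ‖durfeeTerm j k q w‖ ≤ C * ‖q‖ ^ (w * w + (k + j) * w) := by
  obtain ⟨C, hC⟩ := (tendsto_inv_qPochhammer hq).norm.bddAbove_range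
  have hC : ∀ n, ‖(qPochhammer q n)⁻¹‖ ≤ C := fun n => hC ⟨n, rfl⟩
  have hC0 : 0 ≤ C := (norm_nonneg _).trans (hC 0)
  refine ⟨C * C, fun j k w => ?_⟩
  rw [durfeeTerm, div_eq_mul_inv, mul_inv, norm_mul, norm_mul, norm_pow, mul_comm]
  gcongr <;> apply hC

lemma exists_norm_durfeeTerm_le_geometric (hq : ‖q‖ < 1) :
    ∃ C : ℝ, ∀ j k w, ‖durfeeTerm j k q w‖ ≤ C * ‖q‖ ^ w := by
  obtain ⟨C, hC⟩ := exists_norm_durfeeTerm_le hq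
  have hC0 : 0 ≤ C := by simpa using (norm_nonneg _).trans (hC 0 0 0)
  refine ⟨C, fun j k w => (hC j k w).trans ?_⟩
  gcongr ?_ * ?_
  exact pow_le_pow_of_le_one (norm_nonneg _) hq.le (by nlinarith [Nat.le_mul_self w])

lemma summable_durfeeTerm (hq : ‖q‖ < 1) (j k : ℕ) : Summable (durfeeTerm j k q) := by
  obtain ⟨C, hC⟩ := exists_norm_durfeeTerm_le_geometric hq
  exact Summable.of_norm_bounded
    ((summable_geometric_of_lt_one (norm_nonneg _) hq).mul_left C) (hC j k)

lemma exists_norm_durfeeSum_le (hq : ‖q‖ < 1) : ∃ C : ℝ, ∀ j k, ‖durfeeSum j k q‖ ≤ C := by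
  obtain ⟨C, hC⟩ := exists_norm_durfeeTerm_le_geometric hq
  exact ⟨_, fun j k => tsum_of_norm_bounded
    ((summable_geometric_of_lt_one (norm_nonneg _) hq).mul_left C).hasSum (hC j k)⟩

lemma durfeeSum_eq_add_durfeeSum_succ (hq : ‖q‖ < 1) (j k : ℕ) :
    durfeeSum j k q =
      durfeeSum (j + 1) k q + q ^ (k + j + 1) * durfeeSum (j + 1) (k + 1) q := by
  have hs := summable_durfeeTerm hq
  have hterm (w : ℕ) : durfeeTerm j k q (w + 1) - durfeeTerm (j + 1) k q (w + 1) =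
      q ^ (k + j + 1) * durfeeTerm (j + 1) (k + 1) q w := by
    have := qPochhammer_ne_zero hq w
    have := qPochhammer_ne_zero hq (w + (k + 1))
    have := one_sub_pow_succ_ne_zero hq w
    simp only [durfeeTerm, show w + 1 + k = w + (k + 1) by ring, qPochhammer_succ q w]
    field_simp
    ring
  have hzero : durfeeTerm j k q 0 - durfeeTerm (j + 1) k q 0 = 0 := by simp [durfeeTerm]
  rw [← sub_eq_iff_eq_add', durfeeSum, durfeeSum, ← (hs j k).tsum_sub (hs (j + 1) k),
    ((hs j k).sub (hs (j + 1) k)).tsum_eq_zero_add, hzero, zero_add]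
  simp only [hterm, tsum_mul_left, durfeeSum]

lemma durfeeSum_succ_right (hq : ‖q‖ < 1) (j k : ℕ) :
    durfeeSum j (k + 1) q =
      q ^ (k + 1) * durfeeSum (j + 1) (k + 1) q + durfeeSum (j + 1) k q := by
  have hs := summable_durfeeTerm hq
  rw [durfeeSum, durfeeSum, durfeeSum, ← tsum_mul_left,
    ← ((hs (j + 1) (k + 1)).mul_left _).tsum_add (hs _ _)]
  congr 1 with w
  have := qPochhammer_ne_zero hq w
  have := qPochhammer_ne_zero hq (w + k)
  have := one_sub_pow_succ_ne_zero hq (w + k)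
  simp only [durfeeTerm, ← add_assoc w k 1, qPochhammer_succ q (w + k)]
  field_simp
  ring

lemma tendsto_durfeeSum_zero (hq : ‖q‖ < 1) :
    Tendsto (fun k => durfeeSum 0 k q) atTop (𝓝 (eulerPhi q)⁻¹) := by
  obtain ⟨C, hC⟩ := exists_norm_durfeeTerm_le hq
  obtain ⟨D, hD⟩ := exists_norm_durfeeTerm_le_geometric hq
  rw [← tsum_ite_eq (0 : ℕ) (fun _ => (eulerPhi q)⁻¹)]
  refine tendsto_tsum_of_dominated_convergence
    ((summable_geometric_of_lt_one (norm_nonneg _) hq).mul_left D) (fun w => ?_)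
    (.of_forall fun k w => hD 0 k w)
  rcases eq_or_ne w 0 with rfl | hw
  · simpa [durfeeTerm, qPochhammer_zero] using tendsto_inv_qPochhammer hq
  · rw [if_neg hw]
    have hexp : Tendsto (fun k => w * w + (k + 0) * w) atTop atTop :=
      tendsto_atTop_mono (fun k => (Nat.le_mul_of_pos_right k (Nat.pos_of_ne_zero hw)).trans
        (Nat.le_add_left _ _)) tendsto_id
    refine squeeze_zero_norm (fun k => hC 0 k w) ?_
    simpa using ((tendsto_pow_atTop_nhds_zero_of_lt_one (norm_nonneg q) hq).comp hexp).const_mul C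

/-- By the two recurrences the sum does not depend on `k`, so it equals its limit. -/
lemma durfeeSum_zero (hq : ‖q‖ < 1) (k : ℕ) : durfeeSum 0 k q = (eulerPhi q)⁻¹ := by
  have hsucc (m : ℕ) : durfeeSum 0 (m + 1) q = durfeeSum 0 m q := by
    rw [durfeeSum_eq_add_durfeeSum_succ hq 0 m, durfeeSum_succ_right hq 0 m]
    ring
  have hconst (m : ℕ) : durfeeSum 0 m q = durfeeSum 0 0 q := by
    induction m with
    | zero => rfl
    | succ m ih => rw [hsucc, ih]
  have hlim := tendsto_durfeeSum_zero hq
  simp_rw [hconst] at hlim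
  rw [hconst, tendsto_nhds_unique tendsto_const_nhds hlim]

lemma normDurfeeSum_one (hq : ‖q‖ < 1) (k : ℕ) :
    normDurfeeSum 1 k q = 1 - q ^ (k + 1) * normDurfeeSum 1 (k + 1) q := by
  have hrec := durfeeSum_eq_add_durfeeSum_succ hq 0 k
  rw [durfeeSum_zero hq] at hrec
  rw [← inv_mul_cancel₀ (eulerPhi_ne_zero hq), hrec]
  simp only [normDurfeeSum]
  ring

lemma normDurfeeSum_two (hq : ‖q‖ < 1) (k : ℕ) :
    normDurfeeSum 2 k q = normDurfeeSum 1 k q - q ^ (k + 2) * normDurfeeSum 2 (k + 1) q := by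
  simp only [normDurfeeSum, durfeeSum_eq_add_durfeeSum_succ hq 1 k]
  ring

lemma bddAbove_norm_normDurfeeSum (hq : ‖q‖ < 1) (j : ℕ) :
    BddAbove (Set.range fun k => ‖normDurfeeSum j k q‖) := by
  obtain ⟨C, hC⟩ := exists_norm_durfeeSum_le hq
  refine ⟨C * ‖eulerPhi q‖, Set.forall_mem_range.mpr fun k => ?_⟩
  rw [normDurfeeSum, norm_mul]
  gcongr
  exact hC j k

end DurfeeSums

/-! ### Approximate solution of the recurrences -/

section Recurrence

lemma le_mul_add_exp_mul_of_recurrence {a : ℕ → ℝ} {t R B : ℝ} (ht : 0 ≤ t) (hR : 0 ≤ R)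
    (hB : ∀ k, a k ≤ B)
    (hrec : ∀ k, a k ≤ R + Real.exp (-(t * (k + 1))) * a (k + 1)) (N k : ℕ) :
    a k ≤ N * R + Real.exp (-(t * (N * k + N * (N + 1) / 2))) * B := by
  induction N generalizing k with
  | zero => simpa using hB k
  | succ N ih =>
    have hexp : Real.exp (-(t * (k + 1))) ≤ 1 := Real.exp_le_one_iff.mpr (by
      have : 0 ≤ t * (k + 1) := by positivity
      linarith)
    have hmul : Real.exp (-(t * (k + 1))) *
        Real.exp (-(t * (N * (k + 1 : ℕ) + N * (N + 1) / 2))) =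
        Real.exp (-(t * ((N + 1 : ℕ) * k + (N + 1 : ℕ) * ((N + 1 : ℕ) + 1) / 2))) := by
      rw [← Real.exp_add]
      push_cast
      ring_nf
    calc a k ≤ R + Real.exp (-(t * (k + 1))) * (N * R +
            Real.exp (-(t * (N * (k + 1 : ℕ) + N * (N + 1) / 2))) * B) := by
          refine (hrec k).trans ?_
          gcongr
          exact ih (k + 1)
      _ ≤ R + (1 * (N * R) + Real.exp (-(t * (k + 1))) *
            Real.exp (-(t * (N * (k + 1 : ℕ) + N * (N + 1) / 2))) * B) := by
          rw [mul_add, ← mul_assoc _ _ B]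
          gcongr
      _ = _ := by
          rw [hmul]
          push_cast
          ring

lemma exp_neg_one_half_le : Real.exp (-(1 / 2)) ≤ 2 / 3 := by
  have h := Real.add_one_le_exp (1 / 2 : ℝ)
  rw [Real.exp_neg, inv_le_comm₀ (by positivity) (by norm_num)]
  norm_num at h ⊢
  exact h

/-- After about `1 / √t` steps of the recurrence the accumulated factor in front of the supremum
is bounded away from `1`. -/
lemma le_div_sqrt_of_recurrence {a : ℕ → ℝ} {t R : ℝ} (ht : 0 < t) (ht1 : t ≤ 1)
    (ha : ∀ k, 0 ≤ a k) (hR : 0 ≤ R) (hbdd : BddAbove (Set.range a))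
    (hrec : ∀ k, a k ≤ R + Real.exp (-(t * (k + 1))) * a (k + 1)) (k : ℕ) :
    a k ≤ 6 * R / √t := by
  have hsqrt : 0 < √t := Real.sqrt_pos.mpr ht
  set N := ⌈1 / √t⌉₊
  have hNlower : 1 / √t ≤ N := Nat.le_ceil _
  have hNupper : (N : ℝ) ≤ 2 / √t := by
    have hone : 1 ≤ 1 / √t := by
      rw [le_div_iff₀ hsqrt, one_mul]
      exact Real.sqrt_le_one.mpr ht1
    calc (N : ℝ) ≤ 1 / √t + 1 := (Nat.ceil_lt_add_one (by positivity)).le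
      _ ≤ 1 / √t + 1 / √t := by gcongr
      _ = 2 / √t := by ring
  have hNsq : 1 ≤ t * (N * N) := by
    have h : 1 / √t * (1 / √t) ≤ N * N := by gcongr
    rwa [div_mul_div_comm, Real.mul_self_sqrt ht.le, one_mul, div_le_iff₀' ht] at h
  set B := ⨆ k, a k
  have hle (k : ℕ) : a k ≤ B := le_ciSup hbdd k
  have hB : 0 ≤ B := (ha 0).trans (hle 0)
  have hcontract (k : ℕ) : a k ≤ N * R + 2 / 3 * B := by
    refine (le_mul_add_exp_mul_of_recurrence ht.le hR hle hrec N k).trans ?_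
    gcongr
    refine (Real.exp_le_exp.mpr ?_).trans exp_neg_one_half_le
    have : 0 ≤ t * (N * k + N / 2) := by positivity
    linarith
  have hBle : B ≤ N * R + 2 / 3 * B := ciSup_le hcontract
  calc a k ≤ B := hle k
    _ ≤ 3 * (N * R) := by linarith
    _ ≤ 3 * (2 / √t * R) := by gcongr
    _ = 6 * R / √t := by ring

variable {τ : ℂ}

lemma norm_exp_neg (τ : ℂ) : ‖Complex.exp (-τ)‖ = Real.exp (-τ.re) := by
  rw [Complex.norm_exp, Complex.neg_re]

lemma norm_exp_neg_lt_one (hτ : 0 < τ.re) : ‖Complex.exp (-τ)‖ < 1 := by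
  rw [norm_exp_neg, Real.exp_lt_one_iff]
  linarith

lemma norm_le_div_sqrt_of_recurrence (hτ : 0 < τ.re) (hτ1 : τ.re ≤ 1) {e r : ℕ → ℂ} {R : ℝ}
    {d : ℕ} (hd : 1 ≤ d) (he : ∀ k, e k = r k - Complex.exp (-τ) ^ (k + d) * e (k + 1))
    (hr : ∀ k, ‖r k‖ ≤ R) (hbdd : BddAbove (Set.range fun k => ‖e k‖)) (k : ℕ) :
    ‖e k‖ ≤ 6 * R / √τ.re := by
  refine le_div_sqrt_of_recurrence hτ hτ1 (fun k => norm_nonneg (e k))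
    ((norm_nonneg _).trans (hr 0)) hbdd (fun k => ?_) k
  have hpow : ‖Complex.exp (-τ) ^ (k + d)‖ ≤ Real.exp (-(τ.re * (k + 1))) := by
    have hk : (k + 1 : ℝ) ≤ (k + d : ℕ) := by
      push_cast
      gcongr
      exact_mod_cast hd
    rw [norm_pow, norm_exp_neg, ← Real.exp_nat_mul, Real.exp_le_exp]
    nlinarith
  calc ‖e k‖ ≤ ‖r k‖ + ‖Complex.exp (-τ) ^ (k + d)‖ * ‖e (k + 1)‖ := by
        rw [he k, ← norm_mul]
        exact norm_sub_le _ _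
    _ ≤ R + Real.exp (-(τ.re * (k + 1))) * ‖e (k + 1)‖ := by
        gcongr
        exact hr k

lemma norm_normDurfeeSum_one_le (hτ : 0 < τ.re) (hτ1 : τ.re ≤ 1) (k : ℕ) :
    ‖normDurfeeSum 1 k (Complex.exp (-τ))‖ ≤ 6 / √τ.re := by
  have hq := norm_exp_neg_lt_one hτ
  simpa using norm_le_div_sqrt_of_recurrence hτ hτ1 (r := fun _ => 1) (R := 1) le_rfl
    (normDurfeeSum_one hq) (by simp) (bddAbove_norm_normDurfeeSum hq 1) k

lemma norm_normDurfeeSum_two_le (hτ : 0 < τ.re) (hτ1 : τ.re ≤ 1) (k : ℕ) :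
    ‖normDurfeeSum 2 k (Complex.exp (-τ))‖ ≤ 36 / τ.re := by
  have hq := norm_exp_neg_lt_one hτ
  refine (norm_le_div_sqrt_of_recurrence hτ hτ1 one_le_two (normDurfeeSum_two hq)
    (norm_normDurfeeSum_one_le hτ hτ1) (bddAbove_norm_normDurfeeSum hq 2) k).trans_eq ?_
  rw [mul_div_assoc', div_div, Real.mul_self_sqrt hτ.le]
  norm_num

/-- The solution `x = qᵏ ↦ (1 + x)⁻¹ + (1 - q) x (1 + x)⁻³` of the recurrence of
`normDurfeeSum 1 k q` up to an error of second order in `1 - q`. -/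
noncomputable def approxOne (q x : ℂ) : ℂ := (1 + x)⁻¹ + (1 - q) * x * (1 + x)⁻¹ ^ 3

/-- The solution `x = qᵏ ↦ (1 + x)⁻²` of the recurrence of `normDurfeeSum 2 k q` up to an error of
first order in `1 - q`. -/
noncomputable def approxTwo (x : ℂ) : ℂ := (1 + x)⁻¹ ^ 2

section Residuals

variable {q x : ℂ}

lemma norm_inv_le_two {z : ℂ} (hz : 1 / 2 ≤ ‖z‖) : ‖z⁻¹‖ ≤ 2 := by
  rw [norm_inv, inv_le_comm₀ (by linarith) two_pos]
  linarith

lemma norm_one_sub_le_two (hq : ‖q‖ ≤ 1) : ‖1 - q‖ ≤ 2 :=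
  (norm_sub_le _ _).trans (by rw [norm_one]; linarith)

lemma norm_one_add_le_two (hq : ‖q‖ ≤ 1) : ‖1 + q‖ ≤ 2 :=
  (norm_add_le _ _).trans (by rw [norm_one]; linarith)

lemma norm_approxOne_le (hq : ‖q‖ ≤ 1) (hx : ‖x‖ ≤ 1) (hx' : 1 / 2 ≤ ‖1 + x‖) :
    ‖approxOne q x‖ ≤ 18 := by
  have hinv := norm_inv_le_two hx'
  have hsub := norm_one_sub_le_two hq
  refine (norm_add_le _ _).trans ?_
  simp only [norm_mul, norm_pow]
  calc _ ≤ (2 : ℝ) + 2 * 1 * 2 ^ 3 := by gcongr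
    _ = 18 := by norm_num

lemma norm_approxTwo_le (hx' : 1 / 2 ≤ ‖1 + x‖) : ‖approxTwo x‖ ≤ 4 := by
  rw [approxTwo, norm_pow]
  calc _ ≤ (2 : ℝ) ^ 2 := by gcongr; exact norm_inv_le_two hx'
    _ = 4 := by norm_num

lemma norm_approxOne_residual_le (hq : ‖q‖ ≤ 1) (hx : ‖x‖ ≤ 1) (hx' : 1 / 2 ≤ ‖1 + x‖)
    (hqx : 1 / 2 ≤ ‖1 + q * x‖) :
    ‖1 - approxOne q x - q * x * approxOne q (q * x)‖ ≤ 72 * ‖1 - q‖ ^ 2 := by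
  set α := (1 + x)⁻¹ with hα
  set β := (1 + q * x)⁻¹ with hβ
  have hfactor : 1 - approxOne q x - q * x * approxOne q (q * x) = x * (x * (1 + q) * α ^ 3 +
      x * α ^ 2 * β - q ^ 2 * x * x * (α * β) * (α ^ 2 + α * β + β ^ 2)) * (1 - q) ^ 2 := by
    have : 1 + x ≠ 0 := norm_pos_iff.mp (by linarith)
    have : 1 + x * q ≠ 0 := by
      rw [mul_comm]
      exact norm_pos_iff.mp (by linarith)
    simp only [approxOne, hα, hβ]
    field_simp
    ring
  have hα2 : ‖α‖ ≤ 2 := norm_inv_le_two hx'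
  have hβ2 : ‖β‖ ≤ 2 := norm_inv_le_two hqx
  have hq2 : ‖1 + q‖ ≤ 2 := norm_one_add_le_two hq
  have hsum : ‖α ^ 2 + α * β + β ^ 2‖ ≤ 12 := by
    refine norm_add₃_le.trans ?_
    simp only [norm_mul, norm_pow]
    calc _ ≤ (2 : ℝ) ^ 2 + 2 * 2 + 2 ^ 2 := by gcongr
      _ = 12 := by norm_num
  rw [hfactor, norm_mul, norm_pow, norm_mul]
  gcongr
  calc _ ≤ ‖x‖ * (‖x * (1 + q) * α ^ 3‖ + ‖x * α ^ 2 * β‖ +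
        ‖q ^ 2 * x * x * (α * β) * (α ^ 2 + α * β + β ^ 2)‖) := by
        gcongr
        refine (norm_sub_le _ _).trans ?_
        gcongr
        exact norm_add_le _ _
    _ ≤ 1 * (1 * 2 * 2 ^ 3 + 1 * 2 ^ 2 * 2 + 1 ^ 2 * 1 * 1 * (2 * 2) * 12) := by
        simp only [norm_mul, norm_pow] at *
        gcongr
    _ = 72 := by norm_num

lemma norm_approxTwo_residual_le (hq : ‖q‖ ≤ 1) (hx : ‖x‖ ≤ 1) (hx' : 1 / 2 ≤ ‖1 + x‖)
    (hqx : 1 / 2 ≤ ‖1 + q * x‖) :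
    ‖approxOne q x - approxTwo x - q ^ 2 * x * approxTwo (q * x)‖ ≤ 32 * ‖1 - q‖ := by
  set α := (1 + x)⁻¹ with hα
  set β := (1 + q * x)⁻¹ with hβ
  have hfactor : approxOne q x - approxTwo x - q ^ 2 * x * approxTwo (q * x) =
      (x * α ^ 3 + α ^ 2 * x * (1 + q) - q ^ 2 * x * x * (α * β) * (α + β)) * (1 - q) := by
    have : 1 + x ≠ 0 := norm_pos_iff.mp (by linarith)
    have : 1 + x * q ≠ 0 := by
      rw [mul_comm]
      exact norm_pos_iff.mp (by linarith)
    simp only [approxOne, approxTwo, hα, hβ]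
    field_simp
    ring
  have hα2 : ‖α‖ ≤ 2 := norm_inv_le_two hx'
  have hβ2 : ‖β‖ ≤ 2 := norm_inv_le_two hqx
  have hq2 : ‖1 + q‖ ≤ 2 := norm_one_add_le_two hq
  have hsum : ‖α + β‖ ≤ 4 := (norm_add_le _ _).trans (by linarith)
  rw [hfactor, norm_mul]
  gcongr
  calc _ ≤ ‖x * α ^ 3‖ + ‖α ^ 2 * x * (1 + q)‖ + ‖q ^ 2 * x * x * (α * β) * (α + β)‖ := by
        refine (norm_sub_le _ _).trans ?_
        gcongr
        exact norm_add_le _ _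
    _ ≤ 1 * 2 ^ 3 + 2 ^ 2 * 1 * 2 + 1 ^ 2 * 1 * 1 * (2 * 2) * 4 := by
        simp only [norm_mul, norm_pow] at *
        gcongr
    _ = 32 := by norm_num

end Residuals

/-- Either `exp (-z)` has nonnegative real part, or `Re z` is large and `exp (-z)` is small. -/
lemma one_half_le_norm_one_add_exp_neg {z : ℂ} (hz : |z.im| ≤ z.re) :
    1 / 2 ≤ ‖1 + Complex.exp (-z)‖ := by
  rcases le_or_gt |z.im| (π / 2) with him | him
  · have hcos : 0 ≤ Real.cos (-z).im := by
      rw [Complex.neg_im, Real.cos_neg]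
      exact Real.cos_nonneg_of_mem_Icc (abs_le.mp him)
    have hre : 0 ≤ (Complex.exp (-z)).re := by
      rw [Complex.exp_re]
      positivity
    calc 1 / 2 ≤ (1 + Complex.exp (-z)).re := by
          rw [Complex.add_re, Complex.one_re]
          linarith
      _ ≤ _ := Complex.re_le_norm _
  · have hsmall : ‖Complex.exp (-z)‖ ≤ 1 / 2 := by
      rw [norm_exp_neg, Real.exp_neg, one_div]
      gcongr
      linarith [Real.add_one_le_exp z.re, Real.pi_gt_three]
    have := norm_sub_le (1 + Complex.exp (-z)) (Complex.exp (-z))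
    rw [add_sub_cancel_right, norm_one] at this
    linarith

lemma one_half_le_norm_one_add_exp_neg_pow (hcone : |τ.im| ≤ τ.re) (k : ℕ) :
    1 / 2 ≤ ‖1 + Complex.exp (-τ) ^ k‖ := by
  rw [← Complex.exp_nat_mul, mul_neg]
  refine one_half_le_norm_one_add_exp_neg ?_
  rw [← nsmul_eq_mul, Complex.re_nsmul, Complex.im_nsmul, nsmul_eq_mul, nsmul_eq_mul, abs_mul,
    Nat.abs_cast]
  gcongr

lemma norm_le_two_mul_re (hcone : |τ.im| ≤ τ.re) : ‖τ‖ ≤ 2 * τ.re := by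
  have := Complex.norm_le_abs_re_add_abs_im τ
  rw [abs_of_nonneg ((abs_nonneg _).trans hcone)] at this
  linarith

lemma norm_one_sub_exp_neg_le (hτ1 : τ.re ≤ 1 / 2) (hcone : |τ.im| ≤ τ.re) :
    ‖1 - Complex.exp (-τ)‖ ≤ 4 * τ.re := by
  have hnorm := norm_le_two_mul_re hcone
  have := Complex.norm_exp_sub_one_le (x := -τ) (by rw [norm_neg]; linarith)
  rw [norm_neg] at this
  rw [norm_sub_rev]
  linarith

lemma bddAbove_norm_sub {a b : ℕ → ℂ} {C : ℝ} (ha : BddAbove (Set.range fun k => ‖a k‖))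
    (hb : ∀ k, ‖b k‖ ≤ C) : BddAbove (Set.range fun k => ‖a k - b k‖) := by
  obtain ⟨A, hA⟩ := ha
  exact ⟨A + C, Set.forall_mem_range.mpr fun k =>
    (norm_sub_le _ _).trans (add_le_add (hA ⟨k, rfl⟩) (hb k))⟩

lemma norm_normDurfeeSum_one_sub_approxOne_le (hτ : 0 < τ.re) (hτ1 : τ.re ≤ 1 / 2)
    (hcone : |τ.im| ≤ τ.re) (k : ℕ) :
    ‖normDurfeeSum 1 k (Complex.exp (-τ)) - approxOne (Complex.exp (-τ)) (Complex.exp (-τ) ^ k)‖ ≤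
      6912 * τ.re * √τ.re := by
  set q := Complex.exp (-τ) with hqdef
  have hq : ‖q‖ < 1 := norm_exp_neg_lt_one hτ
  have hqpow (k : ℕ) : ‖q ^ k‖ ≤ 1 := by
    rw [norm_pow]
    exact pow_le_one₀ (norm_nonneg _) hq.le
  have hlow := one_half_le_norm_one_add_exp_neg_pow hcone
  have hiter : ‖normDurfeeSum 1 k q - approxOne q (q ^ k)‖ ≤ 6 * (72 * ‖1 - q‖ ^ 2) / √τ.re := by
    refine norm_le_div_sqrt_of_recurrence hτ (by linarith) le_rfl
      (e := fun k => normDurfeeSum 1 k q - approxOne q (q ^ k))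
      (r := fun k => 1 - approxOne q (q ^ k) - q * q ^ k * approxOne q (q * q ^ k))
      (fun k => ?_) (fun k => ?_) ?_ k
    · rw [normDurfeeSum_one hq k, ← hqdef, pow_succ']
      ring
    · exact norm_approxOne_residual_le hq.le (hqpow k) (hlow k) (pow_succ' q k ▸ hlow (k + 1))
    · exact bddAbove_norm_sub (bddAbove_norm_normDurfeeSum hq 1)
        fun k => norm_approxOne_le hq.le (hqpow k) (hlow k)
  calc _ ≤ 6 * (72 * ‖1 - q‖ ^ 2) / √τ.re := hiter
    _ ≤ 6 * (72 * (4 * τ.re) ^ 2) / √τ.re := by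
        gcongr
        exact norm_one_sub_exp_neg_le hτ1 hcone
    _ = 6912 * τ.re * √τ.re := by
        rw [div_eq_iff (Real.sqrt_pos.mpr hτ).ne', mul_assoc _ (√τ.re), Real.mul_self_sqrt hτ.le]
        ring

lemma norm_normDurfeeSum_two_sub_approxTwo_le (hτ : 0 < τ.re) (hτ1 : τ.re ≤ 1 / 2)
    (hcone : |τ.im| ≤ τ.re) (k : ℕ) :
    ‖normDurfeeSum 2 k (Complex.exp (-τ)) - approxTwo (Complex.exp (-τ) ^ k)‖ ≤
      42240 * √τ.re := by
  set q := Complex.exp (-τ) with hqdef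
  have hq : ‖q‖ < 1 := norm_exp_neg_lt_one hτ
  have hqpow (k : ℕ) : ‖q ^ k‖ ≤ 1 := by
    rw [norm_pow]
    exact pow_le_one₀ (norm_nonneg _) hq.le
  have hlow := one_half_le_norm_one_add_exp_neg_pow hcone
  have hiter : ‖normDurfeeSum 2 k q - approxTwo (q ^ k)‖ ≤
      6 * (6912 * τ.re * √τ.re + 32 * (4 * τ.re)) / √τ.re := by
    refine norm_le_div_sqrt_of_recurrence hτ (by linarith) one_le_two
      (e := fun k => normDurfeeSum 2 k q - approxTwo (q ^ k))
      (r := fun k => (normDurfeeSum 1 k q - approxOne q (q ^ k)) +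
        (approxOne q (q ^ k) - approxTwo (q ^ k) - q ^ 2 * q ^ k * approxTwo (q * q ^ k)))
      (fun k => ?_) (fun k => ?_) ?_ k
    · rw [normDurfeeSum_two hq k, ← hqdef, pow_succ' q k]
      ring
    · refine (norm_add_le _ _).trans
        (add_le_add (norm_normDurfeeSum_one_sub_approxOne_le hτ hτ1 hcone k) ?_)
      refine (norm_approxTwo_residual_le hq.le (hqpow k) (hlow k)
        (pow_succ' q k ▸ hlow (k + 1))).trans ?_
      gcongr
      exact norm_one_sub_exp_neg_le hτ1 hcone
    · exact bddAbove_norm_sub (bddAbove_norm_normDurfeeSum hq 2) fun k => norm_approxTwo_le (hlow k)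
  refine hiter.trans ?_
  have hsqrt : 0 < √τ.re := Real.sqrt_pos.mpr hτ
  have hsqrt1 : √τ.re ≤ 1 := Real.sqrt_le_one.mpr (by linarith)
  rw [div_le_iff₀ hsqrt, mul_assoc 42240, Real.mul_self_sqrt hτ.le]
  nlinarith

end Recurrence

/-! ### Modular inversion of Euler's function -/

section ModularInversion

/-- The factor `e^(-τ/24) / (q'; q')_∞` with `q' = e^(-4π²/τ)` which is left in the modular
inversion formula for `1 / (q; q)_∞` at `q = e^(-τ)` after the main terms are split off. -/
noncomputable def etaCorrection (τ : ℂ) : ℂ :=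
  Complex.exp (-τ / 24) * (eulerPhi (Complex.exp (-(4 * π ^ 2 * τ⁻¹))))⁻¹

/-- The cone of the parameters `τ` for which `q = e^(-τ)` lies on the major arc. -/
def majorCone : Set ℂ := {τ | 0 < τ.re ∧ |τ.im| ≤ τ.re}

variable {τ : ℂ}

lemma re_inv_pos (hτ : 0 < τ.re) : 0 < τ⁻¹.re := by
  rw [Complex.inv_re]
  exact div_pos hτ (Complex.normSq_pos.mpr fun h => by simp [h] at hτ)

lemma re_four_pi_sq_mul (z : ℂ) : (4 * (π : ℂ) ^ 2 * z).re = 4 * π ^ 2 * z.re := by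
  rw [← Complex.re_ofReal_mul]
  push_cast
  rfl

lemma csqrt_I_mul {z : ℂ} (hz : 0 < z.re) :
    Complex.sqrt (I * z) = Complex.sqrt I * Complex.sqrt z := by
  have hz0 : z ≠ 0 := fun h => by simp [h] at hz
  have harg := abs_lt.mp (Complex.abs_arg_lt_pi_div_two_iff.mpr (Or.inl hz))
  have hlog : Complex.log (I * z) = Complex.log I + Complex.log z := by
    refine (Complex.log_mul_eq_add_log_iff Complex.I_ne_zero hz0).mpr ?_
    rw [Complex.arg_I]
    constructor <;> linarith
  rw [sqrt_eq_exp (mul_ne_zero Complex.I_ne_zero hz0), sqrt_eq_exp Complex.I_ne_zero,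
    sqrt_eq_exp hz0, hlog, add_div, Complex.exp_add]

/-- The transformation `η(-1/z) = √(z/i) η(z)` at `z = iτ/(2π)`. -/
lemma exp_mul_eulerPhi_inversion (hτ : 0 < τ.re) :
    Complex.exp (-(π ^ 2 / (6 * τ))) * eulerPhi (Complex.exp (-(4 * π ^ 2 * τ⁻¹))) =
      Complex.sqrt (τ / (2 * π)) * (Complex.exp (-τ / 24) * eulerPhi (Complex.exp (-τ))) := by
  have hτ0 : τ ≠ 0 := fun h => by simp [h] at hτ
  have hre : 0 < (τ / (2 * π)).re := by
    rw [show τ / (2 * π) = τ / ((2 * π : ℝ) : ℂ) by push_cast; rfl, Complex.div_ofReal_re]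
    positivity
  have heta := ModularForm.eta_comp_eq_csqrt_I_inv (x := I * (τ / (2 * π))) (by simpa using hre)
  have harg : 2 * (π : ℂ) * I * (I * (τ / (2 * π))) = -τ := by
    field_simp
    rw [Complex.I_sq]
  have harg' : 2 * (π : ℂ) * I * (-1 / (I * (τ / (2 * π)))) = -(4 * π ^ 2 * τ⁻¹) := by
    field_simp
    ring
  have hsqrtI : Complex.sqrt I ≠ 0 := by simp [sqrt_eq_exp Complex.I_ne_zero]
  simp only [Function.comp, Pi.smul_apply, Pi.mul_apply, smul_eq_mul, ModularForm.eta,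
    ModularForm.eta_q_eq_pow, Function.Periodic.qParam, harg, harg', csqrt_I_mul hre,
    mul_assoc (Complex.sqrt I), inv_mul_cancel_left₀ hsqrtI] at heta
  rw [eulerPhi, eulerPhi]
  convert heta using 4
  · push_cast
    field_simp
    ring
  · push_cast
    ring

lemma inv_eulerPhi_exp_neg (hτ : 0 < τ.re) :
    (eulerPhi (Complex.exp (-τ)))⁻¹ =
      Complex.sqrt (τ / (2 * π)) * Complex.exp (π ^ 2 / (6 * τ)) * etaCorrection τ := by
  have hinv := exp_mul_eulerPhi_inversion hτ
  have hdual : 0 < (4 * (π : ℂ) ^ 2 * τ⁻¹).re := by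
    have := re_inv_pos hτ
    rw [re_four_pi_sq_mul]
    positivity
  rw [Complex.exp_neg, inv_mul_eq_iff_eq_mul₀ (Complex.exp_ne_zero _)] at hinv
  rw [etaCorrection, ← mul_assoc,
    eq_mul_inv_iff_mul_eq₀ (eulerPhi_ne_zero (norm_exp_neg_lt_one hdual)),
    inv_mul_eq_iff_eq_mul₀ (eulerPhi_ne_zero (norm_exp_neg_lt_one hτ)), hinv]
  ring

lemma tendsto_eulerPhi_zero : Tendsto eulerPhi (𝓝 0) (𝓝 1) := by
  have hlim := tendsto_tprod_one_add_of_dominated_convergence (𝓕 := 𝓝 0) (g := 0)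
    (f := fun (q : ℂ) (n : ℕ) => -q ^ (n + 1)) (bound := fun n => (1 / 2 : ℝ) ^ (n + 1))
  simp only [Pi.zero_apply, norm_neg, norm_pow, add_zero, tprod_one, ← sub_eq_add_neg] at hlim
  refine hlim
    ((summable_nat_add_iff 1).mpr (summable_geometric_of_lt_one (by norm_num) (by norm_num)))
    (fun k => by simpa using ((continuous_pow (M := ℂ) (k + 1)).tendsto 0).neg) ?_
  filter_upwards [Metric.ball_mem_nhds (0 : ℂ) one_half_pos] with q hq k
  exact pow_le_pow_left₀ (norm_nonneg _) (mem_ball_zero_iff.mp hq).le _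

lemma inv_two_mul_re_le_re_inv (hτ : τ ∈ majorCone) : (2 * τ.re)⁻¹ ≤ τ⁻¹.re := by
  obtain ⟨hre, him⟩ := hτ
  have hsq : τ.im ^ 2 ≤ τ.re ^ 2 := sq_le_sq.mpr (by rwa [abs_of_pos hre])
  rw [Complex.inv_re, inv_eq_one_div, Complex.normSq_apply,
    div_le_div_iff₀ (by positivity) (by nlinarith)]
  nlinarith

lemma tendsto_re_inv_majorCone : Tendsto (fun τ : ℂ => τ⁻¹.re) (𝓝[majorCone] 0) atTop := by
  have hre : Tendsto (fun τ : ℂ => 2 * τ.re) (𝓝[majorCone] 0) (𝓝[>] 0) := by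
    refine tendsto_nhdsWithin_iff.mpr ⟨?_, ?_⟩
    · simpa using ((Complex.continuous_re.tendsto 0).const_mul 2).mono_left nhdsWithin_le_nhds
    · filter_upwards [self_mem_nhdsWithin] with τ hτ
      exact mul_pos two_pos hτ.1
  refine tendsto_atTop_mono' _ ?_ (tendsto_inv_nhdsGT_zero.comp hre)
  filter_upwards [self_mem_nhdsWithin] with τ hτ
  exact inv_two_mul_re_le_re_inv hτ

lemma tendsto_etaCorrection : Tendsto etaCorrection (𝓝[majorCone] 0) (𝓝 1) := by
  have hexp : Tendsto (fun τ : ℂ => Complex.exp (-τ / 24)) (𝓝[majorCone] 0) (𝓝 1) := by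
    have hcont : Continuous fun τ : ℂ => Complex.exp (-τ / 24) := by fun_prop
    simpa using (hcont.tendsto 0).mono_left nhdsWithin_le_nhds
  have hdual : Tendsto (fun τ : ℂ => Complex.exp (-(4 * π ^ 2 * τ⁻¹))) (𝓝[majorCone] 0) (𝓝 0) := by
    rw [tendsto_zero_iff_norm_tendsto_zero]
    simp only [norm_exp_neg, re_four_pi_sq_mul]
    exact Real.tendsto_exp_neg_atTop_nhds_zero.comp
      (tendsto_re_inv_majorCone.const_mul_atTop (by positivity))
  have := hexp.mul ((tendsto_eulerPhi_zero.comp hdual).inv₀ one_ne_zero)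
  rwa [inv_one, one_mul] at this

end ModularInversion

/-! ### Euler's function on the minor arcs -/

section MinorArcs

variable {q τ : ℂ}

lemma norm_one_sub_norm (hq : ‖q‖ < 1) : ‖1 - (‖q‖ : ℂ)‖ = 1 - ‖q‖ := by
  rw [← Complex.ofReal_one, ← Complex.ofReal_sub, Complex.norm_real,
    Real.norm_of_nonneg (by linarith)]

/-- Only the linear terms of the two logarithmic series are compared; the others satisfy
`Re zⁿ ≤ ‖z‖ⁿ`. -/
lemma norm_inv_one_sub_le {z : ℂ} (hz : ‖z‖ < 1) :
    ‖(1 - z)⁻¹‖ ≤ ‖(1 - (‖z‖ : ℂ))⁻¹‖ * Real.exp (-(‖z‖ - z.re)) := by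
  have hz' : ‖(‖z‖ : ℂ)‖ < 1 := by simpa using hz
  have hseries := (Complex.hasSum_re (Complex.hasSum_taylorSeries_neg_log hz')).sub
    (Complex.hasSum_re (Complex.hasSum_taylorSeries_neg_log hz))
  have hlinear := sum_le_hasSum {1} (fun n _ => by
    rw [sub_nonneg]
    refine (Complex.re_le_norm _).trans ?_
    rw [norm_div, norm_pow]
    norm_cast) hseries
  simp only [sum_singleton, pow_one, Nat.cast_one, div_one, Complex.ofReal_re, Complex.neg_re,
    Complex.log_re, norm_one_sub_norm hz] at hlinear
  have hpos : 0 < 1 - ‖z‖ := by linarith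
  have hpos' : 0 < ‖1 - z‖ := norm_pos_iff.mpr (sub_ne_zero.mpr fun h => by simp [← h] at hz)
  rw [norm_inv, norm_inv, norm_one_sub_norm hz, ← Real.exp_log hpos', ← Real.exp_log hpos,
    ← Real.exp_neg, ← Real.exp_neg, ← Real.exp_add, Real.exp_le_exp]
  linarith

lemma norm_inv_qPochhammer_le (hq : ‖q‖ < 1) (n : ℕ) :
    ‖(qPochhammer q n)⁻¹‖ ≤ ‖(qPochhammer ‖q‖ n)⁻¹‖ *
      Real.exp (-∑ i ∈ range n, (‖q‖ ^ (i + 1) - (q ^ (i + 1)).re)) := by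
  simp only [qPochhammer]
  rw [← sum_neg_distrib, Real.exp_sum, ← prod_inv_distrib, ← prod_inv_distrib, norm_prod,
    norm_prod, ← prod_mul_distrib]
  refine prod_le_prod (fun _ _ => norm_nonneg _) fun i _ => ?_
  have hpow : ‖q ^ (i + 1)‖ < 1 := by
    rw [norm_pow]
    exact pow_lt_one₀ (norm_nonneg _) hq i.succ_ne_zero
  simpa using norm_inv_one_sub_le hpow

lemma hasSum_pow_succ (hq : ‖q‖ < 1) : HasSum (fun i : ℕ => q ^ (i + 1)) ((1 - q)⁻¹ - 1) := by
  have hgeom := hasSum_geometric_of_norm_lt_one hq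
  have htail := (hasSum_nat_add_iff' 1).mpr hgeom
  simpa using htail

lemma norm_inv_eulerPhi_le (hq : ‖q‖ < 1) :
    ‖(eulerPhi q)⁻¹‖ ≤ ‖(eulerPhi ‖q‖)⁻¹‖ *
      Real.exp (-((1 - ‖q‖)⁻¹ - (1 - q)⁻¹.re)) := by
  have hq' : ‖(‖q‖ : ℂ)‖ < 1 := by simpa using hq
  have hsum : HasSum (fun i : ℕ => ‖q‖ ^ (i + 1) - (q ^ (i + 1)).re)
      ((1 - ‖q‖)⁻¹ - (1 - q)⁻¹.re) := by
    have hgeom := (Complex.hasSum_re (hasSum_pow_succ hq')).sub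
      (Complex.hasSum_re (hasSum_pow_succ hq))
    simp only [← Complex.ofReal_pow, ← Complex.ofReal_one, ← Complex.ofReal_sub,
      ← Complex.ofReal_inv, Complex.ofReal_re, Complex.sub_re] at hgeom
    rwa [sub_sub_sub_cancel_right] at hgeom
  exact le_of_tendsto_of_tendsto' (tendsto_inv_qPochhammer hq).norm
    ((tendsto_inv_qPochhammer hq').norm.mul
      ((Real.continuous_exp.tendsto _).comp hsum.tendsto_sum_nat.neg))
    (norm_inv_qPochhammer_le hq)

lemma norm_one_sub_exp_neg_sq (τ : ℂ) : ‖1 - Complex.exp (-τ)‖ ^ 2 =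
    (1 - Real.exp (-τ.re)) ^ 2 + 2 * Real.exp (-τ.re) * (1 - Real.cos τ.im) := by
  rw [← Complex.normSq_eq_norm_sq, Complex.normSq_apply, Complex.sub_re, Complex.sub_im,
    Complex.exp_re, Complex.exp_im, Complex.neg_re, Complex.neg_im, Real.cos_neg, Real.sin_neg,
    Complex.one_re, Complex.one_im]
  linear_combination Real.exp (-τ.re) ^ 2 * Real.sin_sq_add_cos_sq τ.im

lemma mul_one_sub_exp_neg_re_le_norm (hτ : 0 < τ.re) (hτ1 : τ.re ≤ 1 / 2) (hlow : τ.re ≤ |τ.im|)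
    (hhigh : |τ.im| ≤ π) : 1.09 * (1 - Real.exp (-τ.re)) ≤ ‖1 - Complex.exp (-τ)‖ := by
  refine (abs_le_of_sq_le_sq' ?_ (norm_nonneg _)).2
  rw [norm_one_sub_exp_neg_sq]
  set r := Real.exp (-τ.re)
  have hr : 1 - τ.re ≤ r := by linarith [Real.add_one_le_exp (-τ.re)]
  have hr1 : r < 1 := Real.exp_lt_one_iff.mpr (by linarith)
  have hpi : 1 / 5 ≤ 2 / π ^ 2 := by
    rw [div_le_div_iff₀ (by norm_num) (by positivity)]
    nlinarith [Real.pi_lt_d2, Real.pi_pos]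
  have hsq : (1 - r) ^ 2 ≤ τ.im ^ 2 := by
    rw [← sq_abs τ.im]
    gcongr
    linarith
  have hcos : 1 / 5 * (1 - r) ^ 2 ≤ 1 - Real.cos τ.im := by
    have hjordan := Real.cos_le_one_sub_mul_cos_sq hhigh
    have : 1 / 5 * (1 - r) ^ 2 ≤ 2 / π ^ 2 * τ.im ^ 2 := by gcongr
    linarith
  have hcos' : 1 - Real.cos τ.im ≤ 2 * r * (1 - Real.cos τ.im) :=
    le_mul_of_one_le_left (by linarith [Real.cos_le_one τ.im]) (by linarith)
  nlinarith [sq_nonneg (1 - r)]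

lemma div_le_inv_one_sub_norm_sub (hτ : 0 < τ.re) (hτ1 : τ.re ≤ 1 / 2) (hlow : τ.re ≤ |τ.im|)
    (hhigh : |τ.im| ≤ π) :
    2 / 25 / τ.re ≤ (1 - ‖Complex.exp (-τ)‖)⁻¹ - (1 - Complex.exp (-τ))⁻¹.re := by
  have hnorm := mul_one_sub_exp_neg_re_le_norm hτ hτ1 hlow hhigh
  rw [norm_exp_neg]
  set s := 1 - Real.exp (-τ.re)
  have hs0 : 0 < s := sub_pos.mpr (Real.exp_lt_one_iff.mpr (by linarith))
  have hsle : s ≤ τ.re := by linarith [Real.add_one_le_exp (-τ.re)]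
  have hre : (1 - Complex.exp (-τ))⁻¹.re ≤ (1.09 * s)⁻¹ := by
    refine (Complex.re_le_norm _).trans ?_
    rw [norm_inv]
    exact inv_anti₀ (by positivity) hnorm
  calc 2 / 25 / τ.re ≤ 9 / 109 / s := div_le_div₀ (by norm_num) (by norm_num) hs0 hsle
    _ = s⁻¹ - (1.09 * s)⁻¹ := by
        field_simp
        norm_num
    _ ≤ _ := by gcongr

lemma norm_csqrt (z : ℂ) : ‖Complex.sqrt z‖ = √‖z‖ := by
  rcases eq_or_ne z 0 with rfl | hz
  · simp
  · rw [sqrt_eq_exp hz, Complex.norm_exp, Real.sqrt_eq_rpow, Real.rpow_def_of_pos (by positivity)]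
    simp [Complex.log_re]
    ring

lemma tendsto_ofReal_majorCone : Tendsto ((↑) : ℝ → ℂ) (𝓝[>] 0) (𝓝[majorCone] 0) := by
  refine tendsto_nhdsWithin_iff.mpr ⟨?_, ?_⟩
  · simpa using (Complex.continuous_ofReal.tendsto 0).mono_left nhdsWithin_le_nhds
  · filter_upwards [self_mem_nhdsWithin] with t ht
    exact ⟨ht, by simpa using le_of_lt ht⟩

lemma eventually_norm_inv_eulerPhi_real_le :
    ∀ᶠ t : ℝ in 𝓝[>] 0, ‖(eulerPhi (Complex.exp (-t)))⁻¹‖ ≤ 2 * Real.exp (π ^ 2 / (6 * t)) := by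
  have hcorr := (tendsto_etaCorrection.comp tendsto_ofReal_majorCone).norm.eventually_le_const
    (show ‖(1 : ℂ)‖ < 2 by simp)
  filter_upwards [hcorr, Ioc_mem_nhdsGT one_pos] with t hcorr ⟨ht, ht1⟩
  have hsqrt : ‖Complex.sqrt ((t : ℂ) / (2 * π))‖ ≤ 1 := by
    rw [norm_csqrt, Real.sqrt_le_one]
    simp only [norm_div, norm_mul, Complex.norm_real, Complex.norm_ofNat, Real.norm_eq_abs,
      abs_of_pos ht, abs_of_pos Real.pi_pos]
    exact div_le_one_of_le₀ (by linarith [Real.pi_gt_three]) (by positivity)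
  have hexp : ‖Complex.exp ((π : ℂ) ^ 2 / (6 * t))‖ = Real.exp (π ^ 2 / (6 * t)) := by
    rw [← Complex.norm_of_nonneg (Real.exp_nonneg _)]
    push_cast
    rfl
  rw [inv_eulerPhi_exp_neg (by simpa using ht), norm_mul, norm_mul, hexp]
  calc _ ≤ 1 * Real.exp (π ^ 2 / (6 * t)) * 2 := by gcongr; exact hcorr
    _ = _ := by ring

lemma eventually_norm_inv_eulerPhi_minor_le :
    ∀ᶠ t in 𝓝[>] 0, ∀ τ : ℂ, τ.re = t → t ≤ |τ.im| → |τ.im| ≤ π →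
      ‖(eulerPhi (Complex.exp (-τ)))⁻¹‖ ≤ 2 * Real.exp (π ^ 2 / (6 * t) - 2 / 25 / t) := by
  filter_upwards [eventually_norm_inv_eulerPhi_real_le, Ioc_mem_nhdsGT one_half_pos]
    with t hreal ⟨ht, ht1⟩
  rintro τ rfl hlow hhigh
  have hnorm : (‖Complex.exp (-τ)‖ : ℂ) = Complex.exp (-(τ.re : ℂ)) := by
    rw [norm_exp_neg]
    push_cast
    rfl
  calc _ ≤ _ := norm_inv_eulerPhi_le (norm_exp_neg_lt_one ht)
    _ ≤ 2 * Real.exp (π ^ 2 / (6 * τ.re)) * Real.exp (-(2 / 25 / τ.re)) := by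
        rw [hnorm]
        gcongr
        exact div_le_inv_one_sub_norm_sub ht ht1 hlow hhigh
    _ = _ := by rw [sub_eq_add_neg, Real.exp_add, mul_assoc]

end MinorArcs

/-! ### The generating function of the crank -/

section GeneratingFunctions

/-- `HasGenFun q S a` says that the generating function `∑_{s ∈ S} q^|s|` of the set `S` of
multisets of parts, where `|s|` is the sum of the parts of `s`, converges to `a` at `q`. -/
def HasGenFun (q : ℂ) (S : Set (Multiset ℕ)) (a : ℂ) : Prop :=
  HasSum (fun s : S => q ^ (s : Multiset ℕ).sum) a

variable {q a b : ℂ} {S T : Set (Multiset ℕ)}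

lemma hasGenFun_range {X : Type*} {φ : X → Multiset ℕ} (hφ : Function.Injective φ)
    (h : HasSum (fun x => q ^ (φ x).sum) a) : HasGenFun q (Set.range φ) a :=
  (Equiv.ofInjective φ hφ).hasSum_iff.mp h

lemma hasGenFun_singleton (q : ℂ) (s : Multiset ℕ) : HasGenFun q {s} (q ^ s.sum) :=
  hasSum_unique _

lemma HasGenFun.cons (hS : HasGenFun q S a) (n : ℕ) :
    HasGenFun q ((n ::ₘ ·) '' S) (q ^ n * a) := by
  rw [Set.image_eq_range]
  refine hasGenFun_range (fun s t h => Subtype.ext ((Multiset.cons_inj_right n).mp h)) ?_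
  simpa only [Multiset.sum_cons, pow_add] using hS.mul_left (q ^ n)

lemma hasSum_mul_prod {X Y : Type*} {f : X → ℂ} {g : Y → ℂ} (hf : HasSum f a) (hg : HasSum g b) :
    HasSum (fun x : X × Y => f x.1 * g x.2) (a * b) :=
  hf.mul hg (summable_mul_of_summable_norm hf.summable.norm hg.summable.norm)

lemma HasGenFun.filter {p : ℕ → Prop} [DecidablePred p] (hS : HasGenFun q S a)
    (hT : HasGenFun q T b) (hSp : ∀ s ∈ S, ∀ i ∈ s, p i) (hTp : ∀ t ∈ T, ∀ i ∈ t, ¬ p i) :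
    HasGenFun q {s | s.filter p ∈ S ∧ s.filter (¬ p ·) ∈ T} (a * b) := by
  have filter_add : ∀ s ∈ S, ∀ t ∈ T,
      (s + t).filter p = s ∧ (s + t).filter (¬ p ·) = t := fun s hs t ht => by
    rw [Multiset.filter_add, Multiset.filter_add, Multiset.filter_eq_self.mpr (hSp s hs),
      Multiset.filter_eq_self.mpr (hTp t ht), Multiset.filter_eq_nil.mpr (hTp t ht),
      Multiset.filter_eq_nil.mpr fun i hi => not_not.mpr (hSp s hs i hi)]
    simp
  have hrange : Set.range (fun x : S × T => (x.1 : Multiset ℕ) + x.2) =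
      {s | s.filter p ∈ S ∧ s.filter (¬ p ·) ∈ T} := by
    refine Set.Subset.antisymm ?_ fun s hs =>
      ⟨(⟨_, hs.1⟩, ⟨_, hs.2⟩), Multiset.filter_add_not p s⟩
    rintro _ ⟨⟨s, t⟩, rfl⟩
    obtain ⟨h₁, h₂⟩ := filter_add s s.2 t t.2
    exact ⟨h₁.symm ▸ s.2, h₂.symm ▸ t.2⟩
  rw [← hrange]
  refine hasGenFun_range (fun ⟨s, t⟩ ⟨s', t'⟩ h => ?_) ?_
  · obtain ⟨h₁, h₂⟩ := filter_add s s.2 t t.2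
    obtain ⟨h₁', h₂'⟩ := filter_add s' s'.2 t' t'.2
    simp only at h
    exact Prod.ext (Subtype.ext (by rw [← h₁, h, h₁'])) (Subtype.ext (by rw [← h₂, h, h₂']))
  · simpa only [Multiset.sum_add, pow_add] using hasSum_mul_prod hS hT

lemma hasSum_geometric_pow_succ (hq : ‖q‖ < 1) (n : ℕ) :
    HasSum (fun m : ℕ => q ^ ((n + 1) * m)) (1 - q ^ (n + 1))⁻¹ := by
  simp only [pow_mul]
  refine hasSum_geometric_of_norm_lt_one ?_
  rw [norm_pow]
  exact pow_lt_one₀ (norm_nonneg _) hq n.succ_ne_zero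

lemma hasGenFun_forall_eq (hq : ‖q‖ < 1) (n : ℕ) :
    HasGenFun q {s | ∀ i ∈ s, i = n + 1} (1 - q ^ (n + 1))⁻¹ := by
  have hrange : Set.range (fun m => Multiset.replicate m (n + 1)) = {s | ∀ i ∈ s, i = n + 1} := by
    ext s
    exact ⟨by rintro ⟨m, rfl⟩; exact fun i => Multiset.eq_of_mem_replicate,
      fun hs => ⟨s.card, (Multiset.eq_replicate.mpr ⟨rfl, hs⟩).symm⟩⟩
  rw [← hrange]
  refine hasGenFun_range (Multiset.replicate_left_injective _) ?_
  simpa only [Multiset.sum_replicate, smul_eq_mul, mul_comm] using hasSum_geometric_pow_succ hq n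

lemma hasGenFun_forall_two_le (hq : ‖q‖ < 1) (w : ℕ) :
    HasGenFun q {s | ∀ i ∈ s, 2 ≤ i ∧ i ≤ w + 1} ((1 - q) * (qPochhammer q (w + 1))⁻¹) := by
  induction w with
  | zero =>
    have hq0 : 1 - q ≠ 0 := by simpa using one_sub_pow_succ_ne_zero hq 0
    have hset : {s : Multiset ℕ | ∀ i ∈ s, 2 ≤ i ∧ i ≤ 0 + 1} = {0} := by
      ext s
      refine ⟨fun hs => Multiset.eq_zero_of_forall_notMem fun i hi => ?_, by rintro rfl; simp⟩
      have := hs i hi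
      omega
    simpa [hset, qPochhammer, hq0] using hasGenFun_singleton q 0
  | succ w ih =>
    have h := (hasGenFun_forall_eq hq (w + 1)).filter (p := (· = w + 2)) ih (fun _ hs => hs)
      (fun s hs i hi => by have := hs i hi; omega)
    have hset : {s : Multiset ℕ | ∀ i ∈ s, 2 ≤ i ∧ i ≤ w + 1 + 1} =
        {s | s.filter (· = w + 2) ∈ {s | ∀ i ∈ s, i = w + 1 + 1} ∧
          s.filter (¬ · = w + 2) ∈ {s : Multiset ℕ | ∀ i ∈ s, 2 ≤ i ∧ i ≤ w + 1}} := by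
      ext s
      simp only [Set.mem_ofPred_eq, Multiset.mem_filter, and_imp]
      exact ⟨fun hs => ⟨fun i _ hi => hi, fun i hi _ => by have := hs i hi; omega⟩,
        fun hs i hi => by have := hs.2 i hi; omega⟩
    rw [hset, qPochhammer_succ, mul_inv]
    convert h using 1
    ring

lemma injective_map_cons_zero_add :
    Function.Injective fun x : Multiset ℕ × ℕ => (0 ::ₘ x.1).map (· + x.2) := by
  have le_of_eq : ∀ {v v' : Multiset ℕ} {m m' : ℕ},
      (0 ::ₘ v).map (· + m) = (0 ::ₘ v').map (· + m') → m' ≤ m := fun {v v' m m'} h => by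
    have hm : m ∈ (0 ::ₘ v).map (· + m) := by simp
    obtain ⟨x, -, hx⟩ := Multiset.mem_map.mp (h ▸ hm)
    omega
  rintro ⟨v, m⟩ ⟨v', m'⟩ h
  obtain rfl : m = m' := le_antisymm (le_of_eq h.symm) (le_of_eq h)
  exact congrArg (·, m)
    ((Multiset.cons_inj_right 0).mp (Multiset.map_injective (add_left_injective m) h))

lemma map_sub_add_cancel {s : Multiset ℕ} {m : ℕ} (hm : ∀ i ∈ s, m ≤ i) :
    (s.map (· - m)).map (· + m) = s := by
  rw [Multiset.map_map]
  exact (Multiset.map_congr rfl fun i hi => Nat.sub_add_cancel (hm i hi)).trans s.map_id'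

lemma exists_eq_map_cons_zero_add {s : Multiset ℕ} (hs : s ≠ 0) :
    ∃ (v : Multiset ℕ) (m : ℕ), (0 ::ₘ v).map (· + m) = s := by
  obtain ⟨m, hm, hmin⟩ := s.toFinset.exists_min_image id (by simpa using hs)
  simp only [Multiset.mem_toFinset, id_eq] at hm hmin
  have hzero : 0 ∈ s.map (· - m) := Multiset.mem_map.mpr ⟨m, hm, m.sub_self⟩
  obtain ⟨v, hv⟩ := Multiset.exists_cons_of_mem hzero
  exact ⟨v, m, hv ▸ map_sub_add_cancel hmin⟩

/-- Subtracting the smallest part from all `j + 1` parts leaves `j` arbitrary parts. -/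
lemma hasGenFun_card_eq (hq : ‖q‖ < 1) (j : ℕ) :
    HasGenFun q {s | s.card = j} (qPochhammer q j)⁻¹ := by
  induction j with
  | zero => simpa [qPochhammer_zero] using hasGenFun_singleton q 0
  | succ j ih =>
    let φ : {s : Multiset ℕ | s.card = j} × ℕ → Multiset ℕ :=
      fun x => (0 ::ₘ (x.1 : Multiset ℕ)).map (· + x.2)
    have hrange : Set.range φ = {s | s.card = j + 1} := by
      refine Set.Subset.antisymm ?_ fun s hs => ?_
      · rintro _ ⟨⟨⟨v, hv⟩, m⟩, rfl⟩
        simpa [φ] using hv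
      · obtain ⟨v, m, rfl⟩ := exists_eq_map_cons_zero_add (s := s) (by rintro rfl; simp at hs)
        exact ⟨(⟨v, by simpa using hs⟩, m), rfl⟩
    rw [← hrange, qPochhammer_succ, mul_inv]
    refine hasGenFun_range (injective_map_cons_zero_add.comp
      (Subtype.val_injective.prodMap Function.injective_id)) ?_
    convert hasSum_mul_prod ih (hasSum_geometric_pow_succ hq j) using 2 with x
    have hcard : (x.1 : Multiset ℕ).card = j := x.1.2
    have hsum : (φ x).sum = (x.1 : Multiset ℕ).sum + (j + 1) * x.2 := by
      simp only [φ, Multiset.sum_map_add, Multiset.map_id', Multiset.sum_cons, zero_add,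
        Multiset.map_const', Multiset.sum_replicate, Multiset.card_cons, hcard, smul_eq_mul]
    rw [hsum, pow_add]

lemma hasGenFun_card_eq_forall_le (hq : ‖q‖ < 1) (j c : ℕ) :
    HasGenFun q {s | s.card = j ∧ ∀ i ∈ s, c ≤ i} (q ^ (j * c) * (qPochhammer q j)⁻¹) := by
  let φ : {s : Multiset ℕ | s.card = j} → Multiset ℕ := fun s => (s : Multiset ℕ).map (· + c)
  have hrange : Set.range φ = {s | s.card = j ∧ ∀ i ∈ s, c ≤ i} := by
    refine Set.Subset.antisymm ?_ fun s hs =>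
      ⟨⟨s.map (· - c), by simpa using hs.1⟩, map_sub_add_cancel hs.2⟩
    rintro _ ⟨⟨s, hs⟩, rfl⟩
    exact ⟨by simpa [φ] using hs, by simp [φ]⟩
  rw [← hrange]
  refine hasGenFun_range
    ((Multiset.map_injective (add_left_injective c)).comp Subtype.val_injective) ?_
  have hsum : ∀ s, q ^ (φ s).sum = q ^ (j * c) * q ^ (s : Multiset ℕ).sum := fun s => by
    have hcard : (s : Multiset ℕ).card = j := s.2
    simp [φ, Multiset.sum_map_add, hcard, pow_add, mul_comm]
  simpa only [hsum] using (hasGenFun_card_eq hq j).mul_left (q ^ (j * c))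

lemma summable_sigma_pow_sum {ι : Type*} {S : ι → Set (Multiset ℕ)} {f : ι → ℂ → ℂ}
    (hS : ∀ i q, ‖q‖ < 1 → HasGenFun q (S i) (f i q))
    (hf : ∀ q, ‖q‖ < 1 → Summable fun i => f i q) (hq : ‖q‖ < 1) :
    Summable fun x : Σ i, S i => q ^ (x.2 : Multiset ℕ).sum := by
  have hr : ‖((‖q‖ : ℝ) : ℂ)‖ < 1 := by simpa using hq
  have hnorm : ∀ i, HasSum (fun s : S i => ‖q ^ (s : Multiset ℕ).sum‖) (f i (‖q‖ : ℝ)).re :=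
    fun i => by
      simpa only [← Complex.ofReal_pow, Complex.ofReal_re, norm_pow] using
        Complex.hasSum_re (hS i _ hr)
  refine .of_norm ((summable_sigma_of_nonneg fun _ => norm_nonneg _).mpr
    ⟨fun i => (hnorm i).summable, ?_⟩)
  simpa only [(hnorm _).tsum_eq] using (Complex.hasSum_re (hf _ hr).hasSum).summable

lemma hasGenFun_iUnion {ι : Type*} {S : ι → Set (Multiset ℕ)} {f : ι → ℂ → ℂ}
    (hdisj : Pairwise (Function.onFun Disjoint S))
    (hS : ∀ i q, ‖q‖ < 1 → HasGenFun q (S i) (f i q))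
    (hf : ∀ q, ‖q‖ < 1 → Summable fun i => f i q) (hq : ‖q‖ < 1) :
    HasGenFun q (⋃ i, S i) (∑' i, f i q) :=
  (Set.unionEqSigmaOfDisjoint hdisj).symm.hasSum_iff.mp <|
    HasSum.sigma_of_hasSum (hf q hq).hasSum (fun i => hS i q hq) (summable_sigma_pow_sum hS hf hq)

lemma HasGenFun.hasSum_card {P : Multiset ℕ → Prop} (h : HasGenFun q {s | 0 ∉ s ∧ P s} a) :
    HasSum (fun n : ℕ => (Nat.card {l : n.Partition // P l.parts} : ℂ) * q ^ n) a := by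
  refine ((Equiv.sigmaFiberEquiv fun s : {s | 0 ∉ s ∧ P s} =>
    (s : Multiset ℕ).sum).hasSum_iff.mpr h).sigma fun n => ?_
  let e : {s : {s | 0 ∉ s ∧ P s} // (s : Multiset ℕ).sum = n} ≃ {l : n.Partition // P l.parts} :=
    { toFun s := ⟨⟨s.1, fun hi => Nat.pos_of_ne_zero fun h0 => s.1.2.1 (h0 ▸ hi), s.2⟩, s.1.2.2⟩
      invFun l := ⟨⟨l.1.parts, fun h0 => (l.1.parts_pos h0).false, l.2⟩, l.1.parts_sum⟩ }
  have : Finite {s : {s | 0 ∉ s ∧ P s} // (s : Multiset ℕ).sum = n} := .of_equiv _ e.symm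
  have := Fintype.ofFinite {s : {s | 0 ∉ s ∧ P s} // (s : Multiset ℕ).sum = n}
  rw [← Nat.card_congr e, Nat.card_eq_fintype_card]
  convert hasSum_fintype (fun _ : {s : {s | 0 ∉ s ∧ P s} // (s : Multiset ℕ).sum = n} => q ^ n)
    using 1
  · exact funext fun s => congrArg (q ^ ·) s.2
  · simp

end GeneratingFunctions

section Crank

/-- The Andrews–Garvan crank of a multiset of parts. -/
def partsCrank (s : Multiset ℕ) : ℤ :=
  if s.count 1 = 0 then (s.sup : ℤ)
  else ((s.filter fun p => s.count 1 < p).card : ℤ) - s.count 1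

/-- The multisets of positive parts with crank `k` and exactly `w` ones. -/
def crankSlice (k w : ℕ) : Set (Multiset ℕ) := {s | 0 ∉ s ∧ s.count 1 = w ∧ partsCrank s = k}

variable {q : ℂ}

lemma mem_crankSlice_zero {k : ℕ} {s : Multiset ℕ} :
    s ∈ crankSlice k 0 ↔ (∀ i ∈ s, 2 ≤ i) ∧ s.sup = k := by
  have two_le_iff : (∀ i ∈ s, 2 ≤ i) ↔ 0 ∉ s ∧ 1 ∉ s := by
    refine ⟨fun h => ⟨fun h0 => ?_, fun h1 => ?_⟩, fun ⟨h0, h1⟩ i hi => ?_⟩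
    · exact absurd (h 0 h0) (by decide)
    · exact absurd (h 1 h1) (by decide)
    · have := ne_of_mem_of_not_mem hi h0
      have := ne_of_mem_of_not_mem hi h1
      omega
  rw [two_le_iff, and_assoc]
  refine and_congr_right fun _ => ?_
  rw [Multiset.count_eq_zero]
  exact and_congr_right fun h1 => by simp [partsCrank, h1]

lemma mem_crankSlice_succ {k w : ℕ} {s : Multiset ℕ} :
    s ∈ crankSlice k (w + 1) ↔
      0 ∉ s ∧ s.count 1 = w + 1 ∧ (s.filter (w + 1 < ·)).card = w + 1 + k := by
  refine and_congr_right fun _ => and_congr_right fun h1 => ?_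
  rw [partsCrank, h1, if_neg w.succ_ne_zero]
  omega

lemma sup_mem_of_ne_zero {s : Multiset ℕ} (h : s.sup ≠ 0) : s.sup ∈ s := by
  have hs : s.toFinset.Nonempty := by
    rw [Multiset.toFinset_nonempty]
    rintro rfl
    simp at h
  obtain ⟨i, hi, hmax⟩ := s.toFinset.exists_max_image id hs
  simp only [Multiset.mem_toFinset, id_eq] at hi hmax
  rwa [le_antisymm (Multiset.sup_le.mpr hmax) (Multiset.le_sup hi)]

lemma crankSlice_zero_zero : crankSlice 0 0 = {0} := by
  ext s
  rw [mem_crankSlice_zero, Set.mem_singleton_iff]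
  refine ⟨fun ⟨h2, hsup⟩ => Multiset.eq_zero_of_forall_notMem fun i hi => ?_, ?_⟩
  · have := h2 i hi
    have := hsup ▸ Multiset.le_sup hi
    omega
  · rintro rfl
    simp

lemma crankSlice_one_zero : crankSlice 1 0 = ∅ := by
  refine Set.eq_empty_of_forall_notMem fun s hs => ?_
  obtain ⟨h2, hsup⟩ := mem_crankSlice_zero.mp hs
  have := h2 _ (sup_mem_of_ne_zero (by omega))
  omega

lemma crankSlice_add_two_zero (k : ℕ) :
    crankSlice (k + 2) 0 = ((k + 2) ::ₘ ·) '' {s | ∀ i ∈ s, 2 ≤ i ∧ i ≤ k + 2} := by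
  ext s
  rw [mem_crankSlice_zero]
  constructor
  · rintro ⟨h2, hsup⟩
    obtain ⟨t, rfl⟩ := Multiset.exists_cons_of_mem (hsup ▸ sup_mem_of_ne_zero (by omega))
    refine ⟨t, fun i hi => ?_, rfl⟩
    have hi := Multiset.mem_cons_of_mem (b := k + 2) hi
    exact ⟨h2 i hi, hsup ▸ Multiset.le_sup hi⟩
  · rintro ⟨t, ht, rfl⟩
    refine ⟨fun i hi => ?_, ?_⟩
    · rcases Multiset.mem_cons.mp hi with rfl | hi
      exacts [by omega, (ht i hi).1]
    · rw [Multiset.sup_cons, sup_eq_left, Multiset.sup_le]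
      exact fun i hi => (ht i hi).2

/-- The crank generating function differs from the counting one at `n = 1` only; for `k ≤ 1` this
is what makes the terms without ones fit the general pattern. -/
lemma hasGenFun_crankSlice_zero (hq : ‖q‖ < 1) (k : ℕ) :
    HasGenFun q (crankSlice k 0)
      ((1 - q) * q ^ k * durfeeTerm 2 k q 0 - (crankM k 1 : ℤ) * q) := by
  match k with
  | 0 =>
    rw [crankSlice_zero_zero]
    simpa [durfeeTerm, qPochhammer, crankM] using hasGenFun_singleton q 0
  | 1 =>
    have hq0 : 1 - q ≠ 0 := by simpa using one_sub_pow_succ_ne_zero hq 0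
    have hterm : durfeeTerm 2 1 q 0 = (1 - q)⁻¹ := by simp [durfeeTerm, qPochhammer]
    have hcrank : crankM ((1 : ℕ) : ℤ) 1 = 1 := by simp [crankM]
    rw [crankSlice_one_zero, hterm, hcrank, mul_right_comm, mul_inv_cancel₀ hq0, pow_one,
      Int.cast_one, sub_self]
    exact hasSum_empty
  | k + 2 =>
    have hcrank : crankM ((k + 2 : ℕ) : ℤ) 1 = 0 := by
      rw [crankM, if_pos rfl, if_neg (by omega), if_neg (by omega)]
    rw [crankSlice_add_two_zero, hcrank]
    convert (hasGenFun_forall_two_le hq (k + 1)).cons (k + 2) using 1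
    simp only [durfeeTerm, qPochhammer_zero, mul_zero, pow_zero, one_mul, zero_add, one_div,
      Int.cast_zero, zero_mul, sub_zero]
    ring

lemma crankSlice_succ_eq_filter (k w : ℕ) :
    crankSlice k (w + 1) =
      {s | s.filter (w + 1 < ·) ∈ {s | s.card = w + 1 + k ∧ ∀ i ∈ s, w + 2 ≤ i} ∧
        s.filter (¬ w + 1 < ·) ∈ {s : Multiset ℕ |
          s.filter (· = 1) ∈ ({Multiset.replicate (w + 1) 1} : Set (Multiset ℕ)) ∧
          s.filter (¬ · = 1) ∈ {s : Multiset ℕ | ∀ i ∈ s, 2 ≤ i ∧ i ≤ w + 1}}} := by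
  ext s
  have hone : (s.filter (¬ w + 1 < ·)).filter (· = 1) = Multiset.replicate (s.count 1) 1 := by
    rw [Multiset.filter_eq', Multiset.count_filter, if_pos (by omega)]
  have htwo : (∀ i ∈ (s.filter (¬ w + 1 < ·)).filter (¬ · = 1), 2 ≤ i ∧ i ≤ w + 1) ↔ 0 ∉ s := by
    simp only [Multiset.mem_filter, and_imp]
    refine ⟨fun h h0 => ?_, fun h0 i hi _ _ => ?_⟩
    · exact absurd (h 0 h0 (by omega) (by omega)).1 (by decide)
    · have := ne_of_mem_of_not_mem hi h0
      omega
  have hbig : ∀ i ∈ s.filter (w + 1 < ·), w + 2 ≤ i := fun i hi => (Multiset.mem_filter.mp hi).2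
  rw [mem_crankSlice_succ]
  simp only [Set.mem_ofPred_eq, Set.mem_singleton_iff, hone, htwo,
    (Multiset.replicate_left_injective 1).eq_iff]
  tauto

lemma hasGenFun_crankSlice_succ (hq : ‖q‖ < 1) (k w : ℕ) :
    HasGenFun q (crankSlice k (w + 1)) ((1 - q) * q ^ k * durfeeTerm 2 k q (w + 1)) := by
  have hsmall := (hasGenFun_singleton q (.replicate (w + 1) 1)).filter (p := (· = 1))
    (hasGenFun_forall_two_le hq w)
    (fun s hs i hi => Multiset.eq_of_mem_replicate (hs ▸ hi))
    (fun s hs i hi => by have := hs i hi; omega)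
  have h := (hasGenFun_card_eq_forall_le hq (w + 1 + k) (w + 2)).filter (p := (w + 1 < ·)) hsmall
    (fun s hs i hi => hs.2 i hi)
    (fun s hs i hi hlt => by
      rcases eq_or_ne i 1 with rfl | hi1
      · omega
      · have := hs.2 i (Multiset.mem_filter.mpr ⟨hi, hi1⟩)
        omega)
  rw [crankSlice_succ_eq_filter]
  convert h using 1
  have hpow : q ^ k * q ^ ((w + 1) * (w + 1) + (k + 2) * (w + 1)) =
      q ^ ((w + 1 + k) * (w + 2)) * q ^ (w + 1) := by
    rw [← pow_add, ← pow_add]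
    congr 1
    ring
  rw [Multiset.sum_replicate, smul_eq_mul, mul_one, durfeeTerm, div_eq_mul_inv, mul_inv]
  linear_combination (1 - q) * (qPochhammer q (w + 1))⁻¹ * (qPochhammer q (w + 1 + k))⁻¹ * hpow

lemma hasGenFun_partsCrank (hq : ‖q‖ < 1) (k : ℕ) :
    HasGenFun q {s | 0 ∉ s ∧ partsCrank s = k}
      ((1 - q) * q ^ k * durfeeSum 2 k q - (crankM k 1 : ℤ) * q) := by
  have hunion : {s | 0 ∉ s ∧ partsCrank s = k} = ⋃ w, crankSlice k w := by
    ext s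
    simp [crankSlice]
  have hdisj : Pairwise (Function.onFun Disjoint (crankSlice k)) := fun w w' hne =>
    Set.disjoint_left.mpr fun s hs hs' => hne (hs.2.1.symm.trans hs'.2.1)
  have hsum : ∀ q : ℂ, ‖q‖ < 1 → HasSum (fun w => (1 - q) * q ^ k * durfeeTerm 2 k q w -
      if w = 0 then (crankM k 1 : ℤ) * q else 0)
      ((1 - q) * q ^ k * durfeeSum 2 k q - (crankM k 1 : ℤ) * q) := fun q hq =>
    ((summable_durfeeTerm hq 2 k).hasSum.mul_left _).sub (hasSum_ite_eq 0 _)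
  rw [hunion, ← (hsum q hq).tsum_eq]
  refine hasGenFun_iUnion hdisj (fun w q hq => ?_) (fun q hq => (hsum q hq).summable) hq
  cases w with
  | zero => simpa using hasGenFun_crankSlice_zero hq k
  | succ w => simpa using hasGenFun_crankSlice_succ hq k w

lemma crank_partition_one (l : Nat.Partition 1) : crank l = -1 := by
  simp [crank]

lemma hasSum_crankM (hq : ‖q‖ < 1) (k : ℕ) :
    HasSum (fun n : ℕ => ((crankM k n : ℤ) : ℂ) * q ^ n) ((1 - q) * q ^ k * durfeeSum 2 k q) := by
  have hcard : ∀ n : ℕ, ((crankM k n : ℤ) : ℂ) * q ^ n =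
      (Nat.card {l : n.Partition // crank l = k} : ℂ) * q ^ n +
        if n = 1 then ((crankM k 1 : ℤ) : ℂ) * q else 0 := fun n => by
    by_cases hn : n = 1
    · subst hn
      have : IsEmpty {l : Nat.Partition 1 // crank l = k} :=
        ⟨fun l => by have := l.2; rw [crank_partition_one] at this; omega⟩
      simp
    · simp [crankM, hn]
  simp only [hcard]
  have h := (hasGenFun_partsCrank hq k).hasSum_card.add
    (hasSum_ite_eq 1 (((crankM k 1 : ℤ) : ℂ) * q))
  rwa [sub_add_cancel] at h

end Crank

/-! ### The Cauchy integral -/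

section CauchyIntegral

lemma re_add_mul_I (t θ : ℝ) : ((t : ℂ) + θ * I).re = t := by simp

lemma im_add_mul_I (t θ : ℝ) : ((t : ℂ) + θ * I).im = θ := by simp

lemma integral_exp_int_mul_I (n : ℤ) :
    ∫ θ in (-π)..π, Complex.exp (n * (θ * I)) = if n = 0 then 2 * π else 0 := by
  split_ifs with hn
  · simp [hn, two_mul]
  · have hnI : (n * I : ℂ) ≠ 0 := mul_ne_zero (Int.cast_ne_zero.mpr hn) Complex.I_ne_zero
    have hperiodic : Complex.exp (n * I * (π : ℝ)) = Complex.exp (n * I * ((-π : ℝ) : ℂ)) :=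
      Complex.exp_eq_exp_iff_exists_int.mpr ⟨n, by push_cast; ring⟩
    simp_rw [← mul_assoc, mul_right_comm _ _ I]
    rw [integral_exp_mul_complex hnI, hperiodic, sub_self, zero_div,
      Complex.ofReal_zero]

section

variable {a : ℕ → ℂ} {F : ℂ → ℂ} {t : ℝ}

lemma summable_norm_mul_exp_neg_pow
    (hF : ∀ q : ℂ, ‖q‖ < 1 → HasSum (fun n => a n * q ^ n) (F q)) (ht : 0 < t) :
    Summable fun n => ‖a n‖ * Real.exp (-t) ^ n := by
  have hnorm : ‖Complex.exp (-(t : ℂ))‖ = Real.exp (-t) := by rw [norm_exp_neg, Complex.ofReal_re]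
  have := (hF (Complex.exp (-(t : ℂ))) (norm_exp_neg_lt_one ht)).summable.norm
  simpa only [norm_mul, norm_pow, hnorm] using this

lemma continuous_comp_exp_neg
    (hF : ∀ q : ℂ, ‖q‖ < 1 → HasSum (fun n => a n * q ^ n) (F q)) (ht : 0 < t) :
    Continuous fun θ : ℝ => F (Complex.exp (-(t + θ * I))) := by
  have hFsum : ∀ θ : ℝ, F (Complex.exp (-(t + θ * I))) =
      ∑' n, a n * Complex.exp (-(t + θ * I)) ^ n :=
    fun θ => (hF _ (norm_exp_neg_lt_one (by simpa using ht))).tsum_eq.symm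
  simp_rw [hFsum]
  refine continuous_tsum (fun n => by fun_prop) (summable_norm_mul_exp_neg_pow hF ht)
    fun n θ => ?_
  rw [norm_mul, norm_pow, norm_exp_neg, re_add_mul_I]

lemma integral_mul_exp_neg_pow_mul_exp (c : ℂ) (t : ℝ) (n m : ℕ) :
    ∫ θ in (-π)..π, c * Complex.exp (-(t + θ * I)) ^ n * Complex.exp (m * (t + θ * I)) =
      if n = m then 2 * π * c else 0 := by
  have hexp : ∀ θ : ℝ,
      c * Complex.exp (-(t + θ * I)) ^ n * Complex.exp (m * (t + θ * I)) =
        c * Complex.exp ((m - n : ℤ) * t) * Complex.exp ((m - n : ℤ) * (θ * I)) := fun θ => by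
    rw [← Complex.exp_nat_mul, mul_assoc, mul_assoc, ← Complex.exp_add, ← Complex.exp_add]
    congr 2
    push_cast
    ring
  simp_rw [hexp]
  rw [intervalIntegral.integral_const_mul, integral_exp_int_mul_I]
  rcases eq_or_ne n m with rfl | hnm
  · simp [mul_comm]
  · simp [hnm, sub_eq_zero, hnm.symm]

lemma integral_comp_exp_neg_mul_exp
    (hF : ∀ q : ℂ, ‖q‖ < 1 → HasSum (fun n => a n * q ^ n) (F q)) (ht : 0 < t) (m : ℕ) :
    ∫ θ in (-π)..π, F (Complex.exp (-(t + θ * I))) * Complex.exp (m * (t + θ * I)) =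
      2 * π * a m := by
  have hsum := intervalIntegral.hasSum_integral_of_dominated_convergence (μ := volume)
    (a := -π) (b := π)
    (F := fun n (θ : ℝ) =>
      a n * Complex.exp (-(t + θ * I)) ^ n * Complex.exp (m * (t + θ * I)))
    (f := fun θ : ℝ => F (Complex.exp (-(t + θ * I))) * Complex.exp (m * (t + θ * I)))
    (fun n _ => ‖a n‖ * Real.exp (-t) ^ n * Real.exp (m * t))
    (fun n => Continuous.aestronglyMeasurable (by fun_prop))
    (fun n => .of_forall fun θ _ => by simp [Complex.norm_exp])
    (.of_forall fun θ _ => (summable_norm_mul_exp_neg_pow hF ht).mul_right _)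
    intervalIntegrable_const
    (.of_forall fun θ _ => (hF _ (norm_exp_neg_lt_one (by simpa using ht))).mul_right _)
  simp_rw [integral_mul_exp_neg_pow_mul_exp] at hsum
  simpa using hsum.unique (hasSum_single m fun n hn => if_neg hn)

end

/-- The integrand `q^(-k-ℓ) ∑ M(k, n) qⁿ`, `q = e^(-τ)`, of the Cauchy integral for `M(k, k + ℓ)`.
The parameter `ℓ` is the one for which the vertical line through `τ` meets the real axis in the
saddle point `τ = π / √(6ℓ)`, so that `ℓ = π² / (6 (Re τ)²)`. -/
noncomputable def crankIntegrand (k : ℕ) (τ : ℂ) : ℂ :=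
  (1 - Complex.exp (-τ)) * durfeeSum 2 k (Complex.exp (-τ)) *
    Complex.exp (π ^ 2 / (6 * τ.re ^ 2) * τ)

lemma crankIntegrand_eq_mul_exp (k : ℕ) (τ : ℂ) :
    crankIntegrand k τ =
      (1 - Complex.exp (-τ)) * Complex.exp (-τ) ^ k * durfeeSum 2 k (Complex.exp (-τ)) *
        Complex.exp ((k + π ^ 2 / (6 * τ.re ^ 2)) * τ) := by
  have hexp : Complex.exp (-τ) ^ k * Complex.exp ((k + π ^ 2 / (6 * τ.re ^ 2)) * τ) =
      Complex.exp (π ^ 2 / (6 * τ.re ^ 2) * τ) := by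
    rw [← Complex.exp_nat_mul, ← Complex.exp_add]
    congr 1
    ring
  rw [crankIntegrand, ← hexp]
  ring

lemma continuous_crankIntegrand {t : ℝ} (ht : 0 < t) (k : ℕ) :
    Continuous fun θ : ℝ => crankIntegrand k (t + θ * I) := by
  simp_rw [crankIntegrand_eq_mul_exp, re_add_mul_I]
  exact (continuous_comp_exp_neg (F := fun q => (1 - q) * q ^ k * durfeeSum 2 k q)
    (fun q hq => hasSum_crankM hq k) ht).mul (by fun_prop)

lemma integral_crankIntegrand {ℓ : ℕ} (hℓ : 0 < ℓ) (k : ℕ) :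
    ∫ θ in (-π)..π, crankIntegrand k ((π / √(6 * ℓ) : ℝ) + θ * I) =
      2 * π * ((crankM k (k + ℓ) : ℤ) : ℂ) := by
  have : (0 : ℝ) < ℓ := Nat.cast_pos.mpr hℓ
  have hexponent : π ^ 2 / (6 * (π / √(6 * ℓ)) ^ 2) = ℓ := by
    rw [div_pow, Real.sq_sqrt (by positivity)]
    field_simp
  rw [← integral_comp_exp_neg_mul_exp (F := fun q => (1 - q) * q ^ k * durfeeSum 2 k q)
    (fun q hq => hasSum_crankM hq k) (by positivity : 0 < π / √(6 * ℓ)) (k + ℓ)]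
  refine intervalIntegral.integral_congr fun θ _ => ?_
  have hexponent' : ((k + ℓ : ℕ) : ℂ) = k + π ^ 2 / (6 * (π / √(6 * ℓ) : ℝ) ^ 2) := by
    exact_mod_cast congrArg (fun x : ℝ => ((k + x : ℝ) : ℂ)) hexponent.symm
  rw [crankIntegrand_eq_mul_exp, re_add_mul_I, hexponent']

end CauchyIntegral

/-! ### The major arc -/

section MajorArc

/-- The leading-order value of `crankIntegrand k` at the saddle point `t` as `t → 0⁺`. -/
noncomputable def saddleValue (k : ℕ) (t : ℝ) : ℝ :=
  t * √(t / (2 * π)) * Real.exp (π ^ 2 / (3 * t)) / (1 + Real.exp (-(k * t))) ^ 2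

lemma exp_neg_natCast_mul_le_one (k : ℕ) {t : ℝ} (ht : 0 < t) : Real.exp (-(k * t)) ≤ 1 :=
  Real.exp_le_one_iff.mpr (neg_nonpos.mpr (by positivity))

lemma csqrt_ofReal_mul {a : ℝ} (ha : 0 < a) (z : ℂ) :
    Complex.sqrt (a * z) = √a * Complex.sqrt z := by
  rcases eq_or_ne z 0 with rfl | hz
  · simp
  have ha' : (a : ℂ) ≠ 0 := Complex.ofReal_ne_zero.mpr ha.ne'
  rw [sqrt_eq_exp hz, sqrt_eq_exp (mul_ne_zero ha' hz), Complex.log_ofReal_mul ha hz, add_div,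
    Complex.exp_add, Real.sqrt_eq_rpow, Real.rpow_def_of_pos ha]
  push_cast
  ring_nf

lemma durfeeSum_eq_normDurfeeSum_mul_inv (j k : ℕ) {q : ℂ} (hq : ‖q‖ < 1) :
    durfeeSum j k q = normDurfeeSum j k q * (eulerPhi q)⁻¹ := by
  rw [normDurfeeSum, mul_inv_cancel_right₀ (eulerPhi_ne_zero hq)]

section Cone

variable {τ : ℂ}

lemma crankIntegrand_div_saddleValue (hτ : 0 < τ.re) (k : ℕ) :
    crankIntegrand k τ / saddleValue k τ.re =
      (1 - Complex.exp (-τ)) / τ.re *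
        (normDurfeeSum 2 k (Complex.exp (-τ)) * (1 + Real.exp (-(k * τ.re))) ^ 2) *
        Complex.sqrt (τ / τ.re) * etaCorrection τ *
        Complex.exp (π ^ 2 / (6 * τ.re ^ 2) * ((τ - τ.re) ^ 2 / τ)) := by
  have hτ0 : τ ≠ 0 := fun h => by simp [h] at hτ
  have ht0 : (τ.re : ℂ) ≠ 0 := Complex.ofReal_ne_zero.mpr hτ.ne'
  have hsqrt : Complex.sqrt (τ / (2 * π)) = √(τ.re / (2 * π)) * Complex.sqrt (τ / τ.re) := by
    rw [← csqrt_ofReal_mul (by positivity)]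
    congr 1
    push_cast
    field_simp
  have hexponent : (π : ℂ) ^ 2 / (6 * τ) + π ^ 2 / (6 * τ.re ^ 2) * τ =
      π ^ 2 / (3 * τ.re) + π ^ 2 / (6 * τ.re ^ 2) * ((τ - τ.re) ^ 2 / τ) := by
    field_simp
    ring
  have hexp : Complex.exp (π ^ 2 / (6 * τ)) * Complex.exp (π ^ 2 / (6 * τ.re ^ 2) * τ) =
      (Real.exp (π ^ 2 / (3 * τ.re)) : ℂ) *
        Complex.exp (π ^ 2 / (6 * τ.re ^ 2) * ((τ - τ.re) ^ 2 / τ)) := by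
    rw [← Complex.exp_add, hexponent, Complex.exp_add]
    push_cast
    rfl
  have hroot : (√(τ.re / (2 * π)) : ℂ) ≠ 0 :=
    Complex.ofReal_ne_zero.mpr (Real.sqrt_pos.mpr (by positivity)).ne'
  rw [crankIntegrand, saddleValue,
    durfeeSum_eq_normDurfeeSum_mul_inv _ _ (norm_exp_neg_lt_one hτ), inv_eulerPhi_exp_neg hτ, hsqrt]
  calc _ = (1 - Complex.exp (-τ)) * normDurfeeSum 2 k (Complex.exp (-τ)) *
        (√(τ.re / (2 * π)) * Complex.sqrt (τ / τ.re) * etaCorrection τ) *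
        (Complex.exp (π ^ 2 / (6 * τ)) * Complex.exp (π ^ 2 / (6 * τ.re ^ 2) * τ)) /
        (τ.re * √(τ.re / (2 * π)) * Real.exp (π ^ 2 / (3 * τ.re)) /
          (1 + Real.exp (-(k * τ.re))) ^ 2 : ℝ) := by ring
    _ = _ := by
        rw [hexp, Complex.ofReal_div, Complex.ofReal_mul, Complex.ofReal_mul, Complex.ofReal_pow,
          Complex.ofReal_add, Complex.ofReal_one]
        field_simp

lemma exp_neg_pow_sub_exp_neg_mul_re_le (hτ : 0 < τ.re) (k : ℕ) :
    ‖Complex.exp (-τ) ^ k - Real.exp (-(k * τ.re))‖ ≤ |τ.im| / τ.re := by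
  have hpolar : Complex.exp (-τ) ^ k - Real.exp (-(k * τ.re)) =
      Real.exp (-(k * τ.re)) * (Complex.exp (I * ((-(k * τ.im) : ℝ) : ℂ)) - 1) := by
    rw [← Complex.exp_nat_mul, mul_sub, Complex.ofReal_exp, ← Complex.exp_add, mul_one]
    congr 2
    nth_rw 1 [← Complex.re_add_im τ]
    push_cast
    ring
  have hdecay : Real.exp (-(k * τ.re)) * (k * τ.re) ≤ 1 := by
    rw [Real.exp_neg, inv_mul_le_one₀ (Real.exp_pos _)]
    linarith [Real.add_one_le_exp (k * τ.re)]
  rw [hpolar, norm_mul, Complex.norm_of_nonneg (Real.exp_nonneg _)]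
  calc _ ≤ Real.exp (-(k * τ.re)) * ‖(-(k * τ.im) : ℝ)‖ := by
        gcongr
        exact Real.norm_exp_I_mul_ofReal_sub_one_le
    _ = Real.exp (-(k * τ.re)) * (k * τ.re) * (|τ.im| / τ.re) := by
        rw [norm_neg, norm_mul, Real.norm_natCast, Real.norm_eq_abs]
        field_simp
    _ ≤ 1 * (|τ.im| / τ.re) := by gcongr
    _ = _ := one_mul _

lemma norm_approxTwo_sub_approxTwo_ofReal_le {x : ℂ} {y : ℝ} (hx : ‖x‖ ≤ 1)
    (hx' : 1 / 2 ≤ ‖1 + x‖) (hy : 0 ≤ y) (hy1 : y ≤ 1) :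
    ‖approxTwo x - approxTwo y‖ ≤ 16 * ‖x - y‖ := by
  have hnorm : ‖(1 + y : ℂ)‖ = 1 + y := by
    rw [← Complex.norm_of_nonneg (by linarith : 0 ≤ 1 + y)]
    push_cast
    rfl
  have hx0 : 1 + x ≠ 0 := norm_pos_iff.mp (by linarith)
  have hy0 : (1 + y : ℂ) ≠ 0 := norm_pos_iff.mp (by linarith)
  have hfactor : approxTwo x - approxTwo y =
      (2 + x + y) * ((1 + x)⁻¹ ^ 2 * (1 + y : ℂ)⁻¹ ^ 2) * (y - x) := by
    rw [approxTwo, approxTwo]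
    field_simp
    ring
  have hsum : ‖2 + x + y‖ ≤ 4 := by
    refine norm_add₃_le.trans ?_
    rw [Complex.norm_of_nonneg hy, Complex.norm_ofNat]
    linarith
  have hinv : ‖(1 + x)⁻¹‖ ≤ 2 := norm_inv_le_two hx'
  have hinv' : ‖(1 + y : ℂ)⁻¹‖ ≤ 1 := by
    rw [norm_inv, hnorm]
    exact inv_le_one_of_one_le₀ (by linarith)
  rw [hfactor, norm_mul, norm_mul, norm_mul, norm_pow, norm_pow, norm_sub_rev (y : ℂ)]
  calc _ ≤ 4 * (2 ^ 2 * 1 ^ 2) * ‖x - y‖ := by gcongr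
    _ = _ := by ring

lemma norm_normDurfeeSum_two_mul_sub_one_le (hτ : τ ∈ majorCone) (hτ1 : τ.re ≤ 1 / 2) (k : ℕ) :
    ‖normDurfeeSum 2 k (Complex.exp (-τ)) * (1 + Real.exp (-(k * τ.re))) ^ 2 - 1‖ ≤
      (42240 * √τ.re + 16 * (|τ.im| / τ.re)) * 4 := by
  obtain ⟨ht, hcone⟩ := hτ
  have hy1 := exp_neg_natCast_mul_le_one k ht
  set y := Real.exp (-(k * τ.re))
  have hy : 0 < y := Real.exp_pos _
  have hy0 : (1 + y : ℂ) ≠ 0 := by exact_mod_cast (by linarith : 1 + y ≠ 0)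
  have hfactor : normDurfeeSum 2 k (Complex.exp (-τ)) * (1 + y) ^ 2 - 1 =
      (normDurfeeSum 2 k (Complex.exp (-τ)) - approxTwo y) * (1 + y) ^ 2 := by
    rw [sub_mul, approxTwo, inv_pow, inv_mul_cancel₀ (pow_ne_zero 2 hy0)]
  have hfour : ‖(1 + y : ℂ) ^ 2‖ ≤ 4 := by
    rw [norm_pow]
    calc _ ≤ (2 : ℝ) ^ 2 := by
          gcongr
          exact norm_one_add_le_two (by rwa [Complex.norm_of_nonneg hy.le])
      _ = 4 := by norm_num
  have hpow : ‖Complex.exp (-τ) ^ k‖ ≤ 1 := by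
    rw [norm_pow]
    exact pow_le_one₀ (norm_nonneg _) (norm_exp_neg_lt_one ht).le
  rw [hfactor, norm_mul]
  gcongr
  calc _ ≤ _ := norm_sub_le_norm_sub_add_norm_sub _ (approxTwo (Complex.exp (-τ) ^ k)) _
    _ ≤ _ := by
        gcongr
        · exact norm_normDurfeeSum_two_sub_approxTwo_le ht hτ1 hcone k
        · exact (norm_approxTwo_sub_approxTwo_ofReal_le hpow
            (one_half_le_norm_one_add_exp_neg_pow hcone k) hy.le hy1).trans
            (by gcongr; exact exp_neg_pow_sub_exp_neg_mul_re_le ht k)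

lemma sub_re_sq (τ : ℂ) : (τ - τ.re) ^ 2 = -(τ.im ^ 2 : ℝ) := by
  nth_rw 1 [← Complex.re_add_im τ]
  push_cast
  linear_combination (τ.im : ℂ) ^ 2 * Complex.I_sq

lemma norm_exp_mul_sub_re_sq_div_le (hτ : τ ∈ majorCone) :
    ‖Complex.exp (π ^ 2 / (6 * τ.re ^ 2) * ((τ - τ.re) ^ 2 / τ))‖ ≤
      Real.exp (-(π ^ 2 * τ.im ^ 2 / (12 * τ.re ^ 3))) := by
  have ht := hτ.1
  have hreal : (π : ℂ) ^ 2 / (6 * τ.re ^ 2) * ((τ - τ.re) ^ 2 / τ) =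
      ((-(π ^ 2 * τ.im ^ 2 / (6 * τ.re ^ 2)) : ℝ) : ℂ) * τ⁻¹ := by
    rw [sub_re_sq]
    push_cast
    ring
  rw [Complex.norm_exp, hreal, Complex.re_ofReal_mul, Real.exp_le_exp, neg_mul, neg_le_neg_iff]
  calc _ = π ^ 2 * τ.im ^ 2 / (6 * τ.re ^ 2) * (2 * τ.re)⁻¹ := by
        field_simp
        ring
    _ ≤ _ := by
        gcongr
        exact inv_two_mul_re_le_re_inv hτ

lemma norm_div_re_le_two (hτ : τ ∈ majorCone) : ‖τ / τ.re‖ ≤ 2 := by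
  rw [norm_div, Complex.norm_of_nonneg hτ.1.le, div_le_iff₀ hτ.1]
  exact norm_le_two_mul_re hτ.2

lemma norm_crankIntegrand_div_saddleValue_le (hτ : τ ∈ majorCone) (hτ1 : τ.re ≤ 1 / 2)
    (heta : ‖etaCorrection τ‖ ≤ 2) (k : ℕ) :
    ‖crankIntegrand k τ / saddleValue k τ.re‖ ≤
      4 * (42256 * 4 + 1) * 2 * 2 * Real.exp (-(π ^ 2 * τ.im ^ 2 / (12 * τ.re ^ 3))) := by
  have hone : ‖(1 - Complex.exp (-τ)) / τ.re‖ ≤ 4 := by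
    rw [norm_div, Complex.norm_of_nonneg hτ.1.le, div_le_iff₀ hτ.1]
    exact norm_one_sub_exp_neg_le hτ1 hτ.2
  have hsum : ‖normDurfeeSum 2 k (Complex.exp (-τ)) * (1 + Real.exp (-(k * τ.re))) ^ 2‖ ≤
      42256 * 4 + 1 := by
    have hsqrt : √τ.re ≤ 1 := Real.sqrt_le_one.mpr (by linarith)
    have hslope : |τ.im| / τ.re ≤ 1 := div_le_one_of_le₀ hτ.2 hτ.1.le
    have hdiff := norm_normDurfeeSum_two_mul_sub_one_le hτ hτ1 k
    have htri := norm_le_norm_add_norm_sub' (normDurfeeSum 2 k (Complex.exp (-τ)) *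
      (1 + Real.exp (-(k * τ.re))) ^ 2) (1 : ℂ)
    rw [norm_one] at htri
    linarith
  have hsqrt : ‖Complex.sqrt (τ / τ.re)‖ ≤ 2 := by
    rw [norm_csqrt, Real.sqrt_le_left zero_le_two]
    linarith [norm_div_re_le_two hτ]
  rw [crankIntegrand_div_saddleValue hτ.1, norm_mul, norm_mul, norm_mul, norm_mul]
  gcongr
  exact norm_exp_mul_sub_re_sq_div_le hτ

end Cone

lemma eventually_forall_re_eq_of_majorCone {P : ℂ → Prop} (hP : ∀ᶠ τ in 𝓝[majorCone] 0, P τ) :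
    ∀ᶠ t in 𝓝[>] (0 : ℝ), ∀ τ ∈ majorCone, τ.re = t → P τ := by
  obtain ⟨ε, hε, hball⟩ := Metric.mem_nhdsWithin_iff.mp hP
  filter_upwards [Ioo_mem_nhdsGT (half_pos hε)] with t ht τ hτ hre
  refine hball ⟨mem_ball_zero_iff.mpr ?_, hτ⟩
  linarith [norm_le_two_mul_re hτ.2, ht.2]

section Limits

variable {ι : Type*} {l : Filter ι} {τ : ι → ℂ}

lemma tendsto_im_div_re_zero {c : ℝ} (hre : Tendsto (fun i => (τ i).re) l (𝓝[>] 0))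
    (hgauss : Tendsto (fun i => π ^ 2 * (τ i).im ^ 2 / (6 * (τ i).re ^ 3)) l (𝓝 c)) :
    Tendsto (fun i => |(τ i).im| / (τ i).re) l (𝓝 0) := by
  obtain ⟨hre0, hpos⟩ := tendsto_nhdsWithin_iff.mp hre
  have hsq := (hgauss.mul (hre0.const_mul (6 / π ^ 2))).sqrt
  rw [mul_zero, mul_zero, Real.sqrt_zero] at hsq
  refine hsq.congr' ?_
  filter_upwards [hpos] with i (hi : 0 < (τ i).re)
  rw [← Real.sqrt_sq (by positivity : 0 ≤ |(τ i).im| / (τ i).re), div_pow, sq_abs]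
  congr 1
  field_simp

lemma tendsto_majorCone (hre : Tendsto (fun i => (τ i).re) l (𝓝[>] 0))
    (hslope : Tendsto (fun i => |(τ i).im| / (τ i).re) l (𝓝 0)) :
    Tendsto τ l (𝓝[majorCone] 0) := by
  obtain ⟨hre0, hpos⟩ := tendsto_nhdsWithin_iff.mp hre
  have hmem : ∀ᶠ i in l, τ i ∈ majorCone := by
    filter_upwards [hpos, hslope.eventually_le_const one_pos] with i hi hi'
    exact ⟨hi, (div_le_one hi).mp hi'⟩
  refine tendsto_nhdsWithin_iff.mpr ⟨squeeze_zero_norm' ?_ (by simpa using hre0.const_mul 2), hmem⟩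
  exact hmem.mono fun i hi => norm_le_two_mul_re hi.2

lemma tendsto_div_re_one (hre : Tendsto (fun i => (τ i).re) l (𝓝[>] 0))
    (hslope : Tendsto (fun i => |(τ i).im| / (τ i).re) l (𝓝 0)) :
    Tendsto (fun i => τ i / (τ i).re) l (𝓝 1) := by
  refine tendsto_iff_norm_sub_tendsto_zero.mpr (hslope.congr' ?_)
  filter_upwards [(tendsto_nhdsWithin_iff.mp hre).2] with i (hi : 0 < (τ i).re)
  have hsub : τ i / (τ i).re - 1 = (τ i).im * I / (τ i).re := by
    rw [div_sub_one (Complex.ofReal_ne_zero.mpr hi.ne')]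
    nth_rw 1 [← Complex.re_add_im (τ i)]
    rw [add_sub_cancel_left]
  rw [hsub, norm_div, norm_mul, Complex.norm_I, mul_one, Complex.norm_of_nonneg hi.le,
    Complex.norm_real, Real.norm_eq_abs]

lemma tendsto_one_sub_exp_neg_div_self :
    Tendsto (fun z : ℂ => (1 - Complex.exp (-z)) / z) (𝓝[≠] 0) (𝓝 1) := by
  have hderiv : HasDerivAt (fun z : ℂ => -Complex.exp (-z)) 1 0 := by
    simpa using (hasDerivAt_id' (0 : ℂ)).fun_neg.cexp.fun_neg
  refine hderiv.tendsto_slope.congr fun z => ?_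
  rw [slope_def_field, sub_zero, neg_zero, Complex.exp_zero, neg_sub_neg]

lemma tendsto_one_sub_exp_neg_div_re (hre : Tendsto (fun i => (τ i).re) l (𝓝[>] 0))
    (hslope : Tendsto (fun i => |(τ i).im| / (τ i).re) l (𝓝 0)) :
    Tendsto (fun i => (1 - Complex.exp (-τ i)) / (τ i).re) l (𝓝 1) := by
  have hne : ∀ᶠ i in l, τ i ≠ 0 := by
    filter_upwards [(tendsto_nhdsWithin_iff.mp hre).2] with i (hi : 0 < (τ i).re) h
    simp [h] at hi
  have hτ : Tendsto τ l (𝓝[≠] 0) := tendsto_nhdsWithin_iff.mpr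
    ⟨(tendsto_nhdsWithin_iff.mp (tendsto_majorCone hre hslope)).1, hne⟩
  have hlim := (tendsto_one_sub_exp_neg_div_self.comp hτ).mul (tendsto_div_re_one hre hslope)
  rw [one_mul] at hlim
  refine hlim.congr' ?_
  filter_upwards [hne] with i hi
  exact div_mul_div_cancel₀ hi

lemma tendsto_normDurfeeSum_two_mul (hre : Tendsto (fun i => (τ i).re) l (𝓝[>] 0))
    (hslope : Tendsto (fun i => |(τ i).im| / (τ i).re) l (𝓝 0)) (κ : ι → ℕ) :
    Tendsto (fun i => normDurfeeSum 2 (κ i) (Complex.exp (-τ i)) *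
      (1 + Real.exp (-(κ i * (τ i).re)) : ℂ) ^ 2) l (𝓝 1) := by
  have hre0 := (tendsto_nhdsWithin_iff.mp hre).1
  have hbound : Tendsto (fun i => (42240 * √(τ i).re + 16 * (|(τ i).im| / (τ i).re)) * 4) l
      (𝓝 0) := by
    simpa using ((hre0.sqrt.const_mul 42240).add (hslope.const_mul 16)).mul_const 4
  refine tendsto_iff_norm_sub_tendsto_zero.mpr (squeeze_zero' (.of_forall fun i => norm_nonneg _)
    ?_ hbound)
  filter_upwards [(tendsto_nhdsWithin_iff.mp (tendsto_majorCone hre hslope)).2,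
    hre0.eventually_le_const one_half_pos] with i hi hi'
  exact norm_normDurfeeSum_two_mul_sub_one_le hi hi' (κ i)

lemma tendsto_crankIntegrand_div_saddleValue {c : ℝ}
    (hre : Tendsto (fun i => (τ i).re) l (𝓝[>] 0))
    (hgauss : Tendsto (fun i => π ^ 2 * (τ i).im ^ 2 / (6 * (τ i).re ^ 3)) l (𝓝 c))
    (κ : ι → ℕ) :
    Tendsto (fun i => crankIntegrand (κ i) (τ i) / saddleValue (κ i) (τ i).re) l
      (𝓝 (Real.exp (-c) : ℝ)) := by
  have hslope := tendsto_im_div_re_zero hre hgauss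
  have hpos := (tendsto_nhdsWithin_iff.mp hre).2
  have hratio := tendsto_div_re_one hre hslope
  have hsqrt : Tendsto (fun i => Complex.sqrt (τ i / (τ i).re)) l (𝓝 1) := by
    have hcont := continuousAt_cpow_const (b := (2⁻¹ : ℂ)) Complex.one_mem_slitPlane
    simpa [Complex.sqrt, Function.comp_def] using hcont.tendsto.comp hratio
  have hexponent : Tendsto (fun i => (π : ℂ) ^ 2 / (6 * (τ i).re ^ 2) *
      ((τ i - (τ i).re) ^ 2 / τ i)) l (𝓝 (-(c : ℂ))) := by
    have hlim := ((Complex.continuous_ofReal.tendsto c).comp hgauss).neg.div hratio one_ne_zero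
    rw [div_one] at hlim
    refine hlim.congr' ?_
    filter_upwards [hpos] with i hi
    have : 0 < (τ i).re := hi
    simp only [Pi.div_apply, Function.comp_apply, sub_re_sq]
    push_cast
    field_simp
  have hexp : Tendsto (fun i => Complex.exp ((π : ℂ) ^ 2 / (6 * (τ i).re ^ 2) *
      ((τ i - (τ i).re) ^ 2 / τ i))) l (𝓝 (Real.exp (-c) : ℝ)) := by
    rw [Complex.ofReal_exp, Complex.ofReal_neg]
    exact hexponent.cexp
  have hlim := ((((tendsto_one_sub_exp_neg_div_re hre hslope).mul
    (tendsto_normDurfeeSum_two_mul hre hslope κ)).mul hsqrt).mul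
    (tendsto_etaCorrection.comp (tendsto_majorCone hre hslope))).mul hexp
  rw [one_mul, one_mul, one_mul, one_mul] at hlim
  refine hlim.congr' ?_
  filter_upwards [hpos] with i hi
  exact (crankIntegrand_div_saddleValue hi (κ i)).symm

end Limits

/-- The width of the Gaussian peak of `crankIntegrand` along the vertical line `Re τ = t`: at
`Im τ = saddleWidth t * v` the integrand has dropped by the factor `exp (-v²)`. -/
noncomputable def saddleWidth (t : ℝ) : ℝ := t * (√(6 * t) / π)

lemma saddleWidth_pos {t : ℝ} (ht : 0 < t) : 0 < saddleWidth t := by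
  rw [saddleWidth]
  positivity

lemma pi_sq_mul_saddleWidth_mul_sq_div {t : ℝ} (ht : 0 < t) (v : ℝ) :
    π ^ 2 * (saddleWidth t * v) ^ 2 / (6 * t ^ 3) = v ^ 2 := by
  rw [saddleWidth, mul_pow, mul_pow, div_pow, Real.sq_sqrt (by positivity)]
  field_simp

lemma tendsto_div_saddleWidth : Tendsto (fun t => t / saddleWidth t) (𝓝[>] 0) atTop := by
  have hsqrt : Tendsto (fun t => √(6 * t) / π) (𝓝[>] 0) (𝓝[>] 0) := by
    refine tendsto_nhdsWithin_iff.mpr ⟨?_, ?_⟩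
    · have hcont : Continuous fun t : ℝ => √(6 * t) / π := by fun_prop
      simpa using (hcont.tendsto 0).mono_left nhdsWithin_le_nhds
    · filter_upwards [self_mem_nhdsWithin] with t (ht : 0 < t)
      exact Set.mem_Ioi.mpr (by positivity)
  refine (tendsto_inv_nhdsGT_zero.comp hsqrt).congr' ?_
  filter_upwards [self_mem_nhdsWithin] with t (ht : 0 < t)
  rw [Function.comp_apply, saddleWidth, div_mul_cancel_left₀ ht.ne']

/-- The integrand of the Cauchy integral in the rescaled variable `v`, normalised by its value at
the saddle point and cut off outside the major arc `|Im τ| ≤ t`. -/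
noncomputable def rescaledIntegrand (k : ℕ) (t v : ℝ) : ℂ :=
  (Set.Ioc (-(t / saddleWidth t)) (t / saddleWidth t)).indicator
    (fun v : ℝ => crankIntegrand k (t + (saddleWidth t * v : ℝ) * I) / saddleValue k t) v

lemma integral_major_eq_integral_rescaledIntegrand {t : ℝ} (ht : 0 < t) (k : ℕ) :
    (∫ θ in (-t)..t, crankIntegrand k (t + θ * I)) / (saddleWidth t * saddleValue k t : ℝ) =
      ∫ v, rescaledIntegrand k t v := by
  have hσ := saddleWidth_pos ht
  have hσ' : (saddleWidth t : ℂ) ≠ 0 := Complex.ofReal_ne_zero.mpr hσ.ne'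
  have hsubst := intervalIntegral.smul_integral_comp_mul_left (a := -(t / saddleWidth t))
    (b := t / saddleWidth t) (fun θ : ℝ => crankIntegrand k (t + θ * I)) (saddleWidth t)
  rw [mul_neg, mul_div_cancel₀ _ hσ.ne'] at hsubst
  simp_rw [rescaledIntegrand]
  rw [integral_indicator measurableSet_Ioc,
    ← intervalIntegral.integral_of_le (neg_le_self (by positivity)),
    intervalIntegral.integral_div, ← hsubst, Complex.real_smul, Complex.ofReal_mul,
    mul_div_mul_left _ _ hσ']

lemma aestronglyMeasurable_rescaledIntegrand {t : ℝ} (ht : 0 < t) (k : ℕ) :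
    AEStronglyMeasurable (rescaledIntegrand k t) :=
  ((((continuous_crankIntegrand ht k).comp (continuous_const_mul (saddleWidth t))).div_const
    _).aestronglyMeasurable).indicator measurableSet_Ioc

lemma eventually_norm_rescaledIntegrand_le :
    ∃ C : ℝ, ∀ᶠ t in 𝓝[>] 0, ∀ (k : ℕ) (v : ℝ),
      ‖rescaledIntegrand k t v‖ ≤ C * Real.exp (-(1 / 2) * v ^ 2) := by
  have heta := eventually_forall_re_eq_of_majorCone
    (tendsto_etaCorrection.norm.eventually_le_const (show ‖(1 : ℂ)‖ < 2 by simp))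
  refine ⟨4 * (42256 * 4 + 1) * 2 * 2, ?_⟩
  filter_upwards [heta, Ioc_mem_nhdsGT one_half_pos] with t heta ⟨ht, ht1⟩ k v
  have hσ := saddleWidth_pos ht
  by_cases hv : v ∈ Set.Ioc (-(t / saddleWidth t)) (t / saddleWidth t)
  · set τ : ℂ := t + (saddleWidth t * v : ℝ) * I
    have hre : τ.re = t := re_add_mul_I _ _
    have him : τ.im = saddleWidth t * v := im_add_mul_I _ _
    have hτ : τ ∈ majorCone := by
      refine ⟨by rwa [hre], ?_⟩
      rw [hre, him, abs_mul, abs_of_pos hσ, ← le_div_iff₀' hσ]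
      exact abs_le.mpr ⟨hv.1.le, hv.2⟩
    have hbound := norm_crankIntegrand_div_saddleValue_le hτ (hre.trans_le ht1) (heta τ hτ hre) k
    have hexponent : π ^ 2 * (saddleWidth t * v) ^ 2 / (12 * t ^ 3) = 1 / 2 * v ^ 2 := by
      rw [← pi_sq_mul_saddleWidth_mul_sq_div ht v]
      ring
    rw [hre, him, hexponent, ← neg_mul] at hbound
    rwa [rescaledIntegrand, Set.indicator_of_mem hv]
  · rw [rescaledIntegrand, Set.indicator_of_notMem hv, norm_zero]
    positivity

lemma tendsto_rescaledIntegrand (v : ℝ) :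
    Tendsto (fun p : ℕ × ℝ => rescaledIntegrand p.1 p.2 v) (⊤ ×ˢ 𝓝[>] 0)
      (𝓝 (Real.exp (-v ^ 2) : ℝ)) := by
  have ht : Tendsto Prod.snd (⊤ ×ˢ 𝓝[>] 0 : Filter (ℕ × ℝ)) (𝓝[>] 0) := tendsto_snd
  have hpos : ∀ᶠ p : ℕ × ℝ in ⊤ ×ˢ 𝓝[>] 0, 0 < p.2 := (tendsto_nhdsWithin_iff.mp ht).2
  have hgauss : Tendsto (fun p : ℕ × ℝ => π ^ 2 * (saddleWidth p.2 * v) ^ 2 / (6 * p.2 ^ 3))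
      (⊤ ×ˢ 𝓝[>] 0) (𝓝 (v ^ 2)) :=
    tendsto_const_nhds.congr' (hpos.mono fun p hp => (pi_sq_mul_saddleWidth_mul_sq_div hp v).symm)
  have hlim := tendsto_crankIntegrand_div_saddleValue
    (τ := fun p : ℕ × ℝ => p.2 + (saddleWidth p.2 * v : ℝ) * I)
    (by simpa only [re_add_mul_I] using ht)
    (by simpa only [re_add_mul_I, im_add_mul_I] using hgauss) Prod.fst
  simp only [re_add_mul_I] at hlim
  refine hlim.congr' ?_
  filter_upwards [(tendsto_div_saddleWidth.comp ht).eventually (eventually_gt_atTop |v|)]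
    with p (hp : |v| < p.2 / saddleWidth p.2)
  have hv : v ∈ Set.Ioc (-(p.2 / saddleWidth p.2)) (p.2 / saddleWidth p.2) :=
    ⟨(abs_lt.mp hp).1, (abs_lt.mp hp).2.le⟩
  rw [rescaledIntegrand, Set.indicator_of_mem hv]

lemma tendsto_integral_major :
    Tendsto (fun p : ℕ × ℝ => (∫ θ in (-p.2)..p.2, crankIntegrand p.1 (p.2 + θ * I)) /
      (saddleWidth p.2 * saddleValue p.1 p.2 : ℝ)) (⊤ ×ˢ 𝓝[>] 0) (𝓝 (√π : ℝ)) := by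
  have ht : Tendsto Prod.snd (⊤ ×ˢ 𝓝[>] 0 : Filter (ℕ × ℝ)) (𝓝[>] 0) := tendsto_snd
  have hpos : ∀ᶠ p : ℕ × ℝ in ⊤ ×ˢ 𝓝[>] 0, 0 < p.2 := (tendsto_nhdsWithin_iff.mp ht).2
  have hgaussian : ∫ v : ℝ, ((Real.exp (-v ^ 2) : ℝ) : ℂ) = (√π : ℝ) := by
    rw [integral_complex_ofReal]
    simpa using congrArg ((↑) : ℝ → ℂ) (integral_gaussian 1)
  obtain ⟨C, hC⟩ := eventually_norm_rescaledIntegrand_le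
  have hlim : Tendsto (fun p : ℕ × ℝ => ∫ v, rescaledIntegrand p.1 p.2 v) (⊤ ×ˢ 𝓝[>] 0)
      (𝓝 (√π : ℝ)) := by
    rw [← hgaussian]
    refine tendsto_integral_filter_of_dominated_convergence
      (fun v => C * Real.exp (-(1 / 2) * v ^ 2)) ?_ ?_ ?_ (.of_forall tendsto_rescaledIntegrand)
    · exact hpos.mono fun p hp => aestronglyMeasurable_rescaledIntegrand hp p.1
    · exact (ht.eventually hC).mono fun p hp => .of_forall (hp p.1)
    · exact (integrable_exp_neg_mul_sq one_half_pos).const_mul C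
  refine hlim.congr' ?_
  filter_upwards [hpos] with p hp
  exact (integral_major_eq_integral_rescaledIntegrand hp p.1).symm

end MajorArc

/-! ### The saddle-point approximation -/

section SaddlePointApproximation

/-- The saddle-point approximation to the integral of `crankIntegrand k` over the vertical segment
`Re τ = t`, `|Im τ| ≤ π`. -/
noncomputable def saddleApprox (k : ℕ) (t : ℝ) : ℝ :=
  √3 / π * t ^ 3 * Real.exp (π ^ 2 / (3 * t)) / (1 + Real.exp (-(k * t))) ^ 2

lemma saddleApprox_pos (k : ℕ) {t : ℝ} (ht : 0 < t) : 0 < saddleApprox k t := by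
  rw [saddleApprox]
  positivity

lemma saddleWidth_mul_saddleValue_mul_sqrt_pi (k : ℕ) {t : ℝ} (ht : 0 < t) :
    saddleWidth t * saddleValue k t * √π = saddleApprox k t := by
  have hroots : √(6 * t) * √(t / (2 * π)) * √π = √3 * t := by
    rw [← Real.sqrt_mul (by positivity), ← Real.sqrt_mul (by positivity),
      ← Real.sqrt_sq ht.le, ← Real.sqrt_mul (by norm_num), Real.sqrt_sq ht.le]
    congr 1
    field_simp
    norm_num
  rw [saddleWidth, saddleValue, saddleApprox]
  calc _ = t ^ 2 * (√(6 * t) * √(t / (2 * π)) * √π) / π * Real.exp (π ^ 2 / (3 * t)) /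
        (1 + Real.exp (-(k * t))) ^ 2 := by ring
    _ = _ := by
        rw [hroots]
        ring

lemma le_saddleApprox (k : ℕ) {t : ℝ} (ht : 0 < t) :
    √3 / π * t ^ 3 * Real.exp (π ^ 2 / (3 * t)) / 4 ≤ saddleApprox k t := by
  rw [saddleApprox]
  gcongr
  calc (1 + Real.exp (-(k * t))) ^ 2 ≤ (1 + 1) ^ 2 := by
        gcongr
        exact exp_neg_natCast_mul_le_one k ht
    _ = 4 := by norm_num

lemma eventually_norm_crankIntegrand_minor_le :
    ∀ᶠ t in 𝓝[>] 0, ∀ (k : ℕ) (θ : ℝ), t ≤ |θ| → |θ| ≤ π →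
      ‖crankIntegrand k (t + θ * I)‖ ≤
        144 / t * (Real.exp (π ^ 2 / (3 * t)) * Real.exp (-(2 / 25 / t))) := by
  filter_upwards [eventually_norm_inv_eulerPhi_minor_le, Ioc_mem_nhdsGT one_pos]
    with t hphi ⟨ht, ht1⟩ k θ hlow hhigh
  set τ : ℂ := t + θ * I
  have hre : τ.re = t := re_add_mul_I t θ
  have him : τ.im = θ := im_add_mul_I t θ
  have hτ : 0 < τ.re := by rwa [hre]
  have hq := norm_exp_neg_lt_one hτ
  have hone : ‖1 - Complex.exp (-τ)‖ ≤ 2 := norm_one_sub_le_two hq.le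
  have hsum := norm_normDurfeeSum_two_le hτ (hre.trans_le ht1) k
  have hexp : ‖Complex.exp (π ^ 2 / (6 * t ^ 2) * τ)‖ = Real.exp (π ^ 2 / (6 * t)) := by
    have hreal : (π ^ 2 / (6 * t ^ 2) * τ : ℂ) = (π ^ 2 / (6 * t ^ 2) : ℝ) * τ := by push_cast; rfl
    rw [Complex.norm_exp, hreal, Complex.re_ofReal_mul, hre]
    congr 1
    field_simp
  have hphi := hphi τ hre (by rwa [him]) (by rwa [him])
  rw [hre] at hsum
  rw [crankIntegrand, durfeeSum_eq_normDurfeeSum_mul_inv _ _ hq, norm_mul, norm_mul, norm_mul,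
    hre, hexp]
  calc _ ≤ 2 * (36 / t * (2 * Real.exp (π ^ 2 / (6 * t) - 2 / 25 / t))) *
        Real.exp (π ^ 2 / (6 * t)) := by gcongr
    _ = 144 / t * (Real.exp (π ^ 2 / (6 * t)) * Real.exp (π ^ 2 / (6 * t)) *
          Real.exp (-(2 / 25 / t))) := by
        rw [sub_eq_add_neg, Real.exp_add]
        ring
    _ = _ := by
        rw [← Real.exp_add (π ^ 2 / (6 * t))]
        ring_nf

lemma norm_integral_sub_integral_le_of_norm_le {E : Type*} [NormedAddCommGroup E]
    [NormedSpace ℝ E] {f : ℝ → E} (hf : Continuous f) {a b B : ℝ} (ha : 0 ≤ a) (hab : a ≤ b)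
    (hB : ∀ x, a ≤ |x| → |x| ≤ b → ‖f x‖ ≤ B) :
    ‖(∫ x in (-b)..b, f x) - ∫ x in (-a)..a, f x‖ ≤ B * (b - a) + B * (b - a) := by
  have hint (c d : ℝ) : IntervalIntegrable f volume c d := hf.intervalIntegrable c d
  have hleft : ‖∫ x in (-b)..(-a), f x‖ ≤ B * (b - a) := by
    rw [← abs_of_nonneg (sub_nonneg.mpr hab), ← neg_sub_neg]
    refine intervalIntegral.norm_integral_le_of_norm_le_const fun x hx => ?_
    rw [Set.uIoc_of_le (neg_le_neg hab)] at hx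
    have habs : |x| = -x := abs_of_nonpos (by linarith [hx.2])
    exact hB x (by linarith [hx.2]) (by linarith [hx.1])
  have hright : ‖∫ x in a..b, f x‖ ≤ B * (b - a) := by
    rw [← abs_of_nonneg (sub_nonneg.mpr hab)]
    refine intervalIntegral.norm_integral_le_of_norm_le_const fun x hx => ?_
    rw [Set.uIoc_of_le hab] at hx
    have habs : |x| = x := abs_of_nonneg (by linarith [hx.1])
    exact hB x (by linarith [hx.1]) (by linarith [hx.2])
  have hsplit : (∫ x in (-b)..b, f x) - ∫ x in (-a)..a, f x =
      (∫ x in (-b)..(-a), f x) + ∫ x in a..b, f x := by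
    rw [← intervalIntegral.integral_add_adjacent_intervals (hint (-b) a) (hint a b),
      ← intervalIntegral.integral_add_adjacent_intervals (hint (-b) (-a)) (hint (-a) a)]
    abel
  rw [hsplit]
  exact (norm_add_le _ _).trans (add_le_add hleft hright)

lemma eventually_norm_integral_minor_le :
    ∃ C : ℝ, ∀ᶠ t : ℝ in 𝓝[>] 0, ∀ k : ℕ,
      ‖((∫ θ in (-π)..π, crankIntegrand k (t + θ * I)) -
        ∫ θ in (-t)..t, crankIntegrand k (t + θ * I)) / saddleApprox k t‖ ≤
        C * ((2 / 25 / t) ^ 4 * Real.exp (-(2 / 25 / t))) := by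
  refine ⟨4 * (144 * π + 144 * π) / (√3 / π) * (25 / 2) ^ 4, ?_⟩
  filter_upwards [eventually_norm_crankIntegrand_minor_le, Ioc_mem_nhdsGT Real.pi_pos]
    with t hminor ⟨ht, htpi⟩ k
  have hdiff := norm_integral_sub_integral_le_of_norm_le (continuous_crankIntegrand ht k) ht.le htpi
    (hminor k)
  set B := 144 / t * (Real.exp (π ^ 2 / (3 * t)) * Real.exp (-(2 / 25 / t))) with hB
  have : 0 ≤ B := by positivity
  rw [norm_div, Complex.norm_of_nonneg (saddleApprox_pos k ht).le]
  calc _ ≤ (B * π + B * π) / (√3 / π * t ^ 3 * Real.exp (π ^ 2 / (3 * t)) / 4) := by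
        gcongr
        · refine hdiff.trans ?_
          gcongr <;> linarith
        · exact le_saddleApprox k ht
    _ = _ := by
        rw [hB]
        field_simp

lemma tendsto_integral_minor :
    Tendsto (fun p : ℕ × ℝ => ((∫ θ in (-π)..π, crankIntegrand p.1 (p.2 + θ * I)) -
      ∫ θ in (-p.2)..p.2, crankIntegrand p.1 (p.2 + θ * I)) / saddleApprox p.1 p.2)
      (⊤ ×ˢ 𝓝[>] 0) (𝓝 0) := by
  obtain ⟨C, hC⟩ := eventually_norm_integral_minor_le
  have hinv : Tendsto (fun t : ℝ => 2 / 25 / t) (𝓝[>] 0) atTop :=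
    (tendsto_inv_nhdsGT_zero.const_mul_atTop (by norm_num)).congr fun t =>
      (div_eq_mul_inv _ _).symm
  have hzero := ((Real.tendsto_pow_mul_exp_neg_atTop_nhds_zero 4).comp
    (hinv.comp (tendsto_snd (f := (⊤ : Filter ℕ))))).const_mul C
  rw [mul_zero] at hzero
  exact squeeze_zero_norm' ((tendsto_snd.eventually hC).mono fun p hp => hp p.1) hzero

lemma tendsto_integral_crankIntegrand_div_saddleApprox :
    Tendsto (fun p : ℕ × ℝ => (∫ θ in (-π)..π, crankIntegrand p.1 (p.2 + θ * I)) /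
      saddleApprox p.1 p.2) (⊤ ×ˢ 𝓝[>] 0) (𝓝 1) := by
  have hroot : ((√π : ℝ) : ℂ) ≠ 0 :=
    Complex.ofReal_ne_zero.mpr (Real.sqrt_pos.mpr Real.pi_pos).ne'
  have hlim := tendsto_integral_minor.add (tendsto_integral_major.div_const ((√π : ℝ) : ℂ))
  rw [div_self hroot, zero_add] at hlim
  refine hlim.congr' ?_
  have hpos : ∀ᶠ p : ℕ × ℝ in ⊤ ×ˢ 𝓝[>] 0, 0 < p.2 := (tendsto_nhdsWithin_iff.mp tendsto_snd).2
  filter_upwards [hpos] with p hp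
  rw [div_div, ← Complex.ofReal_mul, saddleWidth_mul_saddleValue_mul_sqrt_pi p.1 hp, ← add_div,
    sub_add_cancel]

/-- The claimed leading term of `M(k, k + ℓ)`. -/
noncomputable def crankMainTerm (k ℓ : ℕ) : ℝ :=
  π / (12 * √2) * (Real.exp (2 * π * √(ℓ / 6)) / (ℓ : ℝ) ^ ((3 : ℝ) / 2)) /
    (1 + Real.exp (-(π * k) / √(6 * ℓ))) ^ 2

lemma saddleApprox_pi_div_sqrt (k : ℕ) {ℓ : ℕ} (hℓ : 0 < ℓ) :
    saddleApprox k (π / √(6 * ℓ)) = 2 * π * crankMainTerm k ℓ := by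
  have hℓ' : (0 : ℝ) < ℓ := Nat.cast_pos.mpr hℓ
  have hexponent : π ^ 2 / (3 * (π / √(6 * ℓ))) = 2 * π * √(ℓ / 6) := by
    have hroot : √((ℓ : ℝ) / 6) = √(6 * ℓ) / 6 := by
      rw [show (ℓ : ℝ) / 6 = 6 * ℓ / 6 ^ 2 by ring, Real.sqrt_div' _ (by norm_num),
        Real.sqrt_sq (by norm_num)]
    rw [hroot]
    field_simp
    norm_num
  have hcube : √(6 * ℓ) ^ 3 = 6 * √2 * √3 * (ℓ : ℝ) ^ ((3 : ℝ) / 2) := by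
    have hrpow : (ℓ : ℝ) ^ ((3 : ℝ) / 2) = ℓ * √ℓ := by
      rw [show (3 : ℝ) / 2 = 1 + 1 / 2 by norm_num, Real.rpow_add hℓ', Real.rpow_one,
        ← Real.sqrt_eq_rpow]
    rw [pow_succ, Real.sq_sqrt (by positivity), Real.sqrt_mul (by norm_num), hrpow,
      show (6 : ℝ) = 2 * 3 by norm_num, Real.sqrt_mul (by norm_num)]
    ring
  have hweight : -(k * (π / √(6 * ℓ))) = -(π * k) / √(6 * ℓ) := by ring
  rw [saddleApprox, crankMainTerm, hexponent, hweight, div_pow, hcube]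
  field_simp
  norm_num

lemma tendsto_pi_div_sqrt : Tendsto (fun ℓ : ℕ => π / √(6 * ℓ)) atTop (𝓝[>] 0) := by
  refine tendsto_nhdsWithin_iff.mpr ⟨?_, ?_⟩
  · exact (Real.tendsto_sqrt_atTop.comp
      (tendsto_natCast_atTop_atTop.const_mul_atTop (by norm_num))).const_div_atTop _
  · filter_upwards [eventually_gt_atTop 0] with ℓ hℓ
    have : (0 : ℝ) < ℓ := Nat.cast_pos.mpr hℓ
    exact Set.mem_Ioi.mpr (by positivity)

lemma tendsto_crankM_div_crankMainTerm :
    Tendsto (fun p : ℕ × ℕ => (crankM p.1 (p.1 + p.2) : ℝ) / crankMainTerm p.1 p.2) (⊤ ×ˢ atTop)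
      (𝓝 1) := by
  have hlim := tendsto_integral_crankIntegrand_div_saddleApprox.comp
    ((tendsto_fst (f := ⊤) (g := atTop)).prodMk (tendsto_pi_div_sqrt.comp tendsto_snd))
  refine ((Complex.continuous_re.tendsto 1).comp hlim).congr' ?_
  filter_upwards [tendsto_snd.eventually (eventually_gt_atTop 0)] with p hp
  have hcast : 2 * π * ((crankM p.1 (p.1 + p.2) : ℤ) : ℂ) =
      (2 * π * crankM p.1 (p.1 + p.2) : ℝ) := by
    push_cast
    rfl
  simp only [Function.comp_apply]
  rw [integral_crankIntegrand hp, saddleApprox_pi_div_sqrt p.1 hp, hcast, ← Complex.ofReal_div,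
    Complex.ofReal_re, mul_div_mul_left _ _ Real.two_pi_pos.ne']

end SaddlePointApproximation

end CrankAsymptotic

open Real in
/-- uniformly for integers `ℓ, k ≥ 0`, as `ℓ → ∞`,
`M(k, k+ℓ) ~ (π/(12√2)) · (1 + e^{-πk/√(6ℓ)})⁻² · e^{2π√(ℓ/6)}/ℓ^{3/2}`. -/
theorem crankM_asymptotic :
    ∀ ε > (0 : ℝ), ∃ L₀ : ℕ, ∀ k ℓ : ℕ, L₀ ≤ ℓ →
      |(crankM (k : ℤ) (k + ℓ) : ℝ) /
          (π / (12 * Real.sqrt 2) *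
            (Real.exp (2 * π * Real.sqrt ((ℓ : ℝ) / 6)) / (ℓ : ℝ) ^ ((3 : ℝ) / 2)) /
            (1 + Real.exp (-(π * k) / Real.sqrt (6 * ℓ))) ^ 2) - 1| < ε := by
  intro ε hε
  have hlim := Metric.tendsto_nhds.mp CrankAsymptotic.tendsto_crankM_div_crankMainTerm ε hε
  rw [Filter.top_prod, Filter.eventually_comap] at hlim
  obtain ⟨L₀, hL₀⟩ := Filter.eventually_atTop.mp hlim
  exact ⟨L₀, fun k ℓ hℓ => hL₀ ℓ hℓ (k, ℓ) rfl⟩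
end

section
/- The cubic partition function satisfies c(n) ~ e^{π√n}/(8 n^{5/4}) as the integer n → ∞; that is, the ratio c(n)/(e^{π√n}/(8 n^{5/4})) tends to 1. -/
open Finset

/-!
With `q = exp (-s)`, the generating function `F s = 1 / ((q; q)_∞ (q²; q²)_∞)` is the reciprocal of
an eta product, so the inversion `η (-1 / z) = √(z / i) η z` gives
`F s ∼ (√2 / 2π) s exp (π² / 4s)` as `s → 0` in any Stolz angle `|Im s| ≤ κ Re s`. Outside the
angle, `‖1 - q‖` exceeds `1 - ‖q‖` by a constant factor; comparing `log F` with its value at `‖q‖`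
term by term, this makes `F` smaller than at `‖q‖` by a factor `exp (-δ / Re s)`. In Cauchy's
integral for `c n` along `Re s = π / (2√n)`, the saddle point of `π² / 4s + n s`, only the Stolz
angle therefore contributes, and there the rescaled integrand converges to a Gaussian.
-/

section GeneratingFunctions

open Filter Topology

/-- A multiset supported on `insert a s` is a multiplicity for `a` together with a multiset
supported on `s`. -/
def multisetInsertEquiv {ι : Type*} [DecidableEq ι] {a : ι} {s : Finset ι} (ha : a ∉ s) :
    ℕ × {m : Multiset ι // ∀ i ∈ m, i ∈ s} ≃ {m : Multiset ι // ∀ i ∈ m, i ∈ insert a s} where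
  toFun p := ⟨Multiset.replicate p.1 a + p.2.1, fun i hi => by
    rcases Multiset.mem_add.mp hi with hi | hi
    · exact Multiset.eq_of_mem_replicate hi ▸ mem_insert_self a s
    · exact mem_insert_of_mem (p.2.2 i hi)⟩
  invFun m := (m.1.count a, ⟨m.1.filter (· ≠ a), fun i hi =>
    (mem_insert.mp (m.2 i (Multiset.mem_of_mem_filter hi))).resolve_left
      (Multiset.mem_filter.mp hi).2⟩)
  left_inv := by
    rintro ⟨k, m, hm⟩
    have ham : a ∉ m := fun h => ha (hm a h)
    have hfilter : m.filter (· ≠ a) = m :=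
      Multiset.filter_eq_self.mpr fun i hi h => ham (h ▸ hi)
    simpa [Multiset.count_eq_zero_of_notMem ham, hfilter] using
      fun i => Multiset.eq_of_mem_replicate
  right_inv m := Subtype.ext <| by
    simp only [← Multiset.filter_eq' m.1 a]
    exact Multiset.filter_add_not _ _

variable {ι 𝕜 : Type*} [NormedField 𝕜] {x : ι → 𝕜}

lemma hasSum_prod_map_multiset_finset [CompleteSpace 𝕜] (hx : ∀ i, ‖x i‖ < 1)
    (s : Finset ι) :
    Summable (fun m : {m : Multiset ι // ∀ i ∈ m, i ∈ s} => ‖(m.1.map x).prod‖) ∧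
      HasSum (fun m : {m : Multiset ι // ∀ i ∈ m, i ∈ s} => (m.1.map x).prod)
        (∏ i ∈ s, (1 - x i)⁻¹) := by
  classical
  induction s using Finset.induction_on with
  | empty =>
    have : Unique {m : Multiset ι // ∀ i ∈ m, i ∈ (∅ : Finset ι)} :=
      ⟨⟨⟨0, by simp⟩⟩, fun m => Subtype.ext <|
        Multiset.eq_zero_of_forall_notMem fun i hi => notMem_empty i (m.2 i hi)⟩
    refine ⟨(hasSum_fintype _).summable, ?_⟩
    have hdefault : (default : {m : Multiset ι // ∀ i ∈ m, i ∈ (∅ : Finset ι)}).1 = 0 :=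
      congrArg Subtype.val (Subsingleton.elim _ ⟨0, by simp⟩)
    simpa [hdefault] using
      hasSum_unique fun m : {m : Multiset ι // ∀ i ∈ m, i ∈ (∅ : Finset ι)} => (m.1.map x).prod
  | insert a s ha ih =>
    have hgeom : Summable fun k : ℕ => ‖x a ^ k‖ := by
      simpa only [norm_pow] using summable_geometric_of_lt_one (norm_nonneg _) (hx a)
    have hsplit (p) : ((multisetInsertEquiv ha p).1.map x).prod =
        x a ^ p.1 * (p.2.1.map x).prod := by
      simp [multisetInsertEquiv]
    rw [← (multisetInsertEquiv ha).summable_iff, ← (multisetInsertEquiv ha).hasSum_iff,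
      prod_insert ha]
    simp only [Function.comp_def, hsplit]
    have hprod := hgeom.mul_norm ih.1
    have hmul := (hasSum_geometric_of_norm_lt_one (hx a)).mul ih.2 hprod.of_norm
    exact ⟨hprod, hmul⟩

lemma tprod_one_sub_ne_zero [CompleteSpace 𝕜] (hx : ∀ i, ‖x i‖ < 1)
    (hsum : Summable fun i => ‖x i‖) : ∏' i, (1 - x i) ≠ 0 := by
  have hne (i : ι) : 1 + -x i ≠ 0 := fun h => by
    have : x i = 1 := by linear_combination -h
    simpa [this] using hx i
  simpa only [sub_eq_add_neg] using
    tprod_one_add_ne_zero_of_summable hne (by simpa only [norm_neg] using hsum)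

lemma hasProd_inv_one_sub [CompleteSpace 𝕜] (hx : ∀ i, ‖x i‖ < 1)
    (hsum : Summable fun i => ‖x i‖) :
    HasProd (fun i => (1 - x i)⁻¹) (∏' i, (1 - x i))⁻¹ := by
  have hsum' : Summable fun i => ‖-x i‖ := by simpa only [norm_neg] using hsum
  have hprod := (multipliable_one_add_of_summable hsum').hasProd
  simp only [← sub_eq_add_neg] at hprod
  exact hprod.inv₀ (tprod_one_sub_ne_zero hx hsum)

lemma summable_norm_prod_map_multiset (hx : ∀ i, ‖x i‖ < 1) (hsum : Summable fun i => ‖x i‖) :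
    Summable fun m : Multiset ι => ‖(m.map x).prod‖ := by
  classical
  have hx' (i : ι) : ‖‖x i‖‖ < 1 := by simpa using hx i
  have hmono : Monotone fun s : Finset ι => ∏ i ∈ s, (1 - ‖x i‖)⁻¹ := fun s t hst =>
    prod_le_prod_of_subset_of_one_le hst (fun i _ => inv_nonneg.mpr (by linarith [hx i]))
      fun i _ _ => (one_le_inv₀ (by linarith [hx i])).mpr (by linarith [norm_nonneg (x i)])
  refine summable_of_sum_le (fun _ => norm_nonneg _) (c := (∏' i, (1 - ‖x i‖))⁻¹) fun u => ?_
  set s := u.biUnion Multiset.toFinset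
  have hus (m) (hm : m ∈ u) : ∀ i ∈ m, i ∈ s := fun i hi =>
    mem_biUnion.mpr ⟨m, hm, Multiset.mem_toFinset.mpr hi⟩
  have hnorm (m : Multiset ι) : ‖(m.map x).prod‖ = (m.map (‖x ·‖)).prod := by
    simpa using map_multiset_prod (normHom : 𝕜 →*₀ ℝ) (m.map x)
  calc ∑ m ∈ u, ‖(m.map x).prod‖
      = ∑ m ∈ u.subtype (fun m => ∀ i ∈ m, i ∈ s), (m.1.map (‖x ·‖)).prod := by
        simp only [hnorm]
        rw [sum_subtype_of_mem (fun m => (m.map (‖x ·‖)).prod) hus]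
    _ ≤ ∏ i ∈ s, (1 - ‖x i‖)⁻¹ :=
        sum_le_hasSum _ (fun m _ => hnorm m.1 ▸ norm_nonneg _)
          (hasSum_prod_map_multiset_finset hx' s).2
    _ ≤ (∏' i, (1 - ‖x i‖))⁻¹ :=
        hmono.ge_of_tendsto (hasProd_inv_one_sub hx' (by simpa using hsum)) s

lemma hasSum_prod_map_multiset [CompleteSpace 𝕜] (hx : ∀ i, ‖x i‖ < 1)
    (hsum : Summable fun i => ‖x i‖) :
    HasSum (fun m : Multiset ι => (m.map x).prod) (∏' i, (1 - x i))⁻¹ := by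
  have hnorm := summable_norm_prod_map_multiset hx hsum
  let f (s : Finset ι) := {m : Multiset ι | ∀ i ∈ m, i ∈ s}.indicator fun m => (m.map x).prod
  have hpartial (s : Finset ι) : ∑' m, f s m = ∏ i ∈ s, (1 - x i)⁻¹ := by
    rw [← (hasSum_prod_map_multiset_finset hx s).2.tsum_eq]
    exact (tsum_subtype {m : Multiset ι | ∀ i ∈ m, i ∈ s} fun m => (m.map x).prod).symm
  have hlim : Tendsto (fun s => ∑' m, f s m) atTop (𝓝 (∑' m : Multiset ι, (m.map x).prod)) := by
    classical
    refine tendsto_tsum_of_dominated_convergence hnorm (fun m => ?_)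
      (.of_forall fun s m => norm_indicator_le_norm_self _ _)
    refine tendsto_const_nhds.congr' ?_
    filter_upwards [eventually_ge_atTop m.toFinset] with s hs
    have hm : m ∈ {m : Multiset ι | ∀ i ∈ m, i ∈ s} := fun i hi => hs (Multiset.mem_toFinset.mpr hi)
    exact (Set.indicator_of_mem hm fun m => (m.map x).prod).symm
  simp only [hpartial] at hlim
  exact tendsto_nhds_unique hlim (hasProd_inv_one_sub hx hsum) ▸ hnorm.of_norm.hasSum


/-- The Euler function `(q; q)_∞ = ∏ (1 - q ^ k)` over `k ≥ 1`, used for `‖q‖ < 1`, where the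
product converges. -/
noncomputable def eulerFunction (q : ℂ) : ℂ := ∏' k : ℕ, (1 - q ^ (k + 1))

/-- The function `1 / ((q; q)_∞ (q²; q²)_∞)`, whose Taylor coefficients count cubic partitions. -/
noncomputable def cubicGenFun (q : ℂ) : ℂ := (eulerFunction q)⁻¹ * (eulerFunction (q ^ 2))⁻¹

lemma norm_pow_succ_lt_one {q : ℂ} (hq : ‖q‖ < 1) (k : ℕ) : ‖q ^ (k + 1)‖ < 1 :=
  (norm_pow q _).trans_lt (pow_lt_one₀ (norm_nonneg q) hq k.succ_ne_zero)

lemma summable_norm_pow_succ {q : ℂ} (hq : ‖q‖ < 1) : Summable fun k : ℕ => ‖q ^ (k + 1)‖ := by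
  simpa only [norm_pow] using
    (summable_nat_add_iff 1).mpr (summable_geometric_of_lt_one (norm_nonneg q) hq)

lemma prod_map_pow_succ (q : ℂ) (m : Multiset ℕ) :
    (m.map fun k => q ^ (k + 1)).prod = q ^ (m.map (· + 1)).sum := by
  induction m using Multiset.induction_on with
  | empty => simp
  | cons k m ih =>
    rw [Multiset.map_cons, Multiset.prod_cons, ih, Multiset.map_cons, Multiset.sum_cons,
      ← pow_add]

lemma summable_norm_pow_sum_map_succ {q : ℂ} (hq : ‖q‖ < 1) :
    Summable fun m : Multiset ℕ => ‖q ^ (m.map (· + 1)).sum‖ := by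
  simpa only [prod_map_pow_succ] using
    summable_norm_prod_map_multiset (norm_pow_succ_lt_one hq) (summable_norm_pow_succ hq)

lemma hasSum_pow_sum_map_succ {q : ℂ} (hq : ‖q‖ < 1) :
    HasSum (fun m : Multiset ℕ => q ^ (m.map (· + 1)).sum) (eulerFunction q)⁻¹ := by
  simpa only [prod_map_pow_succ, eulerFunction] using
    hasSum_prod_map_multiset (norm_pow_succ_lt_one hq) (summable_norm_pow_succ hq)

lemma cubicPartition_eq_card_pairs (n : ℕ) :
    cubicPartition n = Nat.card {p : Multiset ℕ × Multiset ℕ //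
      (p.1.map (· + 1)).sum + 2 * (p.2.map (· + 1)).sum = n} := by
  have hsucc : Function.Injective fun k : ℕ => k + 1 := add_left_injective 1
  have hdouble : Function.Injective fun k : ℕ => 2 * (k + 1) :=
    (mul_right_injective₀ two_ne_zero).comp hsucc
  let toParts (p : {p : Multiset ℕ × Multiset ℕ //
      (p.1.map (· + 1)).sum + 2 * (p.2.map (· + 1)).sum = n}) :
      {p : Multiset ℕ × Multiset ℕ //
        (∀ i ∈ p.1, 0 < i) ∧ (∀ i ∈ p.2, 0 < i ∧ Even i) ∧ p.1.sum + p.2.sum = n} :=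
    ⟨(p.1.1.map (· + 1), p.1.2.map fun k => 2 * (k + 1)), by simp, by simp, by
      simpa only [Multiset.sum_map_mul_left] using p.2⟩
  refine (Nat.card_congr (Equiv.ofBijective toParts ⟨fun p p' h => ?_, ?_⟩)).symm
  · have hpair := Prod.ext_iff.mp (congrArg Subtype.val h)
    exact Subtype.ext <| Prod.ext (Multiset.map_injective hsucc hpair.1)
      (Multiset.map_injective hdouble hpair.2)
  · rintro ⟨⟨m, m'⟩, hm, hm', hn⟩
    have hsub : (m.map (· - 1)).map (· + 1) = m := by
      rw [Multiset.map_map]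
      exact (Multiset.map_congr rfl fun i hi => Nat.sub_add_cancel (hm i hi)).trans m.map_id
    have hhalf : (m'.map (· / 2 - 1)).map (fun k => 2 * (k + 1)) = m' := by
      rw [Multiset.map_map]
      refine (Multiset.map_congr rfl fun i hi => ?_).trans m'.map_id
      obtain ⟨hpos, j, rfl⟩ := hm' i hi
      simp only [Function.comp_apply, id_eq]
      omega
    refine ⟨⟨(m.map (· - 1), m'.map (· / 2 - 1)), ?_⟩, Subtype.ext (Prod.ext hsub hhalf)⟩
    rw [← Multiset.sum_map_mul_left, hsub, hhalf]
    exact hn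

lemma hasSum_cubicPartition_mul_pow {q : ℂ} (hq : ‖q‖ < 1) :
    HasSum (fun n : ℕ => (cubicPartition n : ℂ) * q ^ n) (cubicGenFun q) := by
  have hq2 : ‖q ^ 2‖ < 1 := norm_pow_succ_lt_one hq 1
  have hprod := summable_mul_of_summable_norm (summable_norm_pow_sum_map_succ hq)
    (summable_norm_pow_sum_map_succ hq2)
  have hpairs := (hasSum_pow_sum_map_succ hq).mul (hasSum_pow_sum_map_succ hq2) hprod
  simp only [← pow_mul, ← pow_add] at hpairs
  let size (p : Multiset ℕ × Multiset ℕ) := (p.1.map (· + 1)).sum + 2 * (p.2.map (· + 1)).sum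
  have hfibers := (Equiv.sigmaFiberEquiv size).hasSum_iff.mpr hpairs
  refine hfibers.sigma fun n => ?_
  have hfiber := (hfibers.summable.sigma_factor n).hasSum
  have hconst (p : {p // size p = n}) : q ^ size p.1 = q ^ n := by rw [p.2]
  have htsum := (tsum_congr hconst).trans (tsum_const _)
  rw [nsmul_eq_mul] at htsum
  rw [cubicPartition_eq_card_pairs]
  exact htsum ▸ hfiber

end GeneratingFunctions

section CoefficientExtraction

open Complex MeasureTheory

variable {a : ℕ → ℂ} {F : ℂ → ℂ}

lemma norm_mul_cexp_neg_pow (σ θ : ℝ) (m : ℕ) :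
    ‖a m * cexp (-(σ + θ * I)) ^ m‖ = ‖a m * cexp (-σ) ^ m‖ := by
  simp [norm_exp]

lemma continuous_of_hasSum_cexp_neg
    (hF : ∀ s : ℂ, 0 < s.re → HasSum (fun m => a m * cexp (-s) ^ m) (F s)) {σ : ℝ} (hσ : 0 < σ) :
    Continuous fun θ : ℝ => F (σ + θ * I) := by
  have htsum (θ : ℝ) : F (σ + θ * I) = ∑' m, a m * cexp (-(σ + θ * I)) ^ m :=
    (hF _ (by simpa using hσ)).tsum_eq.symm
  simp only [htsum]
  exact continuous_tsum (fun m => by fun_prop) (hF σ (by simpa using hσ)).summable.norm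
    fun m θ => (norm_mul_cexp_neg_pow σ θ m).le

lemma integral_cexp_int_mul_I (k : ℤ) :
    ∫ θ in (-Real.pi)..Real.pi, cexp (k * I * θ) = if k = 0 then (2 * Real.pi : ℂ) else 0 := by
  split_ifs with hk
  · simp [hk, two_mul]
  · have hk' : (k : ℂ) * I ≠ 0 := mul_ne_zero (by exact_mod_cast hk) I_ne_zero
    have hperiod : cexp (k * I * (Real.pi : ℝ)) = cexp (k * I * (-Real.pi : ℝ)) :=
      exp_eq_exp_iff_exists_int.mpr ⟨k, by push_cast; ring⟩
    rw [integral_exp_mul_complex hk', hperiod, sub_self, zero_div]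

lemma integral_mul_cexp_eq_coeff
    (hF : ∀ s : ℂ, 0 < s.re → HasSum (fun m => a m * cexp (-s) ^ m) (F s)) {σ : ℝ} (hσ : 0 < σ)
    (n : ℕ) :
    ∫ θ in (-Real.pi)..Real.pi, F (σ + θ * I) * cexp (n * (σ + θ * I)) = 2 * Real.pi * a n := by
  have hexchange := intervalIntegral.hasSum_integral_of_dominated_convergence
    (a := -Real.pi) (b := Real.pi) (μ := volume)
    (F := fun m (θ : ℝ) => a m * cexp (-(σ + θ * I)) ^ m * cexp (n * (σ + θ * I)))
    (f := fun θ : ℝ => F (σ + θ * I) * cexp (n * (σ + θ * I)))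
    (fun m _ => ‖a m * cexp (-σ) ^ m‖ * Real.exp (n * σ))
    (fun m => Continuous.aestronglyMeasurable (by fun_prop))
    (fun m => .of_forall fun θ _ => by
      rw [norm_mul, norm_mul_cexp_neg_pow, norm_exp]
      simp)
    (.of_forall fun θ _ => (hF σ (by simpa using hσ)).summable.norm.mul_right _)
    (by simp)
    (.of_forall fun θ _ => (hF _ (by simpa using hσ)).mul_right _)
  have hterm (m : ℕ) (θ : ℝ) : a m * cexp (-(σ + θ * I)) ^ m * cexp (n * (σ + θ * I)) =
      a m * cexp ((n - m) * σ) * cexp (((n - m : ℤ) : ℂ) * I * θ) := by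
    rw [← exp_nat_mul, mul_assoc, mul_assoc, ← exp_add, ← exp_add]
    push_cast
    ring_nf
  simp only [hterm, intervalIntegral.integral_const_mul, integral_cexp_int_mul_I] at hexchange
  have hsingle := hasSum_single (f := fun m : ℕ => a m * cexp ((n - m) * σ) *
    if (n - m : ℤ) = 0 then (2 * Real.pi : ℂ) else 0) n fun m hm => by
      rw [if_neg (by omega), mul_zero]
  rw [hexchange.unique hsingle]
  simp only [sub_self, zero_mul, exp_zero, mul_one, ↓reduceIte]
  ring

end CoefficientExtraction

section Laplace

open Complex Filter MeasureTheory Topology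

lemma norm_cexp_neg_sq_div_le {t v κ : ℝ} (ht : 0 ≤ t) (hv : v ∈ Set.Icc (-κ) κ) :
    ‖cexp (-(t * v ^ 2 / (1 + v * I)))‖ ≤ Real.exp (-(1 + κ ^ 2)⁻¹ * (t * v ^ 2)) := by
  have hre : (-(t * v ^ 2 / (1 + v * I)) : ℂ).re = -(1 + v ^ 2)⁻¹ * (t * v ^ 2) := by
    have hcast : (t * v ^ 2 : ℂ) = ((t * v ^ 2 : ℝ) : ℂ) := by push_cast; rfl
    rw [hcast, neg_re, div_eq_mul_inv, re_ofReal_mul, inv_re]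
    simp only [add_re, one_re, mul_re, ofReal_re, I_re, mul_zero, ofReal_im, I_im, mul_one,
      sub_self, add_zero, normSq_apply, add_im, one_im, mul_im, zero_add, one_div, neg_mul, neg_inj]
    ring
  have hsq : v ^ 2 ≤ κ ^ 2 := sq_le_sq' hv.1 hv.2
  rw [norm_exp, hre]
  gcongr

variable {g : ℝ → ℝ → ℂ} {κ M : ℝ} {α : ℂ}

lemma sqrt_mul_integral_eq_integral_indicator {G : ℝ → ℂ} {t : ℝ} (ht : 0 < t) (hκ : 0 ≤ κ) :
    √t * ∫ v in (-κ)..κ, G v =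
      ∫ x, (Set.Ioc (-(κ * √t)) (κ * √t)).indicator (fun x => G (x / √t)) x := by
  have hsqrt : √t ≠ 0 := (Real.sqrt_pos.mpr ht).ne'
  have hle : -(κ * √t) ≤ κ * √t := neg_le_self (by positivity)
  rw [integral_indicator measurableSet_Ioc, ← intervalIntegral.integral_of_le hle,
    intervalIntegral.integral_comp_div G hsqrt, neg_div, mul_div_cancel_right₀ κ hsqrt, real_smul]

lemma mul_div_sqrt_sq {t : ℝ} (ht : 0 < t) (x : ℝ) : t * (x / √t) ^ 2 = x ^ 2 := by
  rw [div_pow, Real.sq_sqrt ht.le, mul_div_cancel₀ _ ht.ne']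

lemma tendsto_mul_cexp_comp_div_sqrt
    (hlim : Tendsto (fun p : ℝ × ℝ => g p.1 p.2) (atTop ×ˢ 𝓝 0) (𝓝 α)) (x : ℝ) :
    Tendsto (fun t : ℝ => g t (x / √t) *
      cexp (-(t * (x / √t : ℝ) ^ 2 / (1 + (x / √t : ℝ) * I)))) atTop (𝓝 (α * cexp (-x ^ 2))) := by
  have hx : Tendsto (fun t : ℝ => x / √t) atTop (𝓝 0) :=
    tendsto_const_nhds.div_atTop Real.tendsto_sqrt_atTop
  have hden : Tendsto (fun t : ℝ => (1 + (x / √t : ℝ) * I : ℂ)) atTop (𝓝 1) := by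
    simpa using ((continuous_ofReal.tendsto 0).comp hx).mul_const I |>.const_add 1
  have hexp : Tendsto (fun t : ℝ => cexp (-(x ^ 2 / (1 + (x / √t : ℝ) * I)))) atTop
      (𝓝 (cexp (-x ^ 2))) := by
    simpa using ((tendsto_const_nhds (x := (x : ℂ) ^ 2)).div hden one_ne_zero).neg.cexp
  refine ((hlim.comp (tendsto_id.prodMk hx)).mul hexp).congr' ?_
  filter_upwards [eventually_gt_atTop 0] with t ht
  have hsq : (t : ℂ) * (x / √t : ℝ) ^ 2 = x ^ 2 := by exact_mod_cast mul_div_sqrt_sq ht x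
  simp only [Function.comp_apply, id_eq, hsq]

lemma div_sqrt_mem_Icc {t x : ℝ} (ht : 0 < t) (hx : x ∈ Set.Ioc (-(κ * √t)) (κ * √t)) :
    x / √t ∈ Set.Icc (-κ) κ := by
  have hsqrt : 0 < √t := Real.sqrt_pos.mpr ht
  rw [Set.mem_Icc, le_div_iff₀ hsqrt, div_le_iff₀ hsqrt, neg_mul]
  exact ⟨hx.1.le, hx.2⟩

lemma tendsto_sqrt_mul_integral_mul_cexp (hκ : 0 < κ)
    (hcont : ∀ᶠ t in atTop, ContinuousOn (g t) (Set.Icc (-κ) κ))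
    (hbound : ∀ᶠ t in atTop, ∀ v ∈ Set.Icc (-κ) κ, ‖g t v‖ ≤ M)
    (hlim : Tendsto (fun p : ℝ × ℝ => g p.1 p.2) (atTop ×ˢ 𝓝 0) (𝓝 α)) :
    Tendsto (fun t : ℝ => √t * ∫ v in (-κ)..κ, g t v * cexp (-(t * v ^ 2 / (1 + v * I))))
      atTop (𝓝 (α * √Real.pi)) := by
  let G (t v : ℝ) : ℂ := g t v * cexp (-(t * v ^ 2 / (1 + v * I)))
  have hgauss : α * √Real.pi = ∫ x : ℝ, α * cexp (-x ^ 2) := by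
    have h := integral_gaussian 1
    rw [div_one] at h
    rw [integral_const_mul, ← h, ← integral_complex_ofReal]
    simp
  rw [hgauss]
  refine (tendsto_integral_filter_of_dominated_convergence
    (F := fun t => (Set.Ioc (-(κ * √t)) (κ * √t)).indicator fun x => G t (x / √t))
    (fun x => M * Real.exp (-(1 + κ ^ 2)⁻¹ * x ^ 2)) ?_ ?_ ?_ ?_).congr' ?_
  · filter_upwards [eventually_gt_atTop 0, hcont] with t ht hgt
    have hne (v : ℝ) : (1 + v * I : ℂ) ≠ 0 := fun h => by simpa using congrArg re h
    have hG : ContinuousOn (G t) (Set.Icc (-κ) κ) :=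
      hgt.mul (Continuous.continuousOn (by fun_prop (disch := exact hne)))
    exact (aestronglyMeasurable_indicator_iff measurableSet_Ioc).mpr
      ((hG.comp (by fun_prop) fun x => div_sqrt_mem_Icc ht).aestronglyMeasurable measurableSet_Ioc)
  · filter_upwards [eventually_gt_atTop 0, hbound] with t ht hgt
    have hM : 0 ≤ M := (norm_nonneg _).trans (hgt 0 ⟨by linarith, hκ.le⟩)
    refine .of_forall fun x => ?_
    rw [norm_indicator_eq_indicator_norm]
    refine Set.indicator_apply_le' (fun hx => ?_) fun _ => by positivity
    have hv := div_sqrt_mem_Icc ht hx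
    rw [norm_mul, ← mul_div_sqrt_sq ht x]
    exact mul_le_mul (hgt _ hv) (norm_cexp_neg_sq_div_le ht.le hv) (norm_nonneg _) hM
  · exact (integrable_exp_neg_mul_sq (by positivity)).const_mul M
  · refine .of_forall fun x => (tendsto_mul_cexp_comp_div_sqrt hlim x).congr' ?_
    filter_upwards [(Real.tendsto_sqrt_atTop.const_mul_atTop hκ).eventually_gt_atTop |x|] with t ht
    exact (Set.indicator_of_mem (Set.Ioo_subset_Ioc_self (abs_lt.mp ht))
      fun x => G t (x / √t)).symm
  · filter_upwards [eventually_gt_atTop 0] with t ht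
    exact (sqrt_mul_integral_eq_integral_indicator ht hκ.le).symm

end Laplace

section Wright

open Complex Filter MeasureTheory Topology

/-- The Stolz angle `|Im s| ≤ κ Re s` in the open right half-plane. Its points are the exponents
`s` for which `q = exp (-s)` approaches `1` nontangentially as `s → 0`. -/
def stolzAngle (κ : ℝ) : Set ℂ := {s | 0 < s.re ∧ |s.im| ≤ κ * s.re}

/-- The integrand `F s * exp ((t² / A) s)` of the Cauchy integral along `s = A / t + θ I`. If
`F s` grows like `exp (A / s)`, the saddle point of `A / s + (t² / A) s` is `s = A / t`, where the
exponent is `2 t`. -/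
noncomputable def saddleIntegrand (F : ℂ → ℂ) (A t θ : ℝ) : ℂ :=
  F ((A / t : ℝ) + θ * I) * cexp ((t ^ 2 / A : ℝ) * ((A / t : ℝ) + θ * I))

lemma ofReal_mul_cpow {x : ℝ} (hx : 0 < x) {w : ℂ} (hw : w ≠ 0) (r : ℂ) :
    (x * w) ^ r = (x : ℂ) ^ r * w ^ r := by
  have hx' : (x : ℂ) ≠ 0 := ofReal_ne_zero.mpr hx.ne'
  rw [cpow_def_of_ne_zero (mul_ne_zero hx' hw), cpow_def_of_ne_zero hx', cpow_def_of_ne_zero hw,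
    log_ofReal_mul hx hw, ofReal_log hx.le, add_mul, exp_add]

lemma one_add_mul_I_ne_zero (v : ℝ) : (1 + v * I : ℂ) ≠ 0 := fun h => by
  simpa using congrArg re h

lemma continuous_one_add_mul_I_cpow (r : ℂ) : Continuous fun v : ℝ => (1 + v * I : ℂ) ^ r :=
  Continuous.cpow (by fun_prop) continuous_const fun v => .inl (by simp)

variable {a : ℕ → ℂ} {F : ℂ → ℂ} {A β κ δ C : ℝ} {α : ℂ}

lemma tendsto_div_mul_one_add_mul_I (hA : 0 < A) :
    Tendsto (fun p : ℝ × ℝ => (A / p.1 : ℝ) * (1 + p.2 * I : ℂ)) (atTop ×ˢ 𝓟 (Set.Icc (-κ) κ))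
      (𝓝[stolzAngle κ] 0) := by
  have hpos : ∀ᶠ p : ℝ × ℝ in atTop ×ˢ 𝓟 (Set.Icc (-κ) κ), 0 < p.1 ∧ p.2 ∈ Set.Icc (-κ) κ :=
    (eventually_gt_atTop 0).prod_mk (mem_principal_self _)
  refine tendsto_nhdsWithin_iff.mpr ⟨?_, ?_⟩
  · have hscale : Tendsto (fun p : ℝ × ℝ => A / p.1 * (1 + κ)) (atTop ×ˢ 𝓟 (Set.Icc (-κ) κ))
        (𝓝 0) := by
      simpa using ((tendsto_const_nhds (x := A)).div_atTop tendsto_fst).mul_const (1 + κ)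
    refine squeeze_zero_norm' ?_ hscale
    filter_upwards [hpos] with p ⟨hp, hv⟩
    have hnorm : ‖(1 + p.2 * I : ℂ)‖ ≤ 1 + κ := (norm_add_le _ _).trans <| by
      simpa using abs_le.mpr hv
    rw [norm_mul, norm_real, Real.norm_of_nonneg (by positivity)]
    gcongr
  · filter_upwards [hpos] with p ⟨hp, hv⟩
    have hσ : 0 < A / p.1 := by positivity
    refine ⟨by simpa using hσ, ?_⟩
    simpa [abs_of_pos hσ, abs_mul, mul_comm κ] using
      mul_le_mul_of_nonneg_left (abs_le.mpr hv) hσ.le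

/- With `s = (A / t) w` and `w = 1 + v I` the exponent is `A / s + t w - 2 t = -t v² / w`. -/
lemma rpow_mul_exp_mul_eq_div_mul_cexp (hA : 0 < A) {t : ℝ} (ht : 0 < t) (v : ℝ) :
    ((A / t) ^ (-β) * Real.exp (-2 * t) : ℝ) *
        (F ((A / t : ℝ) * (1 + v * I)) * cexp (t * (1 + v * I))) =
      F ((A / t : ℝ) * (1 + v * I)) / (((A / t : ℝ) * (1 + v * I)) ^ (β : ℂ) *
          cexp (A / ((A / t : ℝ) * (1 + v * I)))) * (1 + v * I) ^ (β : ℂ) *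
        cexp (-(t * v ^ 2 / (1 + v * I))) := by
  have hσ : 0 < A / t := by positivity
  have hw := one_add_mul_I_ne_zero v
  have hwβ : (1 + v * I : ℂ) ^ (β : ℂ) ≠ 0 := cpow_ne_zero_iff.mpr (.inl hw)
  have hexp : cexp (-(t * v ^ 2 / (1 + v * I))) =
      cexp (A / ((A / t : ℝ) * (1 + v * I))) * (cexp (-2 * t) * cexp (t * (1 + v * I))) := by
    have hA' : (A : ℂ) ≠ 0 := ofReal_ne_zero.mpr hA.ne'
    have ht' : (t : ℂ) ≠ 0 := ofReal_ne_zero.mpr ht.ne'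
    rw [← exp_add, ← exp_add]
    congr 1
    push_cast
    field_simp
    linear_combination (-v ^ 2 : ℂ) * I_sq
  have hpow : (((A / t) ^ (-β) : ℝ) : ℂ) = (((A / t : ℝ) : ℂ) ^ (β : ℂ))⁻¹ := by
    rw [Real.rpow_neg hσ.le, ofReal_inv, ofReal_cpow hσ.le]
  rw [hexp, ofReal_mul, hpow, ofReal_mul_cpow hσ hw, ofReal_exp]
  push_cast
  field_simp

lemma continuous_comp_mul_one_add_mul_I {σ : ℝ}
    (hF : Continuous fun θ : ℝ => F (σ + θ * I)) :
    Continuous fun v : ℝ => F (σ * (1 + v * I)) := by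
  have hs (v : ℝ) : (σ * (1 + v * I) : ℂ) = σ + (σ * v : ℝ) * I := by push_cast; ring
  simpa only [hs, Function.comp_def] using hF.comp (continuous_const_mul σ)

lemma continuous_div_cpow_mul_cexp {σ : ℝ} (hσ : 0 < σ)
    (hF : Continuous fun θ : ℝ => F (σ + θ * I)) :
    Continuous fun v : ℝ => F (σ * (1 + v * I)) /
      ((σ * (1 + v * I)) ^ (β : ℂ) * cexp (A / (σ * (1 + v * I)))) := by
  have hs (v : ℝ) : (σ * (1 + v * I) : ℂ) ≠ 0 :=
    mul_ne_zero (ofReal_ne_zero.mpr hσ.ne') (one_add_mul_I_ne_zero v)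
  have hpow : Continuous fun v : ℝ => (σ * (1 + v * I) : ℂ) ^ (β : ℂ) :=
    Continuous.cpow (by fun_prop) continuous_const fun v => .inl (by simpa using hσ)
  have hexp : Continuous fun v : ℝ => cexp (A / (σ * (1 + v * I))) := by
    fun_prop (disch := exact hs)
  exact (continuous_comp_mul_one_add_mul_I hF).div (hpow.mul hexp) fun v =>
    mul_ne_zero (cpow_ne_zero_iff.mpr (.inl (hs v))) (exp_ne_zero _)

lemma tendsto_major_arc (hA : 0 < A) (hκ : 0 < κ)
    (hF : ∀ σ : ℝ, 0 < σ → Continuous fun θ : ℝ => F (σ + θ * I))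
    (hmajor : Tendsto (fun s => F s / (s ^ (β : ℂ) * cexp (A / s))) (𝓝[stolzAngle κ] 0) (𝓝 α)) :
    Tendsto (fun t : ℝ => (√t * ((A / t) ^ (-β) * Real.exp (-2 * t)) : ℝ) *
        ∫ v in (-κ)..κ, F ((A / t : ℝ) * (1 + v * I)) * cexp (t * (1 + v * I)))
      atTop (𝓝 (α * √Real.pi)) := by
  let R (s : ℂ) : ℂ := F s / (s ^ (β : ℂ) * cexp (A / s))
  let g (t v : ℝ) : ℂ := R ((A / t : ℝ) * (1 + v * I)) * (1 + v * I) ^ (β : ℂ)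
  have hR : Tendsto (fun p : ℝ × ℝ => R ((A / p.1 : ℝ) * (1 + p.2 * I)))
      (atTop ×ˢ 𝓟 (Set.Icc (-κ) κ)) (𝓝 α) := hmajor.comp (tendsto_div_mul_one_add_mul_I hA)
  obtain ⟨B, hB⟩ := isCompact_Icc.exists_bound_of_continuousOn (s := Set.Icc (-κ) κ)
    (continuous_one_add_mul_I_cpow β).continuousOn
  have hcont : ∀ᶠ t in atTop, ContinuousOn (g t) (Set.Icc (-κ) κ) := by
    filter_upwards [eventually_gt_atTop 0] with t ht
    have hσ : 0 < A / t := by positivity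
    exact ((continuous_div_cpow_mul_cexp hσ (hF _ hσ)).mul
      (continuous_one_add_mul_I_cpow β)).continuousOn
  have hbound : ∀ᶠ t in atTop, ∀ v ∈ Set.Icc (-κ) κ, ‖g t v‖ ≤ (‖α‖ + 1) * B := by
    have hev := hR.norm.eventually_le_const (lt_add_one ‖α‖)
    rw [eventually_prod_principal_iff] at hev
    filter_upwards [hev] with t ht v hv
    exact (norm_mul _ _).trans_le (mul_le_mul (ht v hv) (hB v hv) (norm_nonneg _) (by positivity))
  have hlim : Tendsto (fun p : ℝ × ℝ => g p.1 p.2) (atTop ×ˢ 𝓝 0) (𝓝 α) := by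
    have hnhds : 𝓝 (0 : ℝ) ≤ 𝓟 (Set.Icc (-κ) κ) :=
      le_principal_iff.mpr (Icc_mem_nhds (by linarith) hκ)
    simpa [g] using (hR.mono_left (prod_mono le_rfl hnhds)).mul
      (((continuous_one_add_mul_I_cpow β).tendsto 0).comp tendsto_snd)
  refine (tendsto_sqrt_mul_integral_mul_cexp hκ hcont hbound hlim).congr' ?_
  filter_upwards [eventually_gt_atTop 0] with t ht
  rw [ofReal_mul, mul_assoc, ← intervalIntegral.integral_const_mul ((_ * _ : ℝ) : ℂ)]
  simp only [rpow_mul_exp_mul_eq_div_mul_cexp hA ht, g, R]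

lemma norm_integral_sub_integral_le {G : ℝ → ℂ} (hG : Continuous G) {b c B : ℝ} (hc : 0 ≤ c)
    (hcb : c ≤ b) (hB : ∀ θ, c ≤ |θ| → |θ| ≤ b → ‖G θ‖ ≤ B) :
    ‖(∫ θ in (-b)..b, G θ) - ∫ θ in (-c)..c, G θ‖ ≤ 2 * b * B := by
  have hGint (x y : ℝ) : IntervalIntegrable G volume x y := hG.intervalIntegrable x y
  have hB0 : 0 ≤ B := (norm_nonneg _).trans (hB c (le_abs_self c) (by rwa [abs_of_nonneg hc]))
  have hsplit : (∫ θ in (-b)..b, G θ) - ∫ θ in (-c)..c, G θ =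
      (∫ θ in (-b)..(-c), G θ) + ∫ θ in c..b, G θ := by
    rw [← intervalIntegral.integral_add_adjacent_intervals (hGint (-b) (-c)) (hGint (-c) b),
      ← intervalIntegral.integral_add_adjacent_intervals (hGint (-c) c) (hGint c b)]
    ring
  have hleft : ‖∫ θ in (-b)..(-c), G θ‖ ≤ B * |-c - -b| :=
    intervalIntegral.norm_integral_le_of_norm_le_const fun θ hθ => by
      rw [Set.uIoc_of_le (by linarith)] at hθ
      have habs : |θ| = -θ := abs_of_nonpos (by linarith [hθ.2])
      exact hB θ (by linarith [hθ.2]) (by linarith [hθ.1])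
  have hright : ‖∫ θ in c..b, G θ‖ ≤ B * |b - c| :=
    intervalIntegral.norm_integral_le_of_norm_le_const fun θ hθ => by
      rw [Set.uIoc_of_le hcb] at hθ
      have habs : |θ| = θ := abs_of_nonneg (by linarith [hθ.1])
      exact hB θ (by linarith [hθ.1]) (by linarith [hθ.2])
  rw [abs_of_nonneg (by linarith)] at hleft hright
  rw [hsplit]
  nlinarith [norm_add_le (∫ θ in (-b)..(-c), G θ) (∫ θ in c..b, G θ), mul_nonneg hc hB0]

lemma sqrt_mul_div_rpow_neg (hA : 0 < A) {t : ℝ} (ht : 0 < t) (γ : ℝ) :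
    √t * (A / t) ^ (-γ) = A ^ (-γ) * t ^ (γ + 1 / 2) := by
  rw [Real.div_rpow hA.le ht.le, Real.rpow_neg ht.le, div_inv_eq_mul, Real.sqrt_eq_rpow,
    Real.rpow_add ht]
  ring

lemma continuous_saddleIntegrand (hA : 0 < A) {t : ℝ} (ht : 0 < t)
    (hF : ∀ σ : ℝ, 0 < σ → Continuous fun θ : ℝ => F (σ + θ * I)) :
    Continuous (saddleIntegrand F A t) :=
  (hF (A / t) (div_pos hA ht)).mul (by fun_prop)

lemma norm_saddleIntegrand (hA : A ≠ 0) {t : ℝ} (ht : t ≠ 0) (θ : ℝ) :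
    ‖saddleIntegrand F A t θ‖ = ‖F ((A / t : ℝ) + θ * I)‖ * Real.exp t := by
  have hre : t ^ 2 / A * (A / t) = t := by field_simp
  rw [saddleIntegrand, norm_mul, norm_exp, re_ofReal_mul]
  simp [hre]

lemma integral_saddleIntegrand_eq (hA : A ≠ 0) {t : ℝ} (ht : t ≠ 0) :
    ∫ θ in (-(κ * (A / t)))..(κ * (A / t)), saddleIntegrand F A t θ =
      (A / t : ℝ) * ∫ v in (-κ)..κ, F ((A / t : ℝ) * (1 + v * I)) * cexp (t * (1 + v * I)) := by
  have hA' : (A : ℂ) ≠ 0 := ofReal_ne_zero.mpr hA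
  have ht' : (t : ℂ) ≠ 0 := ofReal_ne_zero.mpr ht
  have hcomp (v : ℝ) : saddleIntegrand F A t (v * (A / t)) =
      F ((A / t : ℝ) * (1 + v * I)) * cexp (t * (1 + v * I)) := by
    have hs : ((A / t : ℝ) + (v * (A / t) : ℝ) * I : ℂ) = (A / t : ℝ) * (1 + v * I) := by
      push_cast
      ring
    have hexp : ((t ^ 2 / A : ℝ) * ((A / t : ℝ) * (1 + v * I)) : ℂ) = t * (1 + v * I) := by
      push_cast
      field_simp
    rw [saddleIntegrand, hs, hexp]
  have hsubst := intervalIntegral.smul_integral_comp_mul_right (a := -κ) (b := κ)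
    (saddleIntegrand F A t) (A / t)
  simp only [hcomp] at hsubst
  rw [← neg_mul, ← hsubst, real_smul]

lemma tendsto_minor_arc (hA : 0 < A) (hκ : 0 < κ) (hδ : 0 < δ)
    (hF : ∀ σ : ℝ, 0 < σ → Continuous fun θ : ℝ => F (σ + θ * I))
    (hminor : ∀ᶠ σ in 𝓝[>] (0 : ℝ), ∀ θ : ℝ, κ * σ ≤ |θ| → |θ| ≤ Real.pi →
      ‖F (σ + θ * I)‖ ≤ C * Real.exp ((A - δ) / σ)) :
    Tendsto (fun t : ℝ => (√t * (A / t) ^ (-(β + 1)) * Real.exp (-2 * t) : ℝ) *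
        ((∫ θ in (-Real.pi)..Real.pi, saddleIntegrand F A t θ) -
          ∫ θ in (-(κ * (A / t)))..(κ * (A / t)), saddleIntegrand F A t θ))
      atTop (𝓝 0) := by
  have hσ : Tendsto (fun t : ℝ => A / t) atTop (𝓝[>] 0) :=
    tendsto_nhdsWithin_iff.mpr ⟨tendsto_const_nhds.div_atTop tendsto_id,
      (eventually_gt_atTop 0).mono fun t ht => div_pos hA ht⟩
  have hsmall : ∀ᶠ σ in 𝓝[>] (0 : ℝ), κ * σ ≤ Real.pi := by
    have h : Tendsto (fun σ : ℝ => κ * σ) (𝓝 0) (𝓝 0) := by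
      simpa using (continuous_const_mul κ).tendsto 0
    exact (h.mono_left nhdsWithin_le_nhds).eventually_le_const Real.pi_pos
  have hdecay : Tendsto (fun t : ℝ => 2 * Real.pi * C * A ^ (-(β + 1)) *
      (t ^ (β + 1 + 1 / 2) * Real.exp (-(δ / A) * t))) atTop (𝓝 0) := by
    simpa using (tendsto_rpow_mul_exp_neg_mul_atTop_nhds_zero (β + 1 + 1 / 2) (δ / A)
      (by positivity)).const_mul (2 * Real.pi * C * A ^ (-(β + 1)))
  refine squeeze_zero_norm' ?_ hdecay
  filter_upwards [eventually_gt_atTop 0, hσ.eventually hminor, hσ.eventually hsmall]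
    with t ht hminor_t hsmall_t
  have harc := norm_integral_sub_integral_le (continuous_saddleIntegrand hA ht hF)
    (by positivity) hsmall_t (B := C * Real.exp ((A - δ) / (A / t)) * Real.exp t)
    fun θ h₁ h₂ => (norm_saddleIntegrand hA.ne' ht.ne' θ).trans_le (by
      gcongr
      exact hminor_t θ h₁ h₂)
  have hexp : Real.exp (-2 * t) * (Real.exp ((A - δ) / (A / t)) * Real.exp t) =
      Real.exp (-(δ / A) * t) := by
    rw [← Real.exp_add, ← Real.exp_add]
    congr 1
    field_simp
    ring
  rw [norm_mul, norm_real, Real.norm_of_nonneg (by positivity), sqrt_mul_div_rpow_neg hA ht]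
  calc A ^ (-(β + 1)) * t ^ (β + 1 + 1 / 2) * Real.exp (-2 * t) * _
      ≤ A ^ (-(β + 1)) * t ^ (β + 1 + 1 / 2) * Real.exp (-2 * t) *
          (2 * Real.pi * (C * Real.exp ((A - δ) / (A / t)) * Real.exp t)) := by gcongr
    _ = _ := by rw [← hexp]; ring

lemma tendsto_integral_saddleIntegrand (hA : 0 < A) (hκ : 0 < κ) (hδ : 0 < δ)
    (hF : ∀ σ : ℝ, 0 < σ → Continuous fun θ : ℝ => F (σ + θ * I))
    (hmajor : Tendsto (fun s => F s / (s ^ (β : ℂ) * cexp (A / s))) (𝓝[stolzAngle κ] 0) (𝓝 α))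
    (hminor : ∀ᶠ σ in 𝓝[>] (0 : ℝ), ∀ θ : ℝ, κ * σ ≤ |θ| → |θ| ≤ Real.pi →
      ‖F (σ + θ * I)‖ ≤ C * Real.exp ((A - δ) / σ)) :
    Tendsto (fun t : ℝ => (√t * (A / t) ^ (-(β + 1)) * Real.exp (-2 * t) : ℝ) *
        ∫ θ in (-Real.pi)..Real.pi, saddleIntegrand F A t θ)
      atTop (𝓝 (α * √Real.pi)) := by
  have hsum := (tendsto_major_arc hA hκ hF hmajor).add
    (tendsto_minor_arc (β := β) hA hκ hδ hF hminor)
  rw [add_zero] at hsum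
  refine hsum.congr' ?_
  filter_upwards [eventually_gt_atTop 0] with t ht
  have hpow : (A / t) ^ (-β) = (A / t) ^ (-(β + 1)) * (A / t) := by
    rw [← Real.rpow_add_one (by positivity)]
    congr 1
    ring
  rw [integral_saddleIntegrand_eq hA.ne' ht.ne', hpow]
  push_cast
  ring

lemma integral_saddleIntegrand_sqrt_eq_coeff (hA : 0 < A)
    (hF : ∀ s : ℂ, 0 < s.re → HasSum (fun m => a m * cexp (-s) ^ m) (F s)) {n : ℕ} (hn : 0 < n) :
    ∫ θ in (-Real.pi)..Real.pi, saddleIntegrand F A √(A * n) θ = 2 * Real.pi * a n := by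
  have ht : √(A * n) ^ 2 / A = n := by
    rw [Real.sq_sqrt (by positivity), mul_div_cancel_left₀ _ hA.ne']
  have hσ : 0 < A / √(A * n) := by positivity
  rw [← integral_mul_cexp_eq_coeff hF hσ]
  simp only [saddleIntegrand, ht, ofReal_natCast]

lemma sqrt_sqrt_mul_div_rpow_neg (hA : 0 < A) {x : ℝ} (hx : 0 < x) :
    √√(A * x) * (A / √(A * x)) ^ (-(β + 1)) = x ^ (β / 2 + 3 / 4) / A ^ (β / 2 + 1 / 4) := by
  rw [sqrt_mul_div_rpow_neg hA (by positivity), Real.sqrt_eq_rpow, ← Real.rpow_mul (by positivity),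
    Real.mul_rpow hA.le hx.le, ← mul_assoc, ← Real.rpow_add hA, div_eq_inv_mul (x ^ _),
    ← Real.rpow_neg hA.le (β / 2 + 1 / 4)]
  ring_nf

/- Wright's circle method: `t = √(A n)` places the saddle point on the line of integration. -/
theorem tendsto_coeff_div_of_tendsto_stolzAngle (hA : 0 < A) (hκ : 0 < κ) (hδ : 0 < δ)
    (hF : ∀ s : ℂ, 0 < s.re → HasSum (fun m => a m * cexp (-s) ^ m) (F s))
    (hmajor : Tendsto (fun s => F s / (s ^ (β : ℂ) * cexp (A / s))) (𝓝[stolzAngle κ] 0) (𝓝 α))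
    (hminor : ∀ᶠ σ in 𝓝[>] (0 : ℝ), ∀ θ : ℝ, κ * σ ≤ |θ| → |θ| ≤ Real.pi →
      ‖F (σ + θ * I)‖ ≤ C * Real.exp ((A - δ) / σ)) :
    Tendsto (fun n : ℕ => a n / (Real.exp (2 * √(A * n)) / (n : ℝ) ^ (β / 2 + 3 / 4) : ℝ)) atTop
      (𝓝 (α * (A ^ (β / 2 + 1 / 4) / (2 * √Real.pi) : ℝ))) := by
  have hsaddle := tendsto_integral_saddleIntegrand hA hκ hδ
    (fun σ hσ => continuous_of_hasSum_cexp_neg hF hσ) hmajor hminor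
  have ht : Tendsto (fun n : ℕ => √(A * n)) atTop atTop :=
    Real.tendsto_sqrt_atTop.comp (tendsto_natCast_atTop_atTop.const_mul_atTop hA)
  have hlim := (hsaddle.comp ht).mul_const ((A ^ (β / 2 + 1 / 4) / (2 * Real.pi) : ℝ) : ℂ)
  have hvalue : (√Real.pi : ℂ) * (A ^ (β / 2 + 1 / 4) / (2 * Real.pi) : ℝ) =
      (A ^ (β / 2 + 1 / 4) / (2 * √Real.pi) : ℝ) := by
    rw [← ofReal_mul, mul_div_assoc', mul_comm, mul_div_mul_comm, Real.sqrt_div_self,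
      ← div_eq_mul_inv, div_div]
  rw [mul_assoc, hvalue] at hlim
  refine hlim.congr' ?_
  filter_upwards [eventually_gt_atTop 0] with n hn
  have hA' : ((A ^ (β / 2 + 1 / 4) : ℝ) : ℂ) ≠ 0 := ofReal_ne_zero.mpr (by positivity)
  have hpi : (Real.pi : ℂ) ≠ 0 := ofReal_ne_zero.mpr Real.pi_ne_zero
  rw [Function.comp_apply, integral_saddleIntegrand_sqrt_eq_coeff hA hF hn,
    sqrt_sqrt_mul_div_rpow_neg hA (Nat.cast_pos.mpr hn), neg_mul, Real.exp_neg]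
  simp only [ofReal_mul, ofReal_div, ofReal_inv]
  generalize ((A ^ (β / 2 + 1 / 4) : ℝ) : ℂ) = x at hA' ⊢
  push_cast
  field_simp

end Wright

section EulerFunction

open Complex Filter Topology

lemma norm_cexp_neg_lt_one {s : ℂ} (hs : 0 < s.re) : ‖cexp (-s)‖ < 1 := by
  rw [norm_exp, Real.exp_lt_one_iff, neg_re]
  exact neg_neg_of_pos hs

lemma re_div_pos {a : ℝ} (ha : 0 < a) {s : ℂ} (hs : 0 < s.re) : 0 < (a / s).re := by
  have hs0 : s ≠ 0 := ne_zero_of_re_pos hs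
  rw [div_eq_mul_inv, re_ofReal_mul, inv_re]
  exact mul_pos ha (div_pos hs (normSq_pos.mpr hs0))

lemma eulerFunction_ne_zero {q : ℂ} (hq : ‖q‖ < 1) : eulerFunction q ≠ 0 :=
  tprod_one_sub_ne_zero (norm_pow_succ_lt_one hq) (summable_norm_pow_succ hq)

lemma eta_eq_cexp_mul_eulerFunction (z : ℂ) :
    ModularForm.eta z = cexp (2 * Real.pi * I * z / 24) *
      eulerFunction (cexp (2 * Real.pi * I * z)) := by
  simp [ModularForm.eta, eulerFunction, Function.Periodic.qParam, ModularForm.eta_q]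

lemma sqrt_I_mul {w : ℂ} (hw : 0 < w.re) : sqrt (I * w) = sqrt I * sqrt w := by
  have hw0 : w ≠ 0 := ne_zero_of_re_pos hw
  have harg := abs_lt.mp (abs_arg_lt_pi_div_two_iff.mpr (.inl hw))
  have hlog : log (I * w) = log I + log w :=
    log_mul I_ne_zero hw0 (by rw [arg_I]; constructor <;> linarith [Real.pi_pos])
  rw [sqrt, sqrt, sqrt, cpow_def_of_ne_zero (mul_ne_zero I_ne_zero hw0),
    cpow_def_of_ne_zero I_ne_zero, cpow_def_of_ne_zero hw0, hlog, add_mul, exp_add]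

lemma eta_neg_inv_I_mul {w : ℂ} (hw : 0 < w.re) :
    ModularForm.eta (-1 / (I * w)) = sqrt w * ModularForm.eta (I * w) := by
  have hI : sqrt I ≠ 0 := by simp [sqrt, cpow_eq_zero_iff]
  have hinv := ModularForm.eta_comp_eq_csqrt_I_inv
    (show I * w ∈ UpperHalfPlane.upperHalfPlaneSet by
      simpa [UpperHalfPlane.upperHalfPlaneSet] using hw)
  simp only [Function.comp_apply, Pi.smul_apply, Pi.mul_apply, smul_eq_mul, sqrt_I_mul hw] at hinv
  rw [hinv, mul_assoc, inv_mul_cancel_left₀ hI]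

lemma inv_eulerFunction_cexp_neg {s : ℂ} (hs : 0 < s.re) :
    (eulerFunction (cexp (-s)))⁻¹ = sqrt (s / (2 * Real.pi)) * cexp (Real.pi ^ 2 / 6 / s) *
      (cexp (-s / 24) * (eulerFunction (cexp (-((4 * Real.pi ^ 2 : ℝ) / s))))⁻¹) := by
  have hpi : (Real.pi : ℂ) ≠ 0 := ofReal_ne_zero.mpr Real.pi_ne_zero
  have hs0 : s ≠ 0 := ne_zero_of_re_pos hs
  have hw : 0 < (s / (2 * Real.pi)).re := by
    have hre := div_pos hs Real.two_pi_pos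
    rwa [← div_ofReal_re, ofReal_mul] at hre
  have hE := eulerFunction_ne_zero (norm_cexp_neg_lt_one hs)
  have hE' := eulerFunction_ne_zero (norm_cexp_neg_lt_one
    (re_div_pos (a := 4 * Real.pi ^ 2) (by positivity) hs))
  have heta := eta_neg_inv_I_mul hw
  have harg : 2 * Real.pi * I * (I * (s / (2 * Real.pi))) = -s := by
    field_simp
    rw [I_sq]
  have harg' : 2 * Real.pi * I * (-1 / (I * (s / (2 * Real.pi)))) =
      -((4 * Real.pi ^ 2 : ℝ) / s) := by
    push_cast
    field_simp
    ring
  have hexp : -((4 * Real.pi ^ 2 : ℝ) / s) / 24 = -(Real.pi ^ 2 / 6 / s) := by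
    push_cast
    ring
  rw [eta_eq_cexp_mul_eulerFunction, eta_eq_cexp_mul_eulerFunction, harg, harg', hexp,
    exp_neg] at heta
  rw [inv_mul_eq_iff_eq_mul₀ (exp_ne_zero _)] at heta
  rw [← div_eq_mul_inv, ← mul_div_assoc, inv_eq_one_div, div_eq_div_iff hE hE', one_mul, heta]
  ring

lemma tendsto_inv_eulerFunction_zero :
    Tendsto (fun q => (eulerFunction q)⁻¹) (𝓝 0) (𝓝 1) := by
  have hcont : ContinuousAt eulerFunction 0 :=
    ModularForm.differentiableOn_tprod_one_sub_pow.continuousOn.continuousAt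
      (Metric.ball_mem_nhds 0 one_pos)
  have hzero : eulerFunction 0 = 1 := by simp [eulerFunction]
  simpa only [hzero, inv_one] using hcont.tendsto.inv₀ (by rw [hzero]; exact one_ne_zero)

lemma le_re_inv_of_mem_stolzAngle {κ : ℝ} {s : ℂ} (hs : s ∈ stolzAngle κ) :
    ((1 + κ ^ 2) * s.re)⁻¹ ≤ (s⁻¹).re := by
  obtain ⟨hre, him⟩ := hs
  have him_sq : s.im ^ 2 ≤ κ ^ 2 * s.re ^ 2 := by
    rw [← sq_abs, ← mul_pow]
    exact pow_le_pow_left₀ (abs_nonneg _) him 2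
  have hnorm : 0 < normSq s := normSq_pos.mpr (ne_zero_of_re_pos hre)
  rw [inv_re, inv_eq_one_div, div_le_div_iff₀ (by positivity) hnorm, normSq_apply]
  linarith

lemma tendsto_cexp_neg_div_stolzAngle {a : ℝ} (ha : 0 < a) (κ : ℝ) :
    Tendsto (fun s : ℂ => cexp (-(a / s))) (𝓝[stolzAngle κ] 0) (𝓝 0) := by
  have hre : Tendsto re (𝓝[stolzAngle κ] 0) (𝓝[>] 0) :=
    tendsto_nhdsWithin_iff.mpr ⟨(continuous_re.tendsto' 0 0 zero_re).mono_left nhdsWithin_le_nhds,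
      eventually_mem_nhdsWithin.mono fun _ hs => hs.1⟩
  have hbound : Tendsto (fun s : ℂ => a * ((1 + κ ^ 2)⁻¹ * s.re⁻¹)) (𝓝[stolzAngle κ] 0) atTop :=
    ((tendsto_inv_nhdsGT_zero.comp hre).const_mul_atTop (by positivity)).const_mul_atTop ha
  refine tendsto_exp_nhds_zero_iff.mpr ?_
  simp only [neg_re]
  refine tendsto_neg_atTop_atBot.comp (tendsto_atTop_mono' _ ?_ hbound)
  filter_upwards [eventually_mem_nhdsWithin] with s hs
  rw [div_eq_mul_inv, re_ofReal_mul, ← mul_inv]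
  exact mul_le_mul_of_nonneg_left (le_re_inv_of_mem_stolzAngle hs) ha.le

/- The dual variable `4π²/s` has large real part in a Stolz angle, so its Euler function is close
to `1`. -/
lemma tendsto_inv_eulerFunction_div_stolzAngle (κ : ℝ) :
    Tendsto (fun s => (eulerFunction (cexp (-s)))⁻¹ /
      (sqrt (s / (2 * Real.pi)) * cexp (Real.pi ^ 2 / 6 / s))) (𝓝[stolzAngle κ] 0) (𝓝 1) := by
  have hexp : Tendsto (fun s : ℂ => cexp (-s / 24)) (𝓝[stolzAngle κ] 0) (𝓝 1) :=
    ((by fun_prop : Continuous fun s : ℂ => cexp (-s / 24)).tendsto' 0 1 (by simp)).mono_left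
      nhdsWithin_le_nhds
  have hdual := tendsto_inv_eulerFunction_zero.comp
    (tendsto_cexp_neg_div_stolzAngle (a := 4 * Real.pi ^ 2) (by positivity) κ)
  have hmul := hexp.mul hdual
  rw [mul_one] at hmul
  refine hmul.congr' ?_
  filter_upwards [eventually_mem_nhdsWithin] with s hs
  have hs0 : s / (2 * Real.pi) ≠ 0 :=
    div_ne_zero (ne_zero_of_re_pos hs.1) (by exact_mod_cast Real.two_pi_pos.ne')
  have hsqrt : sqrt (s / (2 * Real.pi)) ≠ 0 := by simpa [sqrt, cpow_eq_zero_iff] using hs0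
  rw [inv_eulerFunction_cexp_neg hs.1, Function.comp_apply,
    mul_div_cancel_left₀ _ (mul_ne_zero hsqrt (exp_ne_zero _))]

lemma sqrt_mul_sqrt_two_mul {s : ℂ} (hs : s ≠ 0) :
    sqrt (s / (2 * Real.pi)) * sqrt (2 * s / (2 * Real.pi)) = (√2 / (2 * Real.pi) : ℝ) * s := by
  have hw : s / (2 * Real.pi) ≠ 0 := div_ne_zero hs (by exact_mod_cast Real.two_pi_pos.ne')
  have hsq : sqrt (s / (2 * Real.pi)) * sqrt (s / (2 * Real.pi)) = s / (2 * Real.pi) := by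
    rw [sqrt, ← cpow_add _ _ hw, ← two_mul, mul_inv_cancel₀ two_ne_zero, cpow_one]
  have htwo : sqrt (2 * s / (2 * Real.pi)) = √2 * sqrt (s / (2 * Real.pi)) := by
    have hcpow := ofReal_mul_cpow two_pos hw 2⁻¹
    rw [ofReal_ofNat] at hcpow
    rw [sqrt, sqrt, mul_div_assoc, hcpow, Real.sqrt_eq_rpow, ofReal_cpow zero_le_two, one_div,
      ofReal_inv, ofReal_ofNat]
  rw [htwo, mul_left_comm, hsq]
  push_cast
  ring

lemma tendsto_cubicGenFun_div_stolzAngle (κ : ℝ) :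
    Tendsto (fun s => cubicGenFun (cexp (-s)) /
      (s ^ ((1 : ℝ) : ℂ) * cexp ((Real.pi ^ 2 / 4 : ℝ) / s))) (𝓝[stolzAngle κ] 0)
      (𝓝 (√2 / (2 * Real.pi) : ℝ)) := by
  have hdouble : Tendsto (fun s : ℂ => 2 * s) (𝓝[stolzAngle κ] 0) (𝓝[stolzAngle κ] 0) := by
    refine tendsto_nhdsWithin_iff.mpr ⟨?_, ?_⟩
    · exact ((continuous_const_mul (2 : ℂ)).tendsto' 0 0 (mul_zero 2)).mono_left
        nhdsWithin_le_nhds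
    · filter_upwards [eventually_mem_nhdsWithin] with s hs
      have hs2 : (2 * s).re = 2 * s.re ∧ (2 * s).im = 2 * s.im := by simp
      refine ⟨by linarith [hs.1], ?_⟩
      rw [hs2.1, hs2.2, abs_mul, abs_two]
      linarith [hs.2]
  have hf := tendsto_inv_eulerFunction_div_stolzAngle κ
  have hlim := (hf.mul (hf.comp hdouble)).const_mul ((√2 / (2 * Real.pi) : ℝ) : ℂ)
  rw [mul_one, mul_one] at hlim
  refine hlim.congr' ?_
  filter_upwards [eventually_mem_nhdsWithin] with s hs
  have hs0 : s ≠ 0 := ne_zero_of_re_pos hs.1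
  have hexp : cexp (Real.pi ^ 2 / 6 / s) * cexp (Real.pi ^ 2 / 6 / (2 * s)) =
      cexp ((Real.pi ^ 2 / 4 : ℝ) / s) := by
    rw [← exp_add]
    congr 1
    push_cast
    field_simp
    norm_num
  have hpow : cexp (-s) ^ 2 = cexp (-(2 * s)) := by
    rw [← exp_nat_mul, Nat.cast_ofNat, mul_neg]
  have hc : ((√2 / (2 * Real.pi) : ℝ) : ℂ) ≠ 0 := ofReal_ne_zero.mpr (by positivity)
  rw [Function.comp_apply, div_mul_div_comm, mul_mul_mul_comm (sqrt _), sqrt_mul_sqrt_two_mul hs0,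
    hexp, cubicGenFun, hpow, ofReal_one, cpow_one, mul_assoc (_ : ℂ) s, mul_div_assoc',
    mul_div_mul_left _ _ hc]

lemma norm_one_sub_ofReal {r : ℝ} (hr : r < 1) : ‖(1 - r : ℂ)‖ = 1 - r := by
  rw [← ofReal_one, ← ofReal_sub, norm_real, Real.norm_of_nonneg (sub_nonneg.mpr hr.le)]

/- Compare the Taylor series of `-log (1 - z)` and `-log (1 - ‖z‖)` termwise, keeping the
contribution of the linear term. -/
lemma one_sub_norm_le_norm_one_sub_mul_exp {z : ℂ} (hz : ‖z‖ < 1) :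
    1 - ‖z‖ ≤ ‖1 - z‖ * Real.exp (z.re - ‖z‖) := by
  have hz' : ‖(‖z‖ : ℂ)‖ < 1 := by rwa [norm_real, norm_norm]
  have hnonneg (j : ℕ) : 0 ≤ ((‖z‖ : ℂ) ^ j / j).re - (z ^ j / j).re := by
    have hre : ((‖z‖ : ℂ) ^ j / j).re = ‖z ^ j / j‖ := by
      rw [norm_div, norm_pow, norm_natCast, ← ofReal_pow, ← ofReal_natCast, ← ofReal_div,
        ofReal_re]
    rw [hre]
    exact sub_nonneg.mpr (re_le_norm _)
  have hlinear := le_hasSum ((hasSum_re (hasSum_taylorSeries_neg_log hz')).sub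
    (hasSum_re (hasSum_taylorSeries_neg_log hz))) 1 fun j _ => hnonneg j
  simp only [pow_one, Nat.cast_one, div_one, neg_re, log_re, ofReal_re,
    norm_one_sub_ofReal hz] at hlinear
  have hpos : 0 < 1 - ‖z‖ := sub_pos.mpr hz
  have hpos' : 0 < ‖1 - z‖ :=
    norm_pos_iff.mpr (sub_ne_zero.mpr fun h => hz.ne (by rw [← h, norm_one]))
  rw [← Real.exp_log hpos, ← Real.exp_log hpos', ← Real.exp_add, Real.exp_le_exp]
  linarith

lemma hasSum_pow_succ_of_norm_lt_one {K : Type*} [NormedDivisionRing K] {q : K} (hq : ‖q‖ < 1) :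
    HasSum (fun k : ℕ => q ^ (k + 1)) (q / (1 - q)) := by
  simpa only [pow_succ', div_eq_mul_inv] using (hasSum_geometric_of_norm_lt_one hq).mul_left q

lemma norm_eulerFunction_norm_le {q : ℂ} (hq : ‖q‖ < 1) :
    ‖eulerFunction ‖q‖‖ ≤
      ‖eulerFunction q‖ * Real.exp ((q / (1 - q)).re - ‖q‖ / (1 - ‖q‖)) := by
  have hq' : ‖‖q‖‖ < 1 := by rwa [norm_norm]
  have hexponent := ((hasSum_re (hasSum_pow_succ_of_norm_lt_one hq)).sub
    (hasSum_pow_succ_of_norm_lt_one hq')).tendsto_sum_nat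
  have htendsto {z : ℂ} (hz : ‖z‖ < 1) :=
    (ModularForm.multipliable_one_sub_pow hz).tendsto_prod_tprod_nat.norm
  refine le_of_tendsto_of_tendsto' (htendsto (z := ‖q‖) (by rwa [norm_real]))
    ((htendsto hq).mul ((Real.continuous_exp.tendsto _).comp hexponent)) fun N => ?_
  simp only [Function.comp_apply, Real.exp_sum, norm_prod, ← prod_mul_distrib]
  refine prod_le_prod (fun _ _ => norm_nonneg _) fun k _ => ?_
  have hk := norm_pow_succ_lt_one hq k
  have hfactor := one_sub_norm_le_norm_one_sub_mul_exp hk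
  rwa [← norm_one_sub_ofReal hk, norm_pow, ofReal_pow] at hfactor

lemma norm_inv_eulerFunction_le {q : ℂ} (hq : ‖q‖ < 1) :
    ‖(eulerFunction q)⁻¹‖ ≤
      ‖(eulerFunction ‖q‖)⁻¹‖ * Real.exp ((q / (1 - q)).re - ‖q‖ / (1 - ‖q‖)) := by
  have hpos := norm_pos_iff.mpr (eulerFunction_ne_zero hq)
  have hpos' := norm_pos_iff.mpr (eulerFunction_ne_zero (q := ‖q‖) (by rwa [norm_real, norm_norm]))
  rw [norm_inv, norm_inv, inv_mul_eq_div, le_div_iff₀ hpos', inv_mul_le_iff₀ hpos]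
  exact norm_eulerFunction_norm_le hq

lemma re_div_one_sub_le {q : ℂ} (hq : ‖q‖ < 1) : (q / (1 - q)).re ≤ ‖q‖ / (1 - ‖q‖) := by
  have hdist : 1 - ‖q‖ ≤ ‖1 - q‖ := by simpa only [norm_one] using norm_sub_norm_le 1 q
  calc (q / (1 - q)).re ≤ ‖q‖ / ‖1 - q‖ := (re_le_norm _).trans_eq (norm_div _ _)
    _ ≤ ‖q‖ / (1 - ‖q‖) := by gcongr

lemma norm_cubicGenFun_le {q : ℂ} (hq : ‖q‖ < 1) :
    ‖cubicGenFun q‖ ≤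
      ‖cubicGenFun ‖q‖‖ * Real.exp ((q / (1 - q)).re - ‖q‖ / (1 - ‖q‖)) := by
  have hq2 : ‖q ^ 2‖ < 1 := norm_pow_succ_lt_one hq 1
  have hsquare : ‖(eulerFunction (q ^ 2))⁻¹‖ ≤ ‖(eulerFunction (‖q‖ ^ 2 : ℂ))⁻¹‖ := by
    rw [← ofReal_pow, ← norm_pow]
    exact (norm_inv_eulerFunction_le hq2).trans <| mul_le_of_le_one_right (norm_nonneg _) <|
      Real.exp_le_one_iff.mpr (sub_nonpos.mpr (re_div_one_sub_le hq2))
  rw [cubicGenFun, cubicGenFun, norm_mul, norm_mul, mul_right_comm]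
  exact mul_le_mul (norm_inv_eulerFunction_le hq) hsquare (norm_nonneg _) (by positivity)

lemma norm_cexp_neg_add_mul_I (σ θ : ℝ) : ‖cexp (-(σ + θ * I))‖ = Real.exp (-σ) := by
  simp [norm_exp]

lemma norm_one_sub_cexp_sq (σ θ : ℝ) :
    ‖1 - cexp (-(σ + θ * I))‖ ^ 2 =
      (1 - Real.exp (-σ)) ^ 2 + 2 * Real.exp (-σ) * (1 - Real.cos θ) := by
  have hcos_sin : cexp (-(σ + θ * I)) =
      ⟨Real.exp (-σ) * Real.cos θ, -(Real.exp (-σ) * Real.sin θ)⟩ := by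
    apply Complex.ext <;> simp [exp_re, exp_im]
  rw [hcos_sin, ← normSq_eq_norm_sq, normSq_apply]
  simp only [sub_re, sub_im, one_re, one_im]
  linear_combination Real.exp (-σ) ^ 2 * Real.sin_sq_add_cos_sq θ

lemma cos_le_one_sub_sq_div_five {σ θ : ℝ} (hσ : 0 ≤ σ) (hσθ : σ ≤ |θ|) (hθ : |θ| ≤ Real.pi) :
    Real.cos θ ≤ 1 - σ ^ 2 / 5 := by
  have hsq : σ ^ 2 ≤ θ ^ 2 := by rw [← sq_abs θ]; exact pow_le_pow_left₀ hσ hσθ 2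
  have hpi : (1 : ℝ) / 5 ≤ 2 / Real.pi ^ 2 := by
    rw [div_le_div_iff₀ (by norm_num) (by positivity)]
    nlinarith [Real.pi_lt_d2, Real.pi_pos]
  calc Real.cos θ ≤ 1 - 2 / Real.pi ^ 2 * θ ^ 2 := Real.cos_le_one_sub_mul_cos_sq hθ
    _ ≤ 1 - 1 / 5 * σ ^ 2 := by gcongr
    _ = 1 - σ ^ 2 / 5 := by ring

/- Any constant up to `√(6 / 5)` works, as `2 exp (-σ) (1 - cos θ)` is at least
`σ² / 5 ≥ (1 - exp (-σ))² / 5`. -/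
lemma mul_one_sub_exp_neg_le_norm_one_sub_cexp {σ θ : ℝ} (hσ : 0 < σ) (hσ' : σ ≤ 1 / 2)
    (hσθ : σ ≤ |θ|) (hθ : |θ| ≤ Real.pi) :
    109 / 100 * (1 - Real.exp (-σ)) ≤ ‖1 - cexp (-(σ + θ * I))‖ := by
  have hlower : 1 - σ ≤ Real.exp (-σ) := Real.one_sub_le_exp_neg σ
  have hlt_one : Real.exp (-σ) < 1 := Real.exp_lt_one_iff.mpr (by linarith)
  have hsq : (1 - Real.exp (-σ)) ^ 2 ≤ σ ^ 2 :=
    pow_le_pow_left₀ (by linarith) (by linarith) 2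
  have hcos : σ ^ 2 / 5 ≤ 1 - Real.cos θ := by
    linarith [cos_le_one_sub_sq_div_five hσ.le hσθ hθ]
  have hextra : σ ^ 2 / 5 ≤ 2 * Real.exp (-σ) * (1 - Real.cos θ) :=
    hcos.trans (le_mul_of_one_le_left (by linarith [θ.cos_le_one]) (by linarith))
  refine le_of_sq_le_sq ?_ (norm_nonneg _)
  rw [norm_one_sub_cexp_sq, mul_pow]
  linarith [sq_nonneg (1 - Real.exp (-σ))]

lemma re_div_one_sub_cexp_sub_le {σ θ : ℝ} (hσ : 0 < σ) (hσ' : σ ≤ 1 / 2)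
    (hσθ : σ ≤ |θ|) (hθ : |θ| ≤ Real.pi) :
    (cexp (-(σ + θ * I)) / (1 - cexp (-(σ + θ * I)))).re -
      Real.exp (-σ) / (1 - Real.exp (-σ)) ≤ -(1 / 25) / σ := by
  have hlower : 1 - σ ≤ Real.exp (-σ) := Real.one_sub_le_exp_neg σ
  have hlt_one : 0 < 1 - Real.exp (-σ) := sub_pos.mpr (Real.exp_lt_one_iff.mpr (by linarith))
  have hre : (cexp (-(σ + θ * I)) / (1 - cexp (-(σ + θ * I)))).re ≤
      100 / 109 * (Real.exp (-σ) / (1 - Real.exp (-σ))) := by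
    calc _ ≤ Real.exp (-σ) / ‖1 - cexp (-(σ + θ * I))‖ := by
          refine (re_le_norm _).trans_eq ?_
          rw [norm_div, norm_cexp_neg_add_mul_I]
      _ ≤ Real.exp (-σ) / (109 / 100 * (1 - Real.exp (-σ))) := by
          gcongr
          exact mul_one_sub_exp_neg_le_norm_one_sub_cexp hσ hσ' hσθ hθ
      _ = 100 / 109 * (Real.exp (-σ) / (1 - Real.exp (-σ))) := by field_simp
  have hquot : 1 / 2 / σ ≤ Real.exp (-σ) / (1 - Real.exp (-σ)) := by
    rw [div_le_div_iff₀ hσ hlt_one]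
    nlinarith
  have hhalf : -(1 / 25) / σ = -(2 / 25) * (1 / 2 / σ) := by ring
  have hpos : 0 < 1 / 2 / σ := by positivity
  rw [hhalf]
  linarith

lemma norm_cubicGenFun_cexp_neg_le {σ θ : ℝ} (hσ : 0 < σ) (hσ' : σ ≤ 1 / 2)
    (hσθ : σ ≤ |θ|) (hθ : |θ| ≤ Real.pi) :
    ‖cubicGenFun (cexp (-(σ + θ * I)))‖ ≤
      ‖cubicGenFun (cexp (-σ))‖ * Real.exp (-(1 / 25) / σ) := by
  have hle := norm_cubicGenFun_le (q := cexp (-(σ + θ * I))) (norm_cexp_neg_lt_one (by simpa))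
  rw [norm_cexp_neg_add_mul_I, ofReal_exp, ofReal_neg] at hle
  exact hle.trans <| mul_le_mul_of_nonneg_left
    (Real.exp_le_exp.mpr (re_div_one_sub_cexp_sub_le hσ hσ' hσθ hθ)) (norm_nonneg _)

lemma eventually_norm_cubicGenFun_cexp_neg_ofReal_le :
    ∀ᶠ σ : ℝ in 𝓝[>] 0, ‖cubicGenFun (cexp (-σ))‖ ≤ Real.exp (Real.pi ^ 2 / 4 / σ) := by
  have hray : Tendsto ((↑) : ℝ → ℂ) (𝓝[>] 0) (𝓝[stolzAngle 0] 0) :=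
    tendsto_nhdsWithin_iff.mpr
      ⟨(continuous_ofReal.tendsto' 0 0 ofReal_zero).mono_left nhdsWithin_le_nhds,
        eventually_mem_nhdsWithin.mono fun σ hσ => ⟨hσ, by simp⟩⟩
  have hnorm := ((tendsto_cubicGenFun_div_stolzAngle 0).comp hray).norm
  have hlt : ‖((√2 / (2 * Real.pi) : ℝ) : ℂ)‖ < 1 := by
    rw [norm_real, Real.norm_of_nonneg (by positivity), div_lt_one Real.two_pi_pos]
    nlinarith [Real.pi_gt_three, Real.sq_sqrt zero_le_two, Real.sqrt_nonneg 2]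
  have hle_one : ∀ᶠ σ : ℝ in 𝓝[>] 0, σ ≤ 1 :=
    nhdsWithin_le_nhds (eventually_le_nhds one_pos)
  filter_upwards [hnorm.eventually_lt_const hlt, eventually_mem_nhdsWithin, hle_one]
    with σ hquot hσ hσ_le
  rw [Set.mem_Ioi] at hσ
  have hden : ‖(σ : ℂ) ^ ((1 : ℝ) : ℂ) * cexp ((Real.pi ^ 2 / 4 : ℝ) / σ)‖ =
      σ * Real.exp (Real.pi ^ 2 / 4 / σ) := by
    rw [ofReal_one, cpow_one, ← ofReal_div, ← ofReal_exp, ← ofReal_mul, norm_real,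
      Real.norm_of_nonneg (by positivity)]
  rw [Function.comp_apply, norm_div, hden, div_lt_one (by positivity)] at hquot
  exact hquot.le.trans (mul_le_of_le_one_left (Real.exp_pos _).le hσ_le)

lemma eventually_norm_cubicGenFun_cexp_neg_le :
    ∀ᶠ σ : ℝ in 𝓝[>] 0, ∀ θ : ℝ, σ ≤ |θ| → |θ| ≤ Real.pi →
      ‖cubicGenFun (cexp (-(σ + θ * I)))‖ ≤ Real.exp ((Real.pi ^ 2 / 4 - 1 / 25) / σ) := by
  have hle_half : ∀ᶠ σ : ℝ in 𝓝[>] 0, σ ≤ 1 / 2 :=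
    nhdsWithin_le_nhds (eventually_le_nhds one_half_pos)
  filter_upwards [eventually_norm_cubicGenFun_cexp_neg_ofReal_le, eventually_mem_nhdsWithin,
    hle_half] with σ hreal hσ hσ' θ hσθ hθ
  calc ‖cubicGenFun (cexp (-(σ + θ * I)))‖
      ≤ ‖cubicGenFun (cexp (-σ))‖ * Real.exp (-(1 / 25) / σ) :=
        norm_cubicGenFun_cexp_neg_le hσ hσ' hσθ hθ
    _ ≤ Real.exp (Real.pi ^ 2 / 4 / σ) * Real.exp (-(1 / 25) / σ) := by gcongr
    _ = Real.exp ((Real.pi ^ 2 / 4 - 1 / 25) / σ) := by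
        rw [← Real.exp_add]
        ring_nf

end EulerFunction

lemma sqrt_two_div_two_pi_mul_rpow_div :
    √2 / (2 * Real.pi) * ((Real.pi ^ 2 / 4) ^ ((1 : ℝ) / 2 + 1 / 4) / (2 * √Real.pi)) = 1 / 8 := by
  have hpi := Real.pi_pos
  have hpow : (Real.pi ^ 2 / 4) ^ ((1 : ℝ) / 2 + 1 / 4) = Real.pi / 2 * (√Real.pi / √2) := by
    rw [show Real.pi ^ 2 / 4 = (Real.pi / 2) ^ (2 : ℝ) by norm_num [div_pow],
      ← Real.rpow_mul (by positivity), ← Real.sqrt_div hpi.le, Real.sqrt_eq_rpow,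
      ← Real.rpow_one_add' (by positivity) (by norm_num)]
    norm_num
  rw [hpow]
  field_simp
  norm_num

open Real Filter in
/-- `c(n) ~ e^{π√n}/(8 n^{5/4})` as `n → ∞`. -/
theorem cubicPartition_asymptotic :
    Tendsto (fun n : ℕ =>
        (cubicPartition n : ℝ) / (Real.exp (π * Real.sqrt n) / (8 * (n : ℝ) ^ ((5 : ℝ) / 4))))
      atTop (nhds 1) := by
  have hwright := tendsto_coeff_div_of_tendsto_stolzAngle (A := π ^ 2 / 4) (δ := 1 / 25) (C := 1)
    (by positivity) one_pos (by norm_num)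
    (fun s hs => hasSum_cubicPartition_mul_pow (norm_cexp_neg_lt_one hs))
    (tendsto_cubicGenFun_div_stolzAngle 1)
    (by simpa only [one_mul] using eventually_norm_cubicGenFun_cexp_neg_le)
  rw [← Complex.ofReal_mul, sqrt_two_div_two_pi_mul_rpow_div] at hwright
  have hlim := ((Complex.continuous_re.tendsto _).comp hwright).const_mul 8
  rw [Complex.ofReal_re, mul_one_div_cancel (by norm_num)] at hlim
  refine hlim.congr fun n => ?_
  have hsqrt : 2 * √(π ^ 2 / 4 * n) = π * √n := by
    rw [Real.sqrt_mul (by positivity), show π ^ 2 / 4 = (π / 2) ^ 2 by ring,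
      Real.sqrt_sq (by positivity)]
    ring
  have hexponent : (1 : ℝ) / 2 + 3 / 4 = 5 / 4 := by norm_num
  rw [Function.comp_apply, hsqrt, hexponent, ← Complex.ofReal_natCast, ← Complex.ofReal_div,
    Complex.ofReal_re]
  ring
end
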